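/- arXiv:2505.12760 — 2 statements merged into one kernel-verified Lean document; each statement's English description precedes it below -/
import Mathlib

section
/- Let $n$ be a positive integer, $1<\alpha,\beta<\infty$ and $0<p\leqslant q<\infty$ with $q\geqslant 2$ and $\beta p\leqslant\alpha q$. Let $\mathbf{r}=(r_1,\dots,r_n)$ with $0\leqslant r_i<1$ and $r_i^2\leqslant \beta p/(\alpha q)$ for all $i=1,\dots,n$. Then for every function $f$ analytic on the polydisc $\mathbb{D}^n$, $\left(\int_{\mathbb{D}^n}|f(r_1z_1,\dots,r_nz_n)|^q\,dA_\beta(z_1)\cdots dA_\beta(z_n)\right)^{1/q}\leqslant\left(\int_{\mathbb{D}^n}|f(z_1,\dots,z_n)|^p\,dA_\alpha(z_1)\cdots dA_\alpha(z_n)\right)^{1/p}$. -/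
/-!
In one variable, first let `r = 1` and `γ = α q / p`. The Laplacian of the logarithm of
`v = |f|^(p / α) (1 - |z|²)` is at least that of `1 - |z|²`. Integrating this bound over a
superlevel set of `v` and applying the hyperbolic isoperimetric inequality to that set shows that
the hyperbolic area `A t` of `{t < v}` satisfies a differential inequality with equality for
`f = 1`. It forces the `γ`-th moment of `v` to be controlled by its `α`-th moment, which means
`‖f‖_{A_γ^q} ≤ ‖f‖_{A_α^p}`. Secondly, since `q ≥ 2`, the mean of `|f|^q` over the circle of squared
radius `s` is a convex function of `s`, and for `r² ≤ β / γ` a comparison of the distributions of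
`r² |z|²` under `dA_β` and of `|z|²` under `dA_γ` gives `‖T_r f‖_{A_β^q} ≤ ‖f‖_{A_γ^q}`. To have
smooth weights, `|f|²` is replaced by `|f|² + ε` throughout. The polydisc follows one variable at a
time, by Minkowski's integral inequality.
-/

open MeasureTheory Metric

/-- The weighted Bergman measure `dA_α(z) = (α-1)(1-|z|²)^(α-2) dA(z)` on the unit disk,
where `dA = dx dy / π` is the normalized area measure. -/
noncomputable def bergmanMeasure (α : ℝ) : Measure ℂ :=
  ((volume : Measure ℂ).restrict (ball (0 : ℂ) 1)).withDensity
    fun z => ENNReal.ofReal ((α - 1) * (1 - ‖z‖ ^ 2) ^ (α - 2) / Real.pi)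

/-- The product Bergman measure `dA_α(z₁) ⋯ dA_α(zₙ)` on the polydisc. -/
noncomputable def bergmanMeasurePi (n : ℕ) (α : ℝ) : Measure (Fin n → ℂ) :=
  Measure.pi fun _ => bergmanMeasure α

open Set Filter Topology ComplexConjugate
open scoped Real
open Complex (I)

/-- `w` is real differentiable at `z`, with Wirtinger derivatives `∂w(z) = a` and `∂̄w(z) = b`. -/
def HasWirtingerAt (w : ℂ → ℂ) (a b z : ℂ) : Prop :=
  HasFDerivAt w (a • (1 : ℂ →L[ℝ] ℂ) + b • (Complex.conjCLE : ℂ →L[ℝ] ℂ)) z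

namespace HasWirtingerAt

variable {w w₁ w₂ h : ℂ → ℂ} {a b a₁ b₁ a₂ b₂ z c : ℂ}

theorem congr_deriv (hw : HasWirtingerAt w a₁ b₁ z) (ha : a₁ = a₂) (hb : b₁ = b₂) :
    HasWirtingerAt w a₂ b₂ z := ha ▸ hb ▸ hw

theorem continuousAt (hw : HasWirtingerAt w a b z) : ContinuousAt w z :=
  HasFDerivAt.continuousAt hw

theorem of_hasDerivAt (hw : HasDerivAt w c z) : HasWirtingerAt w c 0 z := by
  refine (hw.hasFDerivAt.restrictScalars ℝ).congr_fderiv ?_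
  ext x; simp [mul_comm]

theorem id : HasWirtingerAt (fun x => x) 1 0 z := of_hasDerivAt (hasDerivAt_id z)

theorem const : HasWirtingerAt (fun _ => c) 0 0 z := of_hasDerivAt (hasDerivAt_const z c)

theorem conj_comp (hw : HasWirtingerAt w a b z) :
    HasWirtingerAt (fun x => conj (w x)) (conj b) (conj a) z := by
  refine (Complex.conjCLE.hasFDerivAt.comp z hw).congr_fderiv ?_
  ext x; simp [add_comm]

theorem add (h₁ : HasWirtingerAt w₁ a₁ b₁ z) (h₂ : HasWirtingerAt w₂ a₂ b₂ z) :
    HasWirtingerAt (fun x => w₁ x + w₂ x) (a₁ + a₂) (b₁ + b₂) z := by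
  refine (HasFDerivAt.add h₁ h₂).congr_fderiv ?_
  ext x; simp; ring

theorem sub (h₁ : HasWirtingerAt w₁ a₁ b₁ z) (h₂ : HasWirtingerAt w₂ a₂ b₂ z) :
    HasWirtingerAt (fun x => w₁ x - w₂ x) (a₁ - a₂) (b₁ - b₂) z := by
  refine (HasFDerivAt.sub h₁ h₂).congr_fderiv ?_
  ext x; simp; ring

theorem mul (h₁ : HasWirtingerAt w₁ a₁ b₁ z) (h₂ : HasWirtingerAt w₂ a₂ b₂ z) :
    HasWirtingerAt (fun x => w₁ x * w₂ x) (a₁ * w₂ z + w₁ z * a₂) (b₁ * w₂ z + w₁ z * b₂) z := by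
  refine (HasFDerivAt.mul h₁ h₂).congr_fderiv ?_
  ext x; simp; ring

theorem comp_hasDerivAt (hw : HasWirtingerAt w a b z) (hh : HasDerivAt h c (w z)) :
    HasWirtingerAt (fun x => h (w x)) (c * a) (c * b) z := by
  refine ((hh.hasFDerivAt.restrictScalars ℝ).comp z hw).congr_fderiv ?_
  ext x; simp; ring

theorem comp_real {v : ℂ → ℝ} {g : ℝ → ℝ} {g' : ℝ}
    (hv : HasWirtingerAt (fun x => (v x : ℂ)) a b z) (hg : HasDerivAt g g' (v z)) :
    HasWirtingerAt (fun x => (g (v x) : ℂ)) (g' * a) (g' * b) z := by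
  have hre : HasFDerivAt v (Complex.reCLM.comp
      (a • (1 : ℂ →L[ℝ] ℂ) + b • (Complex.conjCLE : ℂ →L[ℝ] ℂ))) z :=
    Complex.reCLM.hasFDerivAt.comp z hv
  have hreal := HasFDerivAt.unique (Complex.ofRealCLM.hasFDerivAt.comp z hre) hv
  refine (Complex.ofRealCLM.hasFDerivAt.comp z (hg.hasFDerivAt.comp z hre)).congr_fderiv ?_
  ext x
  have hx := DFunLike.congr_fun hreal x
  simp at hx ⊢
  linear_combination (g' : ℂ) * hx

theorem comp_add_const (c : ℂ) (hw : HasWirtingerAt w a b (z + c)) :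
    HasWirtingerAt (fun x => w (x + c)) a b z := by
  refine (HasFDerivAt.comp (f := fun x => x + c) z (g := w) hw
    ((hasFDerivAt_id z).add_const c)).congr_fderiv ?_
  ext x; simp

theorem hasDerivAt_comp {γ : ℝ → ℂ} {γ' : ℂ} {t : ℝ} (hw : HasWirtingerAt w a b (γ t))
    (hγ : HasDerivAt γ γ' t) :
    HasDerivAt (fun x => w (γ x)) (a * γ' + b * conj γ') t :=
  (HasFDerivAt.comp_hasDerivAt t hw hγ).congr_deriv (by simp)

theorem unique (h₁ : HasWirtingerAt w a₁ b₁ z) (h₂ : HasWirtingerAt w a₂ b₂ z) :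
    a₁ = a₂ ∧ b₁ = b₂ := by
  have h := HasFDerivAt.unique h₁ h₂
  have h_one : a₁ + b₁ = a₂ + b₂ := by simpa using DFunLike.congr_fun h 1
  have h_I : a₁ * I + -(b₁ * I) = a₂ * I + -(b₂ * I) := by simpa using DFunLike.congr_fun h I
  have h_sub : a₁ - b₁ = a₂ - b₂ :=
    mul_right_cancel₀ Complex.I_ne_zero (by linear_combination h_I)
  exact ⟨by linear_combination (h_one + h_sub) / 2, by linear_combination (h_one - h_sub) / 2⟩

theorem eq_zero_of_notMem_tsupport (hw : HasWirtingerAt w a b z) (hz : z ∉ tsupport w) :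
    a = 0 ∧ b = 0 :=
  hw.unique (HasFDerivAt.congr_of_eventuallyEq (const (c := 0))
    (notMem_tsupport_iff_eventuallyEq.1 hz))

end HasWirtingerAt

theorem continuous_mul_of_tsupport_subset {X R : Type*} [TopologicalSpace X] [TopologicalSpace R]
    [MulZeroClass R] [ContinuousMul R] {w g : X → R} {U : Set X} (hw : Continuous w)
    (hU : IsOpen U) (hs : tsupport w ⊆ U) (hg : ContinuousOn g U) :
    Continuous fun x => w x * g x :=
  continuous_of_tsupport fun _ hx =>
    have hxU := hs (tsupport_mul_subset_left hx)
    hw.continuousAt.mul (hg.continuousAt (hU.mem_nhds hxU))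

/-- `w` is continuously differentiable on `ℂ`, with Wirtinger derivatives `∂w = a` and
`∂̄w = b`. -/
structure HasWirtinger (w a b : ℂ → ℂ) : Prop where
  hasWirtingerAt : ∀ z, HasWirtingerAt w (a z) (b z) z
  continuous_left : Continuous a
  continuous_right : Continuous b

namespace HasWirtinger

variable {w a b w₁ a₁ b₁ w₂ a₂ b₂ : ℂ → ℂ}

theorem continuous (hw : HasWirtinger w a b) : Continuous w :=
  continuous_iff_continuousAt.2 fun z => (hw.hasWirtingerAt z).continuousAt

theorem eq_zero_of_notMem_tsupport (hw : HasWirtinger w a b) {z : ℂ} (hz : z ∉ tsupport w) :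
    a z = 0 ∧ b z = 0 :=
  (hw.hasWirtingerAt z).eq_zero_of_notMem_tsupport hz

theorem tsupport_left_subset (hw : HasWirtinger w a b) : tsupport a ⊆ tsupport w :=
  closure_minimal (fun _ hz => by_contra fun h => hz (hw.eq_zero_of_notMem_tsupport h).1)
    (isClosed_tsupport _)

theorem tsupport_right_subset (hw : HasWirtinger w a b) : tsupport b ⊆ tsupport w :=
  closure_minimal (fun _ hz => by_contra fun h => hz (hw.eq_zero_of_notMem_tsupport h).2)
    (isClosed_tsupport _)

theorem hasCompactSupport_left (hw : HasWirtinger w a b) (hs : HasCompactSupport w) :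
    HasCompactSupport a :=
  hs.of_isClosed_subset (isClosed_tsupport a) hw.tsupport_left_subset

theorem congr_deriv {a' b' : ℂ → ℂ} (hw : HasWirtinger w a b) (ha : ∀ z, a z = a' z)
    (hb : ∀ z, b z = b' z) : HasWirtinger w a' b' :=
  funext ha ▸ funext hb ▸ hw

theorem id : HasWirtinger (fun z => z) (fun _ => 1) fun _ => 0 :=
  ⟨fun _ => .id, continuous_const, continuous_const⟩

theorem const (c : ℂ) : HasWirtinger (fun _ => c) (fun _ => 0) fun _ => 0 :=
  ⟨fun _ => .const, continuous_const, continuous_const⟩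

theorem of_differentiable (hw : Differentiable ℂ w) : HasWirtinger w (deriv w) fun _ => 0 :=
  ⟨fun z => .of_hasDerivAt (hw z).hasDerivAt, (hw.contDiff (n := 1)).continuous_deriv le_rfl,
    continuous_const⟩

theorem conj_comp (hw : HasWirtinger w a b) :
    HasWirtinger (fun z => conj (w z)) (fun z => conj (b z)) fun z => conj (a z) :=
  ⟨fun z => (hw.hasWirtingerAt z).conj_comp, Complex.continuous_conj.comp hw.continuous_right,
    Complex.continuous_conj.comp hw.continuous_left⟩

theorem add (h₁ : HasWirtinger w₁ a₁ b₁) (h₂ : HasWirtinger w₂ a₂ b₂) :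
    HasWirtinger (fun z => w₁ z + w₂ z) (fun z => a₁ z + a₂ z) fun z => b₁ z + b₂ z :=
  ⟨fun z => (h₁.hasWirtingerAt z).add (h₂.hasWirtingerAt z),
    h₁.continuous_left.add h₂.continuous_left, h₁.continuous_right.add h₂.continuous_right⟩

theorem sub (h₁ : HasWirtinger w₁ a₁ b₁) (h₂ : HasWirtinger w₂ a₂ b₂) :
    HasWirtinger (fun z => w₁ z - w₂ z) (fun z => a₁ z - a₂ z) fun z => b₁ z - b₂ z :=
  ⟨fun z => (h₁.hasWirtingerAt z).sub (h₂.hasWirtingerAt z),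
    h₁.continuous_left.sub h₂.continuous_left, h₁.continuous_right.sub h₂.continuous_right⟩

theorem mul (h₁ : HasWirtinger w₁ a₁ b₁) (h₂ : HasWirtinger w₂ a₂ b₂) :
    HasWirtinger (fun z => w₁ z * w₂ z) (fun z => a₁ z * w₂ z + w₁ z * a₂ z)
      fun z => b₁ z * w₂ z + w₁ z * b₂ z :=
  ⟨fun z => (h₁.hasWirtingerAt z).mul (h₂.hasWirtingerAt z),
    (h₁.continuous_left.mul h₂.continuous).add (h₁.continuous.mul h₂.continuous_left),
    (h₁.continuous_right.mul h₂.continuous).add (h₁.continuous.mul h₂.continuous_right)⟩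

theorem comp_add_const (hw : HasWirtinger w a b) (c : ℂ) :
    HasWirtinger (fun z => w (z + c)) (fun z => a (z + c)) (fun z => b (z + c)) where
  hasWirtingerAt z := (hw.hasWirtingerAt _).comp_add_const c
  continuous_left := hw.continuous_left.comp (by fun_prop)
  continuous_right := hw.continuous_right.comp (by fun_prop)

theorem mul_of_tsupport_subset {g c d : ℂ → ℂ} {U : Set ℂ} (hw : HasWirtinger w a b)
    (hU : IsOpen U) (hs : tsupport w ⊆ U) (hg : ∀ z ∈ U, HasWirtingerAt g (c z) (d z) z)
    (hc : ContinuousOn c U) (hd : ContinuousOn d U) :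
    HasWirtinger (fun z => w z * g z) (fun z => a z * g z + w z * c z)
      fun z => b z * g z + w z * d z := by
  have hgU : ContinuousOn g U := fun z hz => (hg z hz).continuousAt.continuousWithinAt
  refine ⟨fun z => ?_, ?_, ?_⟩
  · by_cases hz : z ∈ tsupport w
    · exact (hw.hasWirtingerAt z).mul (hg z (hs hz))
    · have hw₀ := notMem_tsupport_iff_eventuallyEq.1 hz
      obtain ⟨ha, hb⟩ := hw.eq_zero_of_notMem_tsupport hz
      have hwg : (fun z => w z * g z) =ᶠ[𝓝 z] fun _ => 0 := by
        filter_upwards [hw₀] with x hx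
        simp [hx]
      refine HasWirtingerAt.congr_deriv
        (HasFDerivAt.congr_of_eventuallyEq (HasWirtingerAt.const (c := 0)) hwg) ?_ ?_ <;>
        simp [ha, hb, hw₀.self_of_nhds]
  · exact (continuous_mul_of_tsupport_subset hw.continuous_left hU
      (hw.tsupport_left_subset.trans hs) hgU).add
      (continuous_mul_of_tsupport_subset hw.continuous hU hs hc)
  · exact (continuous_mul_of_tsupport_subset hw.continuous_right hU
      (hw.tsupport_right_subset.trans hs) hgU).add
      (continuous_mul_of_tsupport_subset hw.continuous hU hs hd)

end HasWirtinger

theorem continuous_circleMap_uncurry (c : ℂ) : Continuous fun p : ℝ × ℝ => circleMap c p.1 p.2 := by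
  simp only [circleMap]
  fun_prop

theorem hasDerivAt_circleMap_radius (c : ℂ) (r θ : ℝ) :
    HasDerivAt (fun r => circleMap c r θ) (circleMap 0 1 θ) r := by
  simpa [circleMap] using
    ((Complex.ofRealCLM.hasDerivAt (x := r)).mul_const (Complex.exp (θ * I))).const_add c

theorem circleMap_zero_eq_mul (r θ : ℝ) : circleMap 0 r θ = r * circleMap 0 1 θ := by
  simp [circleMap]

theorem circleMap_mul_conj_self (θ : ℝ) : circleMap 0 1 θ * conj (circleMap 0 1 θ) = 1 := by
  rw [Complex.mul_conj, Complex.normSq_eq_norm_sq, norm_circleMap_zero]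
  simp

theorem polarCoord_symm_eq_circleMap (p : ℝ × ℝ) :
    Complex.polarCoord.symm p = circleMap 0 p.1 p.2 := by
  simp [circleMap, Complex.polarCoord_symm_apply, Complex.exp_mul_I]

theorem HasWirtinger.intervalIntegral_circle_eq {w a b : ℂ → ℂ} (hw : HasWirtinger w a b) {r : ℝ}
    (hr : r ≠ 0) :
    ∫ θ in -π..π, a (circleMap 0 r θ) * circleMap 0 1 θ =
      ∫ θ in -π..π, b (circleMap 0 r θ) * conj (circleMap 0 1 θ) := by
  have ha := hw.continuous_left
  have hb := hw.continuous_right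
  have ca : Continuous fun θ => a (circleMap 0 r θ) * circleMap 0 1 θ := by fun_prop
  have cb : Continuous fun θ => b (circleMap 0 r θ) * conj (circleMap 0 1 θ) := by fun_prop
  have hderiv (θ : ℝ) : HasDerivAt (fun θ => w (circleMap 0 r θ))
      ((r * I) * (a (circleMap 0 r θ) * circleMap 0 1 θ
        - b (circleMap 0 r θ) * conj (circleMap 0 1 θ))) θ := by
    refine ((hw.hasWirtingerAt _).hasDerivAt_comp (hasDerivAt_circleMap 0 r θ)).congr_deriv ?_
    rw [circleMap_zero_eq_mul r θ]
    simp only [map_mul, Complex.conj_ofReal, Complex.conj_I]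
    ring
  have hFTC := intervalIntegral.integral_eq_sub_of_hasDerivAt (a := -π) (b := π)
    (fun θ _ => hderiv θ) (by apply Continuous.intervalIntegrable; fun_prop)
  have hperiod : circleMap 0 r π = circleMap 0 r (-π) := by
    simp [circleMap, Complex.exp_neg]
  rw [hperiod, sub_self, intervalIntegral.integral_const_mul,
    intervalIntegral.integral_sub (ca.intervalIntegrable _ _) (cb.intervalIntegrable _ _)] at hFTC
  exact sub_eq_zero.1 ((mul_eq_zero.1 hFTC).resolve_left (by simpa using hr))

theorem integrable_polar_of_eq_zero {F : ℝ × ℝ → ℂ} (hF : Continuous F) {R : ℝ}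
    (hR : ∀ p : ℝ × ℝ, R ≤ p.1 → F p = 0) :
    Integrable F ((volume.restrict (Ioi 0)).prod (volume.restrict (Ioo (-π) π))) := by
  rw [Measure.prod_restrict, ← Measure.volume_eq_prod]
  have hcompact : IntegrableOn F (Icc 0 R ×ˢ Icc (-π) π) :=
    hF.continuousOn.integrableOn_compact (isCompact_Icc.prod isCompact_Icc)
  refine hcompact.of_forall_sdiff_eq_zero (measurableSet_Ioi.prod measurableSet_Ioo) ?_
  rintro p ⟨⟨hr, hθ⟩, hp⟩
  refine hR p (le_of_not_ge fun hpR => hp ⟨⟨le_of_lt hr, hpR⟩, Ioo_subset_Icc_self hθ⟩)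

theorem integral_div_conj_eq_polar {a : ℂ → ℂ} {R : ℝ} (ha : Continuous a)
    (hR : ∀ z : ℂ, R ≤ ‖z‖ → a z = 0) :
    ∫ z, a z / conj z = ∫ r in Ioi (0 : ℝ), ∫ θ in Ioo (-π) π,
      a (circleMap 0 r θ) * circleMap 0 1 θ := by
  rw [← Complex.integral_comp_polarCoord_symm, polarCoord_target,
    ← integral_prod (fun p : ℝ × ℝ => a (circleMap 0 p.1 p.2) * circleMap 0 1 p.2)
      (integrable_polar_of_eq_zero (R := R) (by fun_prop) fun p hp => ?_),
    Measure.prod_restrict, ← Measure.volume_eq_prod]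
  · refine setIntegral_congr_fun (measurableSet_Ioi.prod measurableSet_Ioo) fun p hp => ?_
    have hr : (p.1 : ℂ) ≠ 0 := Complex.ofReal_ne_zero.2 (ne_of_gt hp.1)
    have hθ := circleMap_mul_conj_self p.2
    have hθ₀ : conj (circleMap 0 1 p.2) ≠ 0 := right_ne_zero_of_mul_eq_one hθ
    simp only [polarCoord_symm_eq_circleMap]
    nth_rewrite 2 [circleMap_zero_eq_mul]
    rw [map_mul, Complex.conj_ofReal, Complex.real_smul]
    field_simp
    linear_combination -a (circleMap 0 p.1 p.2) * hθ
  · rw [hR _ (by rw [norm_circleMap_zero]; exact hp.trans (le_abs_self _)), zero_mul]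

theorem HasWirtinger.integral_radius_eq {w a b : ℂ → ℂ} (hw : HasWirtinger w a b)
    (hs : HasCompactSupport w) (θ : ℝ) :
    ∫ r in Ioi (0 : ℝ), (a (circleMap 0 r θ) * circleMap 0 1 θ
      + b (circleMap 0 r θ) * conj (circleMap 0 1 θ)) = -w 0 := by
  have ha := hw.continuous_left
  have hb := hw.continuous_right
  have hderiv (r : ℝ) := (hw.hasWirtingerAt _).hasDerivAt_comp (hasDerivAt_circleMap_radius 0 r θ)
  obtain ⟨R, hR⟩ := hs.isCompact.isBounded.subset_ball 0
  have hout (r : ℝ) (hr : R ≤ r) : circleMap 0 r θ ∉ tsupport w := fun h => by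
    have := hR h
    rw [mem_ball_zero_iff, norm_circleMap_zero] at this
    linarith [le_abs_self r]
  have hint : IntegrableOn (fun r => a (circleMap 0 r θ) * circleMap 0 1 θ
      + b (circleMap 0 r θ) * conj (circleMap 0 1 θ)) (Ioi 0) := by
    refine IntegrableOn.of_forall_sdiff_eq_zero (s := Icc 0 R)
      (Continuous.continuousOn (by fun_prop)).integrableOn_Icc measurableSet_Ioi fun r hr => ?_
    have hr' := hw.eq_zero_of_notMem_tsupport
      (hout r (le_of_not_ge fun h => hr.2 ⟨le_of_lt hr.1, h⟩))
    simp [hr'.1, hr'.2]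
  have hlim : Tendsto (fun r => w (circleMap 0 r θ)) atTop (𝓝 0) := by
    refine tendsto_const_nhds.congr' ?_
    filter_upwards [eventually_ge_atTop R] with r hr
    exact (image_eq_zero_of_notMem_tsupport (hout r hr)).symm
  rw [integral_Ioi_of_hasDerivAt_of_tendsto' (fun r _ => hderiv r) hint hlim]
  simp

theorem HasWirtinger.integral_div_conj {w a b : ℂ → ℂ} (hw : HasWirtinger w a b)
    (hs : HasCompactSupport w) : ∫ z, a z / conj z = -(π : ℂ) * w 0 := by
  obtain ⟨R, hR⟩ := hs.isCompact.isBounded.subset_ball 0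
  have hout (z : ℂ) (hz : R ≤ ‖z‖) : a z = 0 ∧ b z = 0 :=
    hw.eq_zero_of_notMem_tsupport fun h => hz.not_gt (mem_ball_zero_iff.1 (hR h))
  have hnorm (p : ℝ × ℝ) (hp : R ≤ p.1) : R ≤ ‖circleMap 0 p.1 p.2‖ := by
    rw [norm_circleMap_zero]; exact hp.trans (le_abs_self _)
  have ha := hw.continuous_left
  have hb := hw.continuous_right
  have hpi : -π ≤ π := by linarith [Real.pi_pos]
  set A : ℝ × ℝ → ℂ := fun p => a (circleMap 0 p.1 p.2) * circleMap 0 1 p.2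
  set B : ℝ × ℝ → ℂ := fun p => b (circleMap 0 p.1 p.2) * conj (circleMap 0 1 p.2)
  have hA := integrable_polar_of_eq_zero (F := A) (R := R) (by fun_prop) fun p hp => by
    simp [A, (hout _ (hnorm p hp)).1]
  have hB := integrable_polar_of_eq_zero (F := B) (R := R) (by fun_prop) fun p hp => by
    simp [B, (hout _ (hnorm p hp)).2]
  have eA := integral_div_conj_eq_polar ha fun z hz => (hout z hz).1
  have eB : ∫ z, a z / conj z =
      ∫ r in Ioi (0 : ℝ), ∫ θ in Ioo (-π) π, B (r, θ) := by
    refine eA.trans (setIntegral_congr_fun measurableSet_Ioi fun r hr => ?_)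
    have hr := hw.intervalIntegral_circle_eq (ne_of_gt hr)
    rwa [intervalIntegral.integral_of_le hpi, intervalIntegral.integral_of_le hpi,
      integral_Ioc_eq_integral_Ioo, integral_Ioc_eq_integral_Ioo] at hr
  -- Averaging the two expressions produces the radial derivative of `w`.
  have hsum : 2 * ∫ z, a z / conj z = ∫ _ in Ioo (-π) π, -w 0 := by
    rw [two_mul]
    nth_rewrite 1 [eA]
    rw [eB, ← integral_prod A hA, ← integral_prod B hB, ← integral_add hA hB,
      integral_prod_symm (fun p => A p + B p) (hA.add hB)]
    exact integral_congr_ae (.of_forall (hw.integral_radius_eq hs))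
  rw [setIntegral_const, Measure.real, Real.volume_Ioo, ENNReal.toReal_ofReal (by linarith),
    Complex.real_smul] at hsum
  push_cast at hsum
  linear_combination hsum / 2

theorem HasWirtinger.cauchyPompeiu {w a b : ℂ → ℂ} (hw : HasWirtinger w a b)
    (hs : HasCompactSupport w) (y : ℂ) :
    ∫ z, a z / conj (z - y) = -(π : ℂ) * w y := by
  have h := (hw.comp_add_const y).integral_div_conj (hs.comp_homeomorph (Homeomorph.addRight y))
  rw [zero_add] at h
  rw [← h, ← integral_add_right_eq_self _ y]
  simp

theorem locallyIntegrable_inv_conj : LocallyIntegrable fun z : ℂ => (conj z)⁻¹ := by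
  have hball (R : ℝ) : IntegrableOn (fun z : ℂ => (conj z)⁻¹) (ball 0 R) := by
    have hnorm : IntegrableOn (fun z : ℂ => ‖z‖⁻¹) (ball 0 R) := by
      rw [integrableOn_fun_norm_addHaar volume (f := fun x : ℝ => x⁻¹)]
      refine (integrableOn_const (C := (1 : ℝ)) (by simp)).congr_fun (fun x hx => ?_)
        measurableSet_Ioo
      simp [Complex.finrank_real_complex, hx.1.ne']
    have : Measurable fun z : ℂ => (conj z)⁻¹ := by fun_prop
    exact Integrable.mono hnorm this.aestronglyMeasurable (by simp)
  refine fun z => ⟨ball 0 (‖z‖ + 1), isOpen_ball.mem_nhds (by simp), hball _⟩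

theorem integrable_div_conj_sub {F : ℂ → ℂ} (hF : Continuous F) (hs : HasCompactSupport F)
    (y : ℂ) : Integrable fun z => F z / conj (z - y) := by
  suffices h : Integrable fun z => F (z + y) / conj z by simpa using h.comp_sub_right y
  exact
    locallyIntegrable_inv_conj.integrable_smul_left_of_hasCompactSupport
      (hF.comp (continuous_add_const y)) (hs.comp_homeomorph (Homeomorph.addRight y))

theorem integrable_prod_div_conj_sub {G : ℂ × ℂ → ℂ} (hG : Continuous G)
    (hs : HasCompactSupport G) :
    Integrable (fun p : ℂ × ℂ => G p / conj (p.1 - p.2)) (volume.prod volume) := by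
  obtain ⟨R, hR⟩ := hs.isCompact.isBounded.subset_ball 0
  obtain ⟨C, hC⟩ := hG.bounded_above_of_compact_support hs
  have hker : Integrable ((closedBall (0 : ℂ) (2 * R)).indicator fun z => (conj z)⁻¹) :=
    (integrable_indicator_iff measurableSet_closedBall).2
      (locallyIntegrable_inv_conj.integrableOn_isCompact (isCompact_closedBall _ _))
  have hind : Integrable ((closedBall (0 : ℂ) R).indicator fun _ => (1 : ℂ)) :=
    (integrable_indicator_iff measurableSet_closedBall).2
      (continuousOn_const.integrableOn_compact (isCompact_closedBall _ _))
  have hconv := Integrable.convolution_integrand (ContinuousLinearMap.mul ℝ ℂ) hind hker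
  refine (hconv.bdd_mul (c := C) hG.aestronglyMeasurable (.of_forall hC)).congr
    (.of_forall fun p => ?_)
  by_cases hp : p ∈ tsupport G
  · have hpR := mem_ball_zero_iff.1 (hR hp)
    have h₁ : ‖p.1‖ ≤ R := (norm_fst_le p).trans hpR.le
    have h₂ : ‖p.2‖ ≤ R := (norm_snd_le p).trans hpR.le
    have h₁₂ : p.1 - p.2 ∈ closedBall (0 : ℂ) (2 * R) :=
      mem_closedBall_zero_iff.2 ((norm_sub_le _ _).trans (by linarith))
    simp [ContinuousLinearMap.mul_apply', indicator_of_mem (mem_closedBall_zero_iff.2 h₂),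
      indicator_of_mem h₁₂, div_eq_mul_inv]
  · simp [image_eq_zero_of_notMem_tsupport hp]

theorem HasWirtinger.integral_left_eq_zero {w a b : ℂ → ℂ} (hw : HasWirtinger w a b)
    (hs : HasCompactSupport w) : ∫ z, a z = 0 := by
  have h := (hw.mul HasWirtinger.id.conj_comp).integral_div_conj hs.mul_right
  rw [map_zero, mul_zero, mul_zero] at h
  rw [← h]
  refine integral_congr_ae ?_
  filter_upwards [volume.ae_ne (0 : ℂ)] with z hz
  have hz' : conj z ≠ 0 := (map_ne_zero (starRingEnd ℂ)).2 hz
  simp only [mul_zero, add_zero]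
  rw [mul_div_cancel_right₀ _ hz']

section HyperbolicIsoperimetric

variable {q a b : ℂ → ℂ}

theorem HasWirtinger.one_sub_mul_conj :
    HasWirtinger (fun z => 1 - z * conj z) (fun z => -conj z) fun z => -z := by
  simpa using (const 1).sub (id.mul id.conj_comp)

/-- The derivative `(1 - |z|²)⁻¹ ∂((1 - |z|²)² q)`, in terms of `q` and `a = ∂q`. -/
noncomputable def weightedWirtinger (q a : ℂ → ℂ) (z : ℂ) : ℂ :=
  a z * (1 - z * conj z) - 2 * conj z * q z

theorem HasWirtinger.continuous_weightedWirtinger (hq : HasWirtinger q a b) :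
    Continuous (weightedWirtinger q a) := by
  have := hq.continuous
  have := hq.continuous_left
  unfold weightedWirtinger
  fun_prop

theorem HasWirtinger.hasCompactSupport_weightedWirtinger (hq : HasWirtinger q a b)
    (hs : HasCompactSupport q) : HasCompactSupport (weightedWirtinger q a) :=
  (hq.hasCompactSupport_left hs).mul_right.sub hs.mul_left

theorem HasWirtinger.integral_weightedWirtinger_mul_sub_div (hq : HasWirtinger q a b)
    (hs : HasCompactSupport q) (x : ℂ) :
    ∫ y, weightedWirtinger q a y * ((x - y) / conj (x - y)) =
      ∫ y, q y * (1 - x * conj y) / conj (x - y) := by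
  have hcq := hq.continuous
  have hcA := hq.continuous_weightedWirtinger
  have hsA := hq.hasCompactSupport_weightedWirtinger hs
  have hψ := (hq.mul one_sub_mul_conj).mul ((const x).sub id)
  have hCP := hψ.cauchyPompeiu hs.mul_right.mul_right x
  rw [sub_self, mul_zero, mul_zero] at hCP
  have hflip (y : ℂ) : conj (x - y) = -conj (y - x) := by rw [← map_neg, neg_sub]
  simp only [hflip, div_neg, mul_neg, ← mul_div_assoc, integral_neg]
  rw [neg_inj, ← sub_eq_zero, ← integral_sub, ← hCP]
  · refine integral_congr_ae (.of_forall fun y => ?_)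
    simp only [weightedWirtinger]
    ring
  · exact integrable_div_conj_sub (by fun_prop) hsA.mul_right x
  · exact integrable_div_conj_sub (by fun_prop) hs.mul_right x

theorem HasWirtinger.integral_weightedWirtinger_mul_one_sub_div (hq : HasWirtinger q a b)
    (hs : HasCompactSupport q) (y : ℂ) :
    ∫ x, weightedWirtinger q a x * (1 - x * conj y) / conj (x - y) =
      -(π : ℂ) * (q y * (1 - y * conj y) ^ 2) - ∫ x, q x := by
  have hcq := hq.continuous
  have hcA := hq.continuous_weightedWirtinger
  have hsA := hq.hasCompactSupport_weightedWirtinger hs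
  have hψ := (hq.mul one_sub_mul_conj).mul ((const 1).sub (id.mul (const (conj y))))
  have hCP := hψ.cauchyPompeiu hs.mul_right.mul_right y
  rw [sq, ← mul_assoc (q y), ← hCP, eq_sub_iff_add_eq, ← integral_add]
  · refine integral_congr_ae ?_
    filter_upwards [volume.ae_ne y] with x hx
    have hxy : conj (x - y) ≠ 0 := (map_ne_zero (starRingEnd ℂ)).2 (sub_ne_zero.2 hx)
    simp only [weightedWirtinger]
    field_simp
    simp only [map_sub]
    ring
  · exact integrable_div_conj_sub (by fun_prop) hsA.mul_right y
  · exact hcq.integrable_of_hasCompactSupport hs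

theorem HasWirtinger.integral_integral_weightedWirtinger (hq : HasWirtinger q a b)
    (hs : HasCompactSupport q) :
    ∫ x, ∫ y, weightedWirtinger q a x * weightedWirtinger q a y * ((x - y) / conj (x - y)) =
      -(π * (∫ z, q z ^ 2 * (1 - z * conj z) ^ 2) + (∫ z, q z) ^ 2) := by
  have hcq := hq.continuous
  have hcA := hq.continuous_weightedWirtinger
  have hsA := hq.hasCompactSupport_weightedWirtinger hs
  set A := weightedWirtinger q a
  have hsG : HasCompactSupport fun p : ℂ × ℂ => A p.1 * (q p.2 * (1 - p.1 * conj p.2)) := by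
    refine .intro (hsA.isCompact.prod hs.isCompact) fun p hp => ?_
    rcases not_and_or.1 hp with h | h <;> simp [image_eq_zero_of_notMem_tsupport h]
  calc ∫ x, ∫ y, A x * A y * ((x - y) / conj (x - y))
      = ∫ x, ∫ y, A x * (q y * (1 - x * conj y)) / conj (x - y) := by
        refine integral_congr_ae (.of_forall fun x => ?_)
        simp only [mul_assoc, mul_div_assoc, integral_const_mul]
        rw [hq.integral_weightedWirtinger_mul_sub_div hs]
        simp only [mul_div_assoc]
    _ = ∫ y, ∫ x, q y * (A x * (1 - x * conj y) / conj (x - y)) := by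
        rw [integral_integral_swap (integrable_prod_div_conj_sub (by fun_prop) hsG)]
        exact integral_congr_ae (.of_forall fun y =>
          integral_congr_ae (.of_forall fun x => by dsimp only; ring))
    _ = ∫ y, (-(π : ℂ) * (q y ^ 2 * (1 - y * conj y) ^ 2) - q y * ∫ x, q x) := by
        refine integral_congr_ae (.of_forall fun y => ?_)
        simp only [integral_const_mul]
        rw [hq.integral_weightedWirtinger_mul_one_sub_div hs]
        ring
    _ = -(π * (∫ z, q z ^ 2 * (1 - z * conj z) ^ 2) + (∫ z, q z) ^ 2) := by
        have hs2 : HasCompactSupport fun z => q z ^ 2 * (1 - z * conj z) ^ 2 := by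
          simp only [sq, mul_assoc]
          exact hs.mul_right
        rw [integral_sub, integral_const_mul, integral_mul_const]
        · ring
        · exact ((by fun_prop : Continuous _).integrable_of_hasCompactSupport hs2).const_mul _
        · exact (hcq.integrable_of_hasCompactSupport hs).mul_const _

theorem HasWirtinger.norm_isoperimetric_le (hq : HasWirtinger q a b) (hs : HasCompactSupport q) :
    ‖π * (∫ z, q z ^ 2 * (1 - z * conj z) ^ 2) + (∫ z, q z) ^ 2‖ ≤
      (∫ z, ‖weightedWirtinger q a z‖) ^ 2 := by
  have hA : Integrable fun z => ‖weightedWirtinger q a z‖ :=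
    (hq.continuous_weightedWirtinger.integrable_of_hasCompactSupport
      (hq.hasCompactSupport_weightedWirtinger hs)).norm
  rw [← norm_neg, ← hq.integral_integral_weightedWirtinger hs, sq, ← integral_mul_const]
  refine norm_integral_le_of_norm_le (hA.mul_const _) (.of_forall fun x => ?_)
  rw [← integral_const_mul]
  refine norm_integral_le_of_norm_le (hA.const_mul _) (.of_forall fun y => ?_)
  rw [norm_mul, norm_mul, norm_div, Complex.norm_conj]
  exact mul_le_of_le_one_right (by positivity) (div_self_le_one _)

theorem ofReal_one_sub_norm_sq (z : ℂ) : ((1 - ‖z‖ ^ 2 : ℝ) : ℂ) = 1 - z * conj z := by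
  rw [Complex.mul_conj, Complex.normSq_eq_norm_sq]; push_cast; ring

theorem one_sub_norm_sq_pos {z : ℂ} (hz : z ∈ ball (0 : ℂ) 1) : 0 < 1 - ‖z‖ ^ 2 := by
  rw [mem_ball_zero_iff] at hz
  nlinarith [norm_nonneg z]

theorem one_sub_mul_conj_ne_zero {z : ℂ} (hz : z ∈ ball (0 : ℂ) 1) : 1 - z * conj z ≠ 0 := by
  rw [← ofReal_one_sub_norm_sq]
  exact_mod_cast (one_sub_norm_sq_pos hz).ne'

theorem hasWirtingerAt_inv_one_sub_sq {z : ℂ} (hz : z ∈ ball (0 : ℂ) 1) :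
    HasWirtingerAt (fun z => ((1 - z * conj z) ^ 2)⁻¹) (2 * conj z * ((1 - z * conj z) ^ 3)⁻¹)
      (2 * z * ((1 - z * conj z) ^ 3)⁻¹) z := by
  have hne := one_sub_mul_conj_ne_zero hz
  have hinv : HasDerivAt (fun x : ℂ => (x ^ 2)⁻¹) (-(2 * ((1 - z * conj z) ^ 3)⁻¹))
      (1 - z * conj z) := by
    refine (HasDerivAt.fun_inv (hasDerivAt_pow 2 (1 - z * conj z))
      (pow_ne_zero 2 hne)).congr_deriv ?_
    field_simp
    simp [mul_comm]
  exact ((HasWirtinger.one_sub_mul_conj.hasWirtingerAt z).comp_hasDerivAt hinv).congr_deriv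
    (by ring) (by ring)

theorem HasWirtinger.div_one_sub_mul_conj_sq {φ : ℂ → ℂ} (hφ : HasWirtinger φ a b)
    (hsub : tsupport φ ⊆ ball 0 1) :
    HasWirtinger (fun z => φ z * ((1 - z * conj z) ^ 2)⁻¹)
      (fun z => a z * ((1 - z * conj z) ^ 2)⁻¹ + φ z * (2 * conj z * ((1 - z * conj z) ^ 3)⁻¹))
      fun z => b z * ((1 - z * conj z) ^ 2)⁻¹ + φ z * (2 * z * ((1 - z * conj z) ^ 3)⁻¹) := by
  have hpow : ContinuousOn (fun z : ℂ => ((1 - z * conj z) ^ 3)⁻¹) (ball 0 1) :=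
    ContinuousOn.inv₀ (by fun_prop) fun z hz => pow_ne_zero 3 (one_sub_mul_conj_ne_zero hz)
  exact hφ.mul_of_tsupport_subset isOpen_ball hsub (fun z hz => hasWirtingerAt_inv_one_sub_sq hz)
    (ContinuousOn.mul (by fun_prop) hpow) (ContinuousOn.mul (by fun_prop) hpow)

theorem weightedWirtinger_div_one_sub_mul_conj_sq {φ : ℂ → ℂ} {z : ℂ} (hz : z ∈ ball (0 : ℂ) 1) :
    weightedWirtinger (fun z => φ z * ((1 - z * conj z) ^ 2)⁻¹)
      (fun z => a z * ((1 - z * conj z) ^ 2)⁻¹ + φ z * (2 * conj z * ((1 - z * conj z) ^ 3)⁻¹)) z =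
      a z / (1 - z * conj z) := by
  have hne := one_sub_mul_conj_ne_zero hz
  simp only [weightedWirtinger]
  field_simp
  ring

/-- For `φ` approximating the indicator function of a set of hyperbolic area `S` and boundary length
`L`, this is `4πS + 4S² ≤ L²`, up to the normalization of the metric. -/
theorem hyperbolic_isoperimetric {φ : ℂ → ℝ} (hφ : HasWirtinger (fun z => (φ z : ℂ)) a b)
    (hs : HasCompactSupport φ) (hsub : tsupport φ ⊆ ball 0 1) :
    π * (∫ z, φ z ^ 2 / (1 - ‖z‖ ^ 2) ^ 2) + (∫ z, φ z / (1 - ‖z‖ ^ 2) ^ 2) ^ 2 ≤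
      (∫ z, ‖a z‖ / |1 - ‖z‖ ^ 2|) ^ 2 := by
  have hts : tsupport (fun z => (φ z : ℂ)) = tsupport φ := by
    rw [tsupport, tsupport]; congr 1; ext z; simp
  have hball {z : ℂ} (hz : z ∉ ball (0 : ℂ) 1) : φ z = 0 :=
    image_eq_zero_of_notMem_tsupport fun h => hz (hsub h)
  have hsφ : HasCompactSupport fun z => (φ z : ℂ) := by rwa [HasCompactSupport, hts]
  have h := (hφ.div_one_sub_mul_conj_sq (hts ▸ hsub)).norm_isoperimetric_le hsφ.mul_right
  refine (le_of_eq_of_le ?_ (Complex.re_le_norm _)).trans (h.trans_eq ?_)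
  · have hφ_sq (z : ℂ) : ((φ z : ℂ) * ((1 - z * conj z) ^ 2)⁻¹) ^ 2 * (1 - z * conj z) ^ 2 =
        ((φ z ^ 2 / (1 - ‖z‖ ^ 2) ^ 2 : ℝ) : ℂ) := by
      by_cases hz : z ∈ ball (0 : ℂ) 1
      · have hne := one_sub_mul_conj_ne_zero hz
        rw [Complex.ofReal_div, Complex.ofReal_pow (1 - ‖z‖ ^ 2), ofReal_one_sub_norm_sq]
        push_cast
        field_simp
      · simp [hball hz]
    have hφ_one (z : ℂ) : (φ z : ℂ) * ((1 - z * conj z) ^ 2)⁻¹ =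
        ((φ z / (1 - ‖z‖ ^ 2) ^ 2 : ℝ) : ℂ) := by
      rw [Complex.ofReal_div, Complex.ofReal_pow, ofReal_one_sub_norm_sq, div_eq_mul_inv]
    simp only [hφ_sq]
    simp only [hφ_one]
    rw [integral_complex_ofReal, integral_complex_ofReal]
    norm_cast
  · congr 1
    refine integral_congr_ae (.of_forall fun z => ?_)
    by_cases hz : z ∈ ball (0 : ℂ) 1
    · dsimp only
      rw [weightedWirtinger_div_one_sub_mul_conj_sq hz, norm_div, ← ofReal_one_sub_norm_sq,
        Complex.norm_real, Real.norm_eq_abs]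
    · have ha := (hφ.eq_zero_of_notMem_tsupport fun h => hz (hsub (hts ▸ h))).1
      simp [weightedWirtinger, ha, hball hz]

end HyperbolicIsoperimetric

theorem sq_integral_le_mul_integral {X : Type*} [MeasurableSpace X] {μ : Measure X}
    {f g h : X → ℝ} (hf : Integrable f μ) (hg : Integrable g μ) (hh : Integrable h μ)
    (hf₀ : ∀ x, 0 ≤ f x) (hg₀ : ∀ x, 0 ≤ g x) (hfg : ∀ x, h x ^ 2 ≤ f x * g x) :
    (∫ x, h x ∂μ) ^ 2 ≤ (∫ x, f x ∂μ) * ∫ x, g x ∂μ := by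
  have hquad (s : ℝ) :
      0 ≤ (∫ x, f x ∂μ) * (s * s) + (-2 * ∫ x, h x ∂μ) * s + ∫ x, g x ∂μ := by
    have hint : ∫ x, (f x * (s * s) + h x * (-2 * s) + g x) ∂μ =
        (∫ x, f x ∂μ) * (s * s) + (-2 * ∫ x, h x ∂μ) * s + ∫ x, g x ∂μ := by
      have hfh : Integrable (fun x => f x * (s * s) + h x * (-2 * s)) μ :=
        (hf.mul_const _).add (hh.mul_const _)
      rw [integral_add hfh hg, integral_add (hf.mul_const _) (hh.mul_const _),
        integral_mul_const, integral_mul_const]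
      ring
    rw [← hint]
    refine integral_nonneg fun x => ?_
    rcases (hf₀ x).eq_or_lt with h₀ | h₀
    · have : h x = 0 := by simpa [← h₀] using (hfg x).antisymm (by simp [← h₀, sq_nonneg])
      simpa [← h₀, this] using hg₀ x
    · refine nonneg_of_mul_nonneg_right ?_ h₀
      linarith [sq_nonneg (f x * s - h x), hfg x]
  have := discrim_le_zero hquad
  rw [discrim] at this
  linarith

/-- `Ψ` is a `C¹` smoothing of the ramp which vanishes up to `t`, has slope `1` on `[t, t']`, and is
constant afterwards; `η` is its derivative. -/
structure IsSmoothRamp (Ψ η : ℝ → ℝ) (t t' : ℝ) : Prop where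
  hasDerivAt : ∀ x, HasDerivAt Ψ (η x) x
  continuous_deriv : Continuous η
  deriv_nonneg : ∀ x, 0 ≤ η x
  deriv_le_one : ∀ x, η x ≤ 1
  deriv_eq_zero_of_le : ∀ x ≤ t, η x = 0
  deriv_eq_zero_of_ge : ∀ x, t' ≤ x → η x = 0
  eq_zero_of_le : ∀ x ≤ t, Ψ x = 0

namespace IsSmoothRamp

variable {Ψ η : ℝ → ℝ} {t t' J : ℝ}

theorem continuous (hΨ : IsSmoothRamp Ψ η t t') : Continuous Ψ :=
  continuous_iff_continuousAt.2 fun x => (hΨ.hasDerivAt x).continuousAt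

theorem monotone (hΨ : IsSmoothRamp Ψ η t t') : Monotone Ψ :=
  monotone_of_hasDerivAt_nonneg hΨ.hasDerivAt hΨ.deriv_nonneg

theorem nonneg (hΨ : IsSmoothRamp Ψ η t t') (x : ℝ) : 0 ≤ Ψ x :=
  (hΨ.eq_zero_of_le _ (min_le_right x t)).ge.trans (hΨ.monotone (min_le_left x t))

theorem eq_of_ge (hΨ : IsSmoothRamp Ψ η t t') {x : ℝ} (hx : t' ≤ x) : Ψ x = Ψ t' := by
  have h := intervalIntegral.integral_eq_sub_of_hasDerivAt (fun y _ => hΨ.hasDerivAt y)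
    (hΨ.continuous_deriv.intervalIntegrable t' x)
  rw [intervalIntegral.integral_zero_ae (.of_forall fun y hy => hΨ.deriv_eq_zero_of_ge y
    (uIoc_of_le hx ▸ hy).1.le)] at h
  linarith

theorem le_right (hΨ : IsSmoothRamp Ψ η t t') (x : ℝ) : Ψ x ≤ Ψ t' :=
  (hΨ.monotone (le_max_left x t')).trans_eq (hΨ.eq_of_ge (le_max_right x t'))

end IsSmoothRamp

theorem exists_isSmoothRamp {t t' J : ℝ} (hJ : J < t' - t) (hJ₀ : 0 ≤ J) :
    ∃ Ψ η, IsSmoothRamp Ψ η t t' ∧ J ≤ Ψ t' := by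
  set δ := (t' - t - J) / 2 with hδ
  obtain ⟨η, h₀, h₁, h01⟩ := exists_continuous_zero_one_of_isClosed (s := (Ioo t t')ᶜ)
    (t := Icc (t + δ) (t' - δ)) isOpen_Ioo.isClosed_compl isClosed_Icc
    (disjoint_compl_left_iff_subset.2 (Icc_subset_Ioo (by linarith) (by linarith)))
  have hη (a b : ℝ) : IntervalIntegrable η volume a b := η.continuous.intervalIntegrable a b
  have hηt (x : ℝ) (hx : x ≤ t) : η x = 0 := h₀ fun h => hx.not_gt h.1
  refine ⟨fun x => ∫ y in t..x, η y, η,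
    ⟨fun x => (η.continuous.integral_hasStrictDerivAt t x).hasDerivAt, η.continuous,
      fun x => (h01 x).1, fun x => (h01 x).2, hηt, fun x hx => h₀ fun h => hx.not_gt h.2,
      fun x hx => intervalIntegral.integral_zero_ae (.of_forall fun y hy =>
        hηt y (uIoc_of_ge hx ▸ hy).2)⟩, ?_⟩
  calc J = ∫ _ in (t + δ)..(t' - δ), (1 : ℝ) := by simp [hδ]; ring
    _ = ∫ x in (t + δ)..(t' - δ), η x := intervalIntegral.integral_congr fun _ hx =>
      (h₁ (uIcc_of_le (by linarith : t + δ ≤ t' - δ) ▸ hx)).symm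
    _ ≤ ∫ x in t..t', η x := intervalIntegral.integral_mono_interval (by linarith) (by linarith)
      (by linarith) (.of_forall fun x => (h01 x).1) (hη _ _)

/-- `v` is a `C¹` weight with `∂v = a`, positive only inside the unit disk, for which
`∂∂̄ log v ≥ -(1 - |z|²)⁻²`. Since `∂̄ log v = conj a / v`, the functions `d` and `e` stand for
`∂∂̄ log v` and `∂̄² log v`. -/
structure IsHyperbolicWeight (v : ℂ → ℝ) (a d e : ℂ → ℂ) : Prop where
  hasWirtinger : HasWirtinger (fun z => (v z : ℂ)) a fun z => conj (a z)
  mem_ball : ∀ ⦃z⦄, 0 < v z → z ∈ ball (0 : ℂ) 1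
  hasWirtingerAt_log : ∀ ⦃z⦄, 0 < v z → HasWirtingerAt (fun z => conj (a z) / v z) (d z) (e z) z
  continuousOn_left : ContinuousOn d {z | 0 < v z}
  continuousOn_right : ContinuousOn e {z | 0 < v z}
  neg_le_re : ∀ ⦃z⦄, 0 < v z → -((1 - ‖z‖ ^ 2) ^ 2)⁻¹ ≤ (d z).re

theorem HasWirtinger.comp_real {v : ℂ → ℝ} {a b : ℂ → ℂ} {g g' : ℝ → ℝ}
    (hv : HasWirtinger (fun z => (v z : ℂ)) a b) (hg : ∀ x, HasDerivAt g (g' x) x)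
    (hg' : Continuous g') :
    HasWirtinger (fun z => (g (v z) : ℂ)) (fun z => g' (v z) * a z) fun z => g' (v z) * b z := by
  have hcv : Continuous v := Complex.continuous_re.comp hv.continuous
  have ha := hv.continuous_left
  have hb := hv.continuous_right
  exact ⟨fun z => (hv.hasWirtingerAt z).comp_real (hg _), by fun_prop, by fun_prop⟩

namespace IsHyperbolicWeight

variable {v : ℂ → ℝ} {a d e : ℂ → ℂ} {g h Ψ η : ℝ → ℝ} {t t' : ℝ}

protected theorem continuous (hv : IsHyperbolicWeight v a d e) : Continuous v :=
  Complex.continuous_re.comp hv.hasWirtinger.continuous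

theorem isOpen_setOf_pos (hv : IsHyperbolicWeight v a d e) : IsOpen {z | 0 < v z} :=
  isOpen_lt continuous_const hv.continuous

theorem isCompact_setOf_le (hv : IsHyperbolicWeight v a d e) (ht : 0 < t) :
    IsCompact {z | t ≤ v z} :=
  isCompact_of_isClosed_isBounded (isClosed_le continuous_const hv.continuous)
    (isBounded_ball.subset fun _ hz => hv.mem_ball (ht.trans_le hz))

theorem tsupport_comp_subset {E : Type*} [Zero E] {g : ℝ → E} (hv : IsHyperbolicWeight v a d e)
    (hg : ∀ x ≤ t, g x = 0) :
    tsupport (fun z => g (v z)) ⊆ {z | t ≤ v z} :=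
  closure_minimal (fun _ hz => le_of_not_ge fun h => hz (hg _ h))
    (isClosed_le continuous_const hv.continuous)

theorem hasCompactSupport_comp (hv : IsHyperbolicWeight v a d e) (ht : 0 < t)
    (hg : ∀ x ≤ t, g x = 0) : HasCompactSupport fun z => g (v z) :=
  (hv.isCompact_setOf_le ht).of_isClosed_subset (isClosed_tsupport _) (hv.tsupport_comp_subset hg)

theorem integrable_comp_mul {h : ℂ → ℝ} (hv : IsHyperbolicWeight v a d e) (ht : 0 < t)
    (hg : Continuous g) (hgt : ∀ x ≤ t, g x = 0) (hh : ContinuousOn h {z | 0 < v z}) :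
    Integrable fun z => g (v z) * h z :=
  (continuous_mul_of_tsupport_subset (hg.comp hv.continuous) hv.isOpen_setOf_pos
    ((hv.tsupport_comp_subset hgt).trans fun _ hz => ht.trans_le hz)
    hh).integrable_of_hasCompactSupport (hv.hasCompactSupport_comp ht hgt).mul_right

theorem continuousOn_inv_one_sub_norm_sq (hv : IsHyperbolicWeight v a d e) :
    ContinuousOn (fun z => (1 - ‖z‖ ^ 2)⁻¹) {z | 0 < v z} :=
  ContinuousOn.inv₀ (by fun_prop) fun _ hz => (one_sub_norm_sq_pos (hv.mem_ball hz)).ne'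

theorem continuousOn_norm_sq_div (hv : IsHyperbolicWeight v a d e) :
    ContinuousOn (fun z => ‖a z‖ ^ 2 / v z) {z | 0 < v z} :=
  have ha := hv.hasWirtinger.continuous_left
  ContinuousOn.div (by fun_prop) hv.continuous.continuousOn fun _ hz => ne_of_gt hz

theorem integral_comp_deriv_energy_eq (hv : IsHyperbolicWeight v a d e) (ht : 0 < t)
    (hΨ : IsSmoothRamp Ψ η t t') :
    ∫ z, (η (v z) * (‖a z‖ ^ 2 / v z) + Ψ (v z) * (d z).re) = 0 := by
  have hts : tsupport (fun z => (Ψ (v z) : ℂ)) ⊆ {z | 0 < v z} :=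
    (hv.tsupport_comp_subset (g := fun x => (Ψ x : ℂ)) fun x hx => by
      simp [hΨ.eq_zero_of_le x hx]).trans fun _ hz => ht.trans_le hz
  have hs : HasCompactSupport fun z => (Ψ (v z) : ℂ) :=
    (hv.hasCompactSupport_comp ht hΨ.eq_zero_of_le).comp_left (g := fun x : ℝ => (x : ℂ)) rfl
  have hW := (hv.hasWirtinger.comp_real hΨ.hasDerivAt hΨ.continuous_deriv).mul_of_tsupport_subset
    hv.isOpen_setOf_pos hts hv.hasWirtingerAt_log hv.continuousOn_left hv.continuousOn_right
  have hzero := hW.integral_left_eq_zero hs.mul_right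
  have hint := hW.continuous_left.integrable_of_hasCompactSupport
    (hW.hasCompactSupport_left hs.mul_right) (μ := volume)
  rw [← Complex.zero_re, ← hzero, ← RCLike.re_eq_complex_re, ← integral_re hint]
  refine integral_congr_ae (.of_forall fun z => ?_)
  have hnorm : a z * (conj (a z) / v z) = ((‖a z‖ ^ 2 / v z : ℝ) : ℂ) := by
    rw [← mul_div_assoc, Complex.mul_conj, Complex.normSq_eq_norm_sq, Complex.ofReal_div]
  simp only [mul_assoc, hnorm, RCLike.re_eq_complex_re, Complex.add_re, Complex.re_ofReal_mul,
    Complex.ofReal_re]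

theorem integral_energy_le (hv : IsHyperbolicWeight v a d e) (ht : 0 < t)
    (hΨ : IsSmoothRamp Ψ η t t') :
    ∫ z, η (v z) * (‖a z‖ ^ 2 / v z) ≤ ∫ z, Ψ (v z) / (1 - ‖z‖ ^ 2) ^ 2 := by
  have hη := hv.integrable_comp_mul ht hΨ.continuous_deriv hΨ.deriv_eq_zero_of_le
    hv.continuousOn_norm_sq_div
  have hd := hv.integrable_comp_mul (h := fun z => (d z).re) ht hΨ.continuous hΨ.eq_zero_of_le
    (Complex.continuous_re.comp_continuousOn hv.continuousOn_left)
  have hΨi := hv.integrable_comp_mul ht hΨ.continuous hΨ.eq_zero_of_le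
    (hv.continuousOn_inv_one_sub_norm_sq.pow 2)
  have henergy := hv.integral_comp_deriv_energy_eq ht hΨ
  rw [integral_add hη hd] at henergy
  rw [eq_neg_of_add_eq_zero_left henergy, ← integral_neg]
  refine integral_mono hd.neg (hΨi.congr (.of_forall fun z => ?_)) fun z => ?_
  · simp [div_eq_mul_inv]
  · rcases le_or_gt (v z) t with hz | hz
    · simp [hΨ.eq_zero_of_le _ hz]
    · have := mul_le_mul_of_nonneg_left (hv.neg_le_re (ht.trans hz)) (hΨ.nonneg (v z))
      simp only [div_eq_mul_inv]
      linarith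

theorem sq_integral_norm_deriv_le (hv : IsHyperbolicWeight v a d e) (ht : 0 < t)
    (hΨ : IsSmoothRamp Ψ η t t') :
    (∫ z, ‖(η (v z) : ℂ) * a z‖ / |1 - ‖z‖ ^ 2|) ^ 2 ≤
      (∫ z, η (v z) * v z / (1 - ‖z‖ ^ 2) ^ 2) * ∫ z, η (v z) * (‖a z‖ ^ 2 / v z) := by
  have hη := hΨ.continuous_deriv
  have ha := hv.hasWirtinger.continuous_left
  have hη₀ := hΨ.deriv_nonneg
  have hnorm (z : ℂ) : ‖(η (v z) : ℂ) * a z‖ = η (v z) * ‖a z‖ := by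
    rw [norm_mul, Complex.norm_real, Real.norm_of_nonneg (hη₀ _)]
  refine sq_integral_le_mul_integral ?_ ?_ ?_ (fun z => ?_) (fun z => ?_) fun z => ?_
  · exact (hv.integrable_comp_mul ht (g := fun x => η x * x) (by fun_prop)
      (fun x hx => by simp [hΨ.deriv_eq_zero_of_le x hx])
      (hv.continuousOn_inv_one_sub_norm_sq.pow 2)).congr
      (.of_forall fun z => by simp [div_eq_mul_inv])
  · exact hv.integrable_comp_mul ht hη hΨ.deriv_eq_zero_of_le hv.continuousOn_norm_sq_div
  · exact (hv.integrable_comp_mul ht hη hΨ.deriv_eq_zero_of_le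
      (ha.norm.continuousOn.mul hv.continuousOn_inv_one_sub_norm_sq.abs)).congr
      (.of_forall fun z => by dsimp only; rw [hnorm]; simp [div_eq_mul_inv, mul_assoc])
  all_goals
    rcases le_or_gt (v z) t with hz | hz
    · simp [hΨ.deriv_eq_zero_of_le _ hz]
  all_goals
    have hvz := ht.trans hz
    have := hη₀ (v z)
  · positivity
  · positivity
  · rw [hnorm, div_pow, sq_abs]
    refine le_of_eq ?_
    field_simp

theorem integral_isoperimetric_le (hv : IsHyperbolicWeight v a d e) (ht : 0 < t) (htt' : t < t')
    (hΨ : IsSmoothRamp Ψ η t t') :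
    π * (∫ z, Ψ (v z) ^ 2 / (1 - ‖z‖ ^ 2) ^ 2) + (∫ z, Ψ (v z) / (1 - ‖z‖ ^ 2) ^ 2) ^ 2 ≤
      t' * (∫ z, η (v z) / (1 - ‖z‖ ^ 2) ^ 2) * ∫ z, Ψ (v z) / (1 - ‖z‖ ^ 2) ^ 2 := by
  have hη₀ := hΨ.deriv_nonneg
  have hφ := hv.hasWirtinger.comp_real hΨ.hasDerivAt hΨ.continuous_deriv
  have hts : tsupport (fun z => Ψ (v z)) ⊆ ball 0 1 :=
    (hv.tsupport_comp_subset hΨ.eq_zero_of_le).trans fun _ hz => hv.mem_ball (ht.trans_le hz)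
  have hinv (g : ℝ → ℝ) (hg : Continuous g) (hgt : ∀ x ≤ t, g x = 0) :
      Integrable fun z => g (v z) / (1 - ‖z‖ ^ 2) ^ 2 := by
    simpa [div_eq_mul_inv] using
      hv.integrable_comp_mul ht hg hgt (hv.continuousOn_inv_one_sub_norm_sq.pow 2)
  have hle : ∫ z, η (v z) * v z / (1 - ‖z‖ ^ 2) ^ 2 ≤ t' * ∫ z, η (v z) / (1 - ‖z‖ ^ 2) ^ 2 := by
    rw [← integral_const_mul]
    have hη := hΨ.continuous_deriv
    refine integral_mono (hinv (fun x => η x * x) (by fun_prop) fun x hx => by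
      simp [hΨ.deriv_eq_zero_of_le x hx])
      ((hinv η hη hΨ.deriv_eq_zero_of_le).const_mul t') fun z => ?_
    dsimp only
    rw [← mul_div_assoc, mul_comm t']
    gcongr ?_ / _
    rcases le_or_gt t' (v z) with hz | hz
    · simp [hΨ.deriv_eq_zero_of_ge _ hz]
    · exact mul_le_mul_of_nonneg_left hz.le (hη₀ _)
  have hE₀ : 0 ≤ ∫ z, η (v z) * (‖a z‖ ^ 2 / v z) := integral_nonneg fun z => by
    rcases le_or_gt (v z) t with hz | hz
    · simp [hΨ.deriv_eq_zero_of_le _ hz]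
    · have := ht.trans hz
      have := hη₀ (v z)
      positivity
  have hD₀ : 0 ≤ ∫ z, η (v z) / (1 - ‖z‖ ^ 2) ^ 2 :=
    integral_nonneg fun z => div_nonneg (hη₀ _) (sq_nonneg _)
  calc _ ≤ (∫ z, ‖(η (v z) : ℂ) * a z‖ / |1 - ‖z‖ ^ 2|) ^ 2 :=
        hyperbolic_isoperimetric hφ (hv.hasCompactSupport_comp ht hΨ.eq_zero_of_le) hts
    _ ≤ _ := hv.sq_integral_norm_deriv_le ht hΨ
    _ ≤ _ := mul_le_mul hle (hv.integral_energy_le ht hΨ) hE₀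
      (mul_nonneg (ht.trans htt').le hD₀)

end IsHyperbolicWeight

/-- The hyperbolic measure `(1 - |z|²)⁻² dA(z)` on the unit disk. -/
noncomputable def hypMeasure : Measure ℂ :=
  ((volume : Measure ℂ).restrict (ball (0 : ℂ) 1)).withDensity
    fun z => ENNReal.ofReal (1 / (π * (1 - ‖z‖ ^ 2) ^ 2))

theorem integral_div_eq_integral_hypMeasure {g : ℂ → ℝ} (hg : ∀ z ∉ ball (0 : ℂ) 1, g z = 0) :
    ∫ z, g z / (1 - ‖z‖ ^ 2) ^ 2 = π * ∫ z, g z ∂hypMeasure := by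
  rw [hypMeasure, integral_withDensity_eq_integral_toReal_smul (by fun_prop) (by simp),
    ← integral_const_mul,
    setIntegral_eq_integral_of_forall_compl_eq_zero fun z hz => by simp [hg z hz]]
  refine integral_congr_ae (.of_forall fun z => ?_)
  simp only
  rw [ENNReal.toReal_ofReal (by positivity), smul_eq_mul, ← mul_assoc, mul_one_div,
    div_mul_cancel_left₀ Real.pi_ne_zero, div_eq_inv_mul]

theorem hypMeasure_lt_top_of_isCompact {K : Set ℂ} (hK : IsCompact K) (hKb : K ⊆ ball 0 1) :
    hypMeasure K < ⊤ := by
  rw [hypMeasure, withDensity_apply _ hK.measurableSet, Measure.restrict_restrict hK.measurableSet,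
    inter_eq_left.2 hKb]
  refine IntegrableOn.setLIntegral_lt_top (ContinuousOn.integrableOn_compact hK ?_)
  exact ContinuousOn.div (by fun_prop) (by fun_prop) fun z hz =>
    mul_ne_zero Real.pi_ne_zero (pow_ne_zero 2 (one_sub_norm_sq_pos (hKb hz)).ne')

theorem integral_le_mul_measureReal {X : Type*} [MeasurableSpace X] {μ : Measure X} {s : Set X}
    {g : X → ℝ} {C : ℝ} (hs : μ s < ⊤) (hg₀ : ∀ x ∉ s, g x = 0) (hC : ∀ x ∈ s, ‖g x‖ ≤ C) :
    ∫ x, g x ∂μ ≤ C * μ.real s := by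
  rw [← setIntegral_eq_integral_of_forall_compl_eq_zero hg₀]
  exact (Real.le_norm_self _).trans (norm_setIntegral_le_of_norm_le_const hs hC)

theorem mul_measureReal_le_integral {X : Type*} [MeasurableSpace X] {μ : Measure X} {s : Set X}
    {g : X → ℝ} {C : ℝ} (hs : μ s ≠ ⊤) (hsm : MeasurableSet s) (hg : Integrable g μ)
    (hg₀ : ∀ x, 0 ≤ g x) (hC : ∀ x ∈ s, C ≤ g x) : C * μ.real s ≤ ∫ x, g x ∂μ :=
  calc C * μ.real s = ∫ _ in s, C ∂μ := by rw [setIntegral_const, smul_eq_mul, mul_comm]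
    _ ≤ ∫ x in s, g x ∂μ := setIntegral_mono_on (integrableOn_const hs) hg.integrableOn hsm hC
    _ ≤ ∫ x, g x ∂μ := setIntegral_le_integral hg (.of_forall hg₀)

namespace IsSmoothRamp

variable {X : Type*} [MeasurableSpace X] {μ : Measure X} {v : X → ℝ} {Ψ η : ℝ → ℝ} {t t' : ℝ}

theorem norm_le_right (hΨ : IsSmoothRamp Ψ η t t') (x : ℝ) : ‖Ψ x‖ ≤ Ψ t' := by
  rw [Real.norm_of_nonneg (hΨ.nonneg x)]
  exact hΨ.le_right x

theorem integrable_comp (hΨ : IsSmoothRamp Ψ η t t') (hv : Measurable v)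
    (hfin : μ {x | t < v x} < ⊤) : Integrable (fun x => Ψ (v x)) μ :=
  (integrableOn_iff_integrable_of_support_subset (s := {x | t < v x}) fun _ hx =>
    lt_of_not_ge fun h => hx (hΨ.eq_zero_of_le _ h)).1 (Measure.integrableOn_of_bounded hfin.ne
      (hΨ.continuous.measurable.comp hv).aestronglyMeasurable
      (.of_forall fun x => hΨ.norm_le_right (v x)))

theorem mul_measureReal_le_integral_comp (hΨ : IsSmoothRamp Ψ η t t') (htt' : t ≤ t')
    (hv : Measurable v) (hfin : μ {x | t < v x} < ⊤) :
    Ψ t' * μ.real {x | t' < v x} ≤ ∫ x, Ψ (v x) ∂μ :=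
  mul_measureReal_le_integral ((measure_mono fun _ hx => htt'.trans_lt hx).trans_lt hfin).ne
    (measurableSet_lt measurable_const hv) (hΨ.integrable_comp hv hfin) (fun _ => hΨ.nonneg _)
    fun _ hx => (hΨ.eq_of_ge (le_of_lt hx)).ge

theorem sq_mul_measureReal_le_integral_comp (hΨ : IsSmoothRamp Ψ η t t') (htt' : t ≤ t')
    (hv : Measurable v) (hfin : μ {x | t < v x} < ⊤) :
    Ψ t' ^ 2 * μ.real {x | t' < v x} ≤ ∫ x, Ψ (v x) ^ 2 ∂μ := by
  have hint := hΨ.integrable_comp hv hfin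
  refine mul_measureReal_le_integral
    ((measure_mono fun _ hx => htt'.trans_lt hx).trans_lt hfin).ne
    (measurableSet_lt measurable_const hv) ?_ (fun _ => sq_nonneg _)
    fun _ hx => (congrArg (· ^ 2) (hΨ.eq_of_ge (le_of_lt hx))).ge
  simpa only [sq] using hint.mul_bdd hint.aestronglyMeasurable
    (.of_forall fun x => hΨ.norm_le_right (v x))

theorem integral_comp_le (hΨ : IsSmoothRamp Ψ η t t') (hfin : μ {x | t < v x} < ⊤) :
    ∫ x, Ψ (v x) ∂μ ≤ Ψ t' * μ.real {x | t < v x} :=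
  integral_le_mul_measureReal hfin (fun _ hx => hΨ.eq_zero_of_le _ (not_lt.1 hx))
    fun x _ => hΨ.norm_le_right (v x)

theorem integral_deriv_comp_le (hΨ : IsSmoothRamp Ψ η t t') (htt' : t ≤ t') (hv : Measurable v)
    (hfin : μ {x | t < v x} < ⊤) :
    ∫ x, η (v x) ∂μ ≤ μ.real {x | t < v x} - μ.real {x | t' < v x} := by
  have hsub : {x | t' < v x} ⊆ {x | t < v x} := fun _ hx => htt'.trans_lt hx
  rw [← measureReal_sdiff hsub (measurableSet_lt measurable_const hv) hfin.ne, ← one_mul (μ.real _)]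
  refine integral_le_mul_measureReal ((measure_mono sdiff_subset).trans_lt hfin)
    (fun x hx => ?_) fun x _ => ?_
  · by_cases h : t < v x
    · exact hΨ.deriv_eq_zero_of_ge _ (le_of_lt (by_contra fun h' => hx ⟨h, h'⟩))
    · exact hΨ.deriv_eq_zero_of_le _ (not_lt.1 h)
  · rw [Real.norm_of_nonneg (hΨ.deriv_nonneg _)]
    exact hΨ.deriv_le_one _

end IsSmoothRamp

theorem le_of_sub_le_mul_sq {f : ℝ → ℝ} {a b C : ℝ} (hab : a ≤ b)
    (hf : ∀ x y, a ≤ x → x ≤ y → y ≤ b → f y - f x ≤ C * (y - x) ^ 2) : f b ≤ f a := by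
  have hN (N : ℕ) : f b - f a ≤ C * (b - a) ^ 2 / (N + 1 : ℕ) := by
    have hN₀ : (0 : ℝ) < (N + 1 : ℕ) := by positivity
    set δ := (b - a) / (N + 1 : ℕ) with hδ
    have hδ₀ : 0 ≤ δ := div_nonneg (sub_nonneg.2 hab) hN₀.le
    have hend : a + (N + 1 : ℕ) * δ = b := by rw [hδ]; field_simp; ring
    calc f b - f a = ∑ k ∈ Finset.range (N + 1), (f (a + (k + 1 : ℕ) * δ) - f (a + k * δ)) := by
          rw [Finset.sum_range_sub fun k : ℕ => f (a + k * δ), hend]; simp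
      _ ≤ ∑ _k ∈ Finset.range (N + 1), C * δ ^ 2 := by
          refine Finset.sum_le_sum fun k hk => ?_
          have hkN : ((k + 1 : ℕ) : ℝ) ≤ (N + 1 : ℕ) :=
            Nat.cast_le.2 (Finset.mem_range.1 hk)
          refine (hf _ _ (by nlinarith [k.cast_nonneg (α := ℝ)]) (by push_cast; nlinarith)
            (hend ▸ by gcongr)).trans_eq ?_
          push_cast
          ring
      _ = C * (b - a) ^ 2 / (N + 1 : ℕ) := by
          rw [Finset.sum_const, Finset.card_range, nsmul_eq_mul, hδ]
          field_simp
  have hlim :=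
    (tendsto_const_div_atTop_nhds_zero_nat (C * (b - a) ^ 2)).comp (tendsto_add_atTop_nat 1)
  exact sub_nonpos.1 (ge_of_tendsto' hlim hN)

/-- The hypothesis is a discrete form of `A (1 + A) ≤ -t A A'`, that is `(t (1 + A))' ≤ 0`. -/
theorem mul_one_add_le_of_discrete_deriv_le {A : ℝ → ℝ} (hA : AntitoneOn A (Ioi 0))
    (hderiv : ∀ s s', 0 < s → s < s' →
      (s' - s) * (A s' * (1 + A s')) ≤ s' * (A s - A s') * A s)
    {t T : ℝ} (ht : 0 < t) (htT : t ≤ T) (hT : 0 < A T) : T * (1 + A T) ≤ t * (1 + A t) := by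
  set M := 1 + A t
  refine le_of_sub_le_mul_sq (f := fun s => s * (1 + A s)) (C := 2 * M ^ 2 / (t * A T)) htT
    fun s s' hts hss' hsT => ?_
  have hs : 0 < s := ht.trans_le hts
  have hs' : 0 < s' := hs.trans_le hss'
  have hAT : A T ≤ A s' := hA hs' (ht.trans_le htT) hsT
  have hAs' : A s' ≤ A s := hA hs hs' hss'
  have hAs : A s ≤ A t := hA ht hs hts
  rcases le_or_gt (s' * (1 + A s')) (s * (1 + A s)) with hle | hlt
  · exact (sub_nonpos.2 hle).trans (by positivity)
  have hss : s < s' := hss'.lt_of_ne fun h => by simp [h] at hlt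
  have hden : t * A T ≤ s' * A s := by gcongr; exacts [hts.trans hss', hAT.trans hAs']
  rw [div_mul_eq_mul_div, le_div_iff₀ (by positivity)]
  calc (s' * (1 + A s') - s * (1 + A s)) * (t * A T)
      ≤ (s' * (1 + A s') - s * (1 + A s)) * (s' * A s) :=
        mul_le_mul_of_nonneg_left hden (sub_pos.2 hlt).le
    _ = (s' - s) * (1 + A s') * (s' * A s) - s * (s' * (A s - A s') * A s) := by ring
    _ ≤ (s' - s) * (1 + A s') * (s' * A s) - s * ((s' - s) * (A s' * (1 + A s'))) := by
        linarith [mul_le_mul_of_nonneg_left (hderiv s s' hs hss) hs.le]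
    _ = (s' - s) * (1 + A s') * (s * (A s - A s') + (s' - s) * A s) := by ring
    _ ≤ (s' - s) * (1 + A s') * ((s' - s) * (1 + A s') + (s' - s) * A s) := by
        have := sub_pos.2 hss
        have : 0 < 1 + A s' := by linarith
        gcongr ?_ * (?_ + _)
        linarith
    _ = (s' - s) ^ 2 * ((1 + A s') * (1 + A s' + A s)) := by ring
    _ ≤ (s' - s) ^ 2 * (M * (2 * M)) := by
        gcongr <;> linarith
    _ = 2 * M ^ 2 * (s' - s) ^ 2 := by ring

namespace IsHyperbolicWeight

variable {v : ℂ → ℝ} {a d e : ℂ → ℂ} {Ψ η : ℝ → ℝ} {t t' : ℝ}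

theorem hypMeasure_lt_top (hv : IsHyperbolicWeight v a d e) (ht : 0 < t) :
    hypMeasure {z | t < v z} < ⊤ :=
  (measure_mono (t := {z | t ≤ v z}) fun _ (hz : t < _) => hz.le).trans_lt
    (hypMeasure_lt_top_of_isCompact (hv.isCompact_setOf_le ht) fun _ hz =>
      hv.mem_ball (ht.trans_le hz))

theorem antitoneOn_hypMeasure (hv : IsHyperbolicWeight v a d e) :
    AntitoneOn (fun t => hypMeasure.real {z | t < v z}) (Ioi 0) :=
  fun _ ht _ _ htt' => measureReal_mono (fun _ hz => htt'.trans_lt hz) (hv.hypMeasure_lt_top ht).ne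

theorem integral_hypMeasure_isoperimetric_le (hv : IsHyperbolicWeight v a d e) (ht : 0 < t)
    (htt' : t < t') (hΨ : IsSmoothRamp Ψ η t t') :
    (∫ z, Ψ (v z) ^ 2 ∂hypMeasure) + (∫ z, Ψ (v z) ∂hypMeasure) ^ 2 ≤
      t' * (∫ z, η (v z) ∂hypMeasure) * ∫ z, Ψ (v z) ∂hypMeasure := by
  have hball {g : ℝ → ℝ} (hg : ∀ x ≤ t, g x = 0) (z : ℂ) (hz : z ∉ ball (0 : ℂ) 1) : g (v z) = 0 :=
    hg _ (le_of_not_gt fun h => hz (hv.mem_ball (ht.trans h)))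
  have h := hv.integral_isoperimetric_le ht htt' hΨ
  rw [integral_div_eq_integral_hypMeasure (hball hΨ.eq_zero_of_le),
    integral_div_eq_integral_hypMeasure (hball hΨ.deriv_eq_zero_of_le),
    integral_div_eq_integral_hypMeasure (g := fun z => Ψ (v z) ^ 2)
      (hball (g := fun x => Ψ x ^ 2) fun x hx => by simp [hΨ.eq_zero_of_le x hx])] at h
  refine le_of_mul_le_mul_left ?_ (by positivity : 0 < π ^ 2)
  linarith

theorem ramp_mul_hypMeasure_le (hv : IsHyperbolicWeight v a d e) (ht : 0 < t) (htt' : t < t')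
    (hΨ : IsSmoothRamp Ψ η t t') (hJ : 0 < Ψ t') :
    Ψ t' * (hypMeasure.real {z | t' < v z} * (1 + hypMeasure.real {z | t' < v z})) ≤
      t' * (hypMeasure.real {z | t < v z} - hypMeasure.real {z | t' < v z}) *
        hypMeasure.real {z | t < v z} := by
  have hfin := hv.hypMeasure_lt_top ht
  have hvm := hv.continuous.measurable
  have hlower := hΨ.mul_measureReal_le_integral_comp htt'.le hvm hfin
  have hη := hΨ.integral_deriv_comp_le htt'.le hvm hfin
  have hη₀ : 0 ≤ ∫ z, η (v z) ∂hypMeasure := integral_nonneg fun z => hΨ.deriv_nonneg _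
  have hΨ₀ : 0 ≤ ∫ z, Ψ (v z) ∂hypMeasure := integral_nonneg fun z => hΨ.nonneg _
  have ht' := ht.trans htt'
  set A := hypMeasure.real {z | t < v z}
  set A' := hypMeasure.real {z | t' < v z}
  refine le_of_mul_le_mul_left ?_ hJ
  calc Ψ t' * (Ψ t' * (A' * (1 + A'))) = Ψ t' ^ 2 * A' + (Ψ t' * A') ^ 2 := by ring
    _ ≤ (∫ z, Ψ (v z) ^ 2 ∂hypMeasure) + (∫ z, Ψ (v z) ∂hypMeasure) ^ 2 := by
      gcongr
      exact hΨ.sq_mul_measureReal_le_integral_comp htt'.le hvm hfin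
    _ ≤ t' * (∫ z, η (v z) ∂hypMeasure) * ∫ z, Ψ (v z) ∂hypMeasure :=
      hv.integral_hypMeasure_isoperimetric_le ht htt' hΨ
    _ ≤ t' * (A - A') * (Ψ t' * A) := by
      gcongr
      · exact mul_nonneg ht'.le (hη₀.trans hη)
      · exact hΨ.integral_comp_le hfin
    _ = Ψ t' * (t' * (A - A') * A) := by ring

theorem sub_mul_hypMeasure_le (hv : IsHyperbolicWeight v a d e) (ht : 0 < t) (htt' : t < t') :
    (t' - t) * (hypMeasure.real {z | t' < v z} * (1 + hypMeasure.real {z | t' < v z})) ≤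
      t' * (hypMeasure.real {z | t < v z} - hypMeasure.real {z | t' < v z}) *
        hypMeasure.real {z | t < v z} := by
  have hA : hypMeasure.real {z | t' < v z} ≤ hypMeasure.real {z | t < v z} :=
    hv.antitoneOn_hypMeasure ht (ht.trans htt') htt'.le
  refine mul_le_of_forall_lt_of_nonneg (sub_pos.2 htt').le (mul_nonneg (mul_nonneg
    (ht.trans htt').le (sub_nonneg.2 hA)) measureReal_nonneg) fun J hJ hJt b _ hb => ?_
  obtain ⟨J', hJJ', hJ't⟩ := exists_between hJt
  obtain ⟨Ψ, η, hΨ, hΨJ⟩ := exists_isSmoothRamp hJ't (hJ.trans hJJ'.le)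
  have hJΨ : J < Ψ t' := hJJ'.trans_le hΨJ
  refine le_trans ?_ (hv.ramp_mul_hypMeasure_le ht htt' hΨ (hJ.trans_lt hJΨ))
  gcongr
  exact hJ.trans hJΨ.le

theorem mul_one_add_hypMeasure_le (hv : IsHyperbolicWeight v a d e) (ht : 0 < t) (htt' : t ≤ t')
    (hpos : 0 < hypMeasure.real {z | t' < v z}) :
    t' * (1 + hypMeasure.real {z | t' < v z}) ≤ t * (1 + hypMeasure.real {z | t < v z}) :=
  mul_one_add_le_of_discrete_deriv_le hv.antitoneOn_hypMeasure
    (fun _ _ => hv.sub_mul_hypMeasure_le) ht htt' hpos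

end IsHyperbolicWeight

/-- The regularisation `(|f|² + ε)^c (1 - |z|²)` of the weight `|f|^(2c) (1 - |z|²)`, which is
smooth also where `f` vanishes. -/
noncomputable def regWeight (f : ℂ → ℂ) (c ε : ℝ) (z : ℂ) : ℝ :=
  (‖f z‖ ^ 2 + ε) ^ c * (1 - ‖z‖ ^ 2)

section RegWeight

variable {f : ℂ → ℂ} {c ε : ℝ} {z : ℂ}

theorem norm_sq_add_pos (hε : 0 < ε) (z : ℂ) : 0 < ‖f z‖ ^ 2 + ε := by positivity

theorem ofReal_norm_sq_add (f : ℂ → ℂ) (ε : ℝ) (z : ℂ) :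
    ((‖f z‖ ^ 2 + ε : ℝ) : ℂ) = f z * conj (f z) + ε := by
  rw [Complex.mul_conj, Complex.normSq_eq_norm_sq, Complex.ofReal_add]

theorem mul_conj_add_ne_zero (hε : 0 < ε) (z : ℂ) : f z * conj (f z) + ε ≠ 0 := by
  rw [← ofReal_norm_sq_add, Complex.ofReal_ne_zero]
  exact (norm_sq_add_pos hε z).ne'

theorem mem_ball_of_regWeight_pos (hε : 0 < ε) (hz : 0 < regWeight f c ε z) :
    z ∈ ball (0 : ℂ) 1 := by
  have h := pos_of_mul_pos_right hz (Real.rpow_nonneg (norm_sq_add_pos hε z).le c)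
  rw [mem_ball_zero_iff]
  nlinarith [norm_nonneg z]

theorem continuous_deriv_of_differentiable (hf : Differentiable ℂ f) : Continuous (deriv f) :=
  (hf.contDiff (n := 1)).continuous_deriv le_rfl

theorem hasWirtingerAt_mul_conj_add (hf : Differentiable ℂ f) (z : ℂ) :
    HasWirtingerAt (fun z => f z * conj (f z) + ε) (deriv f z * conj (f z))
      (f z * conj (deriv f z)) z :=
  ((HasWirtingerAt.of_hasDerivAt (hf z).hasDerivAt).mul
    (HasWirtingerAt.of_hasDerivAt (hf z).hasDerivAt).conj_comp).add .const |>.congr_deriv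
    (by simp) (by simp)

theorem continuous_norm_sq_add_rpow (hf : Continuous f) (hε : 0 < ε) (m : ℝ) :
    Continuous fun z => (‖f z‖ ^ 2 + ε) ^ m :=
  Continuous.rpow_const (by fun_prop) fun z => .inl (norm_sq_add_pos hε z).ne'

theorem hasDerivAt_add_rpow (hε : 0 < ε) (m : ℝ) {t : ℝ} (ht : 0 ≤ t) :
    HasDerivAt (fun t => (t + ε) ^ m) (m * (t + ε) ^ (m - 1)) t := by
  simpa using ((hasDerivAt_id t).add_const ε).rpow_const (p := m)
    (.inl (add_pos_of_nonneg_of_pos ht hε).ne')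

theorem hasWirtinger_comp_norm_sq {φ φ' : ℝ → ℝ} (hf : Differentiable ℂ f)
    (hφ : ∀ t, 0 ≤ t → HasDerivAt φ (φ' t) t) (hφ' : ContinuousOn φ' (Ici 0)) :
    HasWirtinger (fun z => (φ (‖f z‖ ^ 2) : ℂ))
      (fun z => φ' (‖f z‖ ^ 2) * (deriv f z * conj (f z)))
      fun z => φ' (‖f z‖ ^ 2) * (f z * conj (deriv f z)) := by
  have hcf := hf.continuous
  have hf' := continuous_deriv_of_differentiable hf
  have hcont : Continuous fun z => (φ' (‖f z‖ ^ 2) : ℂ) :=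
    Complex.continuous_ofReal.comp (hφ'.comp_continuous (by fun_prop) fun z => sq_nonneg ‖f z‖)
  refine ⟨fun z => HasWirtingerAt.comp_real (v := fun z => ‖f z‖ ^ 2) ?_ (hφ _ (sq_nonneg _)),
    by fun_prop, by fun_prop⟩
  simpa [← Complex.mul_conj'] using hasWirtingerAt_mul_conj_add (ε := 0) hf z

theorem hasWirtinger_norm_sq_add_rpow (hf : Differentiable ℂ f) (hε : 0 < ε) (m : ℝ) :
    HasWirtinger (fun z => (((‖f z‖ ^ 2 + ε) ^ m : ℝ) : ℂ))
      (fun z => (m * (‖f z‖ ^ 2 + ε) ^ (m - 1) : ℝ) * (deriv f z * conj (f z)))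
      fun z => (m * (‖f z‖ ^ 2 + ε) ^ (m - 1) : ℝ) * (f z * conj (deriv f z)) := by
  refine hasWirtinger_comp_norm_sq hf (fun t ht => hasDerivAt_add_rpow hε m ht) fun t ht => ?_
  exact ((hasDerivAt_add_rpow hε (m - 1) ht).const_mul m).continuousAt.continuousWithinAt

theorem hasWirtingerAt_mul_conj_deriv_div (hf : Differentiable ℂ f) (hε : 0 < ε) (z : ℂ) :
    HasWirtingerAt (fun z => f z * conj (deriv f z) / (f z * conj (f z) + ε))
      (ε * (deriv f z * conj (deriv f z)) / (f z * conj (f z) + ε) ^ 2)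
      (f z * conj (deriv (deriv f) z) / (f z * conj (f z) + ε)
        - (f z * conj (deriv f z)) ^ 2 / (f z * conj (f z) + ε) ^ 2) z := by
  have hne := mul_conj_add_ne_zero (f := f) hε z
  have hf' : Differentiable ℂ (deriv f) := hf.deriv
  have hinv := (hasWirtingerAt_mul_conj_add (ε := ε) hf z).comp_hasDerivAt (hasDerivAt_inv hne)
  simp only [div_eq_mul_inv]
  refine (((HasWirtingerAt.of_hasDerivAt (hf z).hasDerivAt).mul
    (HasWirtingerAt.of_hasDerivAt (hf' z).hasDerivAt).conj_comp).mul hinv).congr_deriv ?_ ?_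
  · field_simp; simp; ring
  · field_simp; simp; ring

theorem hasWirtingerAt_div_one_sub_mul_conj (hz : z ∈ ball (0 : ℂ) 1) :
    HasWirtingerAt (fun z => z / (1 - z * conj z)) (((1 - z * conj z) ^ 2)⁻¹)
      (z ^ 2 / (1 - z * conj z) ^ 2) z := by
  have hne := one_sub_mul_conj_ne_zero hz
  have hinv := (HasWirtinger.one_sub_mul_conj.hasWirtingerAt z).comp_hasDerivAt (hasDerivAt_inv hne)
  simp only [div_eq_mul_inv]
  refine (HasWirtingerAt.id.mul hinv).congr_deriv ?_ ?_
  · field_simp; ring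
  · field_simp; ring

/-- The Wirtinger derivative `∂` of `regWeight f c ε`. -/
noncomputable def regWeightWirtinger (f : ℂ → ℂ) (c ε : ℝ) (z : ℂ) : ℂ :=
  (c * (‖f z‖ ^ 2 + ε) ^ (c - 1) : ℝ) * (deriv f z * conj (f z)) * (1 - z * conj z)
    + ((‖f z‖ ^ 2 + ε) ^ c : ℝ) * -conj z

theorem conj_regWeightWirtinger (f : ℂ → ℂ) (c ε : ℝ) (z : ℂ) :
    conj (regWeightWirtinger f c ε z) =
      (c * (‖f z‖ ^ 2 + ε) ^ (c - 1) : ℝ) * (f z * conj (deriv f z)) * (1 - z * conj z)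
        + ((‖f z‖ ^ 2 + ε) ^ c : ℝ) * -z := by
  simp only [regWeightWirtinger, map_add, map_mul, map_sub, map_neg, map_one, Complex.conj_conj,
    Complex.conj_ofReal]
  ring

theorem hasWirtinger_regWeight (hf : Differentiable ℂ f) (hε : 0 < ε) :
    HasWirtinger (fun z => (regWeight f c ε z : ℂ)) (regWeightWirtinger f c ε)
      fun z => conj (regWeightWirtinger f c ε z) := by
  simp only [conj_regWeightWirtinger, regWeight, Complex.ofReal_mul _ (1 - _),
    ofReal_one_sub_norm_sq]
  exact (hasWirtinger_norm_sq_add_rpow hf hε c).mul .one_sub_mul_conj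

theorem conj_regWeightWirtinger_div (hε : 0 < ε) (hz : z ∈ ball (0 : ℂ) 1) :
    conj (regWeightWirtinger f c ε z) / regWeight f c ε z =
      c * (f z * conj (deriv f z) / (f z * conj (f z) + ε)) - z / (1 - z * conj z) := by
  have hP := norm_sq_add_pos (f := f) hε z
  have hPc : (((‖f z‖ ^ 2 + ε) ^ c : ℝ) : ℂ) ≠ 0 :=
    Complex.ofReal_ne_zero.2 (Real.rpow_pos_of_pos hP c).ne'
  have hne := one_sub_mul_conj_ne_zero hz
  have hne' := mul_conj_add_ne_zero (f := f) hε z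
  rw [conj_regWeightWirtinger, regWeight, Real.rpow_sub_one hP.ne',
    Complex.ofReal_mul _ (1 - _), ofReal_one_sub_norm_sq,
    Complex.ofReal_mul, Complex.ofReal_div, ofReal_norm_sq_add]
  field_simp
  ring

theorem isHyperbolicWeight_regWeight (hf : Differentiable ℂ f) (hc : 0 ≤ c) (hε : 0 < ε) :
    IsHyperbolicWeight (regWeight f c ε) (regWeightWirtinger f c ε)
      (fun z => c * (ε * (deriv f z * conj (deriv f z)) / (f z * conj (f z) + ε) ^ 2)
        - ((1 - z * conj z) ^ 2)⁻¹)
      fun z => c * (f z * conj (deriv (deriv f) z) / (f z * conj (f z) + ε)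
        - (f z * conj (deriv f z)) ^ 2 / (f z * conj (f z) + ε) ^ 2)
        - z ^ 2 / (1 - z * conj z) ^ 2 := by
  have hcf := hf.continuous
  have hf' := continuous_deriv_of_differentiable hf
  have hf'' := continuous_deriv_of_differentiable hf.deriv
  have hpos {z : ℂ} (hz : 0 < regWeight f c ε z) : 1 - z * conj z ≠ 0 :=
    one_sub_mul_conj_ne_zero (mem_ball_of_regWeight_pos hε hz)
  have hne := mul_conj_add_ne_zero (f := f) hε
  refine ⟨hasWirtinger_regWeight hf hε, fun z => mem_ball_of_regWeight_pos hε, fun z hz => ?_,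
    ?_, ?_, fun z _ => ?_⟩
  · have hzb := mem_ball_of_regWeight_pos hε hz
    have h := (HasWirtingerAt.const (c := (c : ℂ))).mul (hasWirtingerAt_mul_conj_deriv_div hf hε z)
      |>.sub (hasWirtingerAt_div_one_sub_mul_conj hzb)
    refine HasFDerivAt.congr_of_eventuallyEq (h.congr_deriv (by simp) (by simp)) ?_
    filter_upwards [isOpen_ball.mem_nhds hzb] with w hw
    exact conj_regWeightWirtinger_div hε hw
  · fun_prop (disch := first | exact fun z hz => pow_ne_zero 2 (hpos hz) | simp [hne])
  · fun_prop (disch := first | exact fun z hz => pow_ne_zero 2 (hpos hz) | simp [hne])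
  · rw [← ofReal_norm_sq_add, ← ofReal_one_sub_norm_sq, Complex.mul_conj]
    norm_cast
    have := Complex.normSq_nonneg (deriv f z)
    linarith [show 0 ≤ c * (ε * Complex.normSq (deriv f z) / (‖f z‖ ^ 2 + ε) ^ 2) by positivity]

end RegWeight

section Moments

variable {A f g : ℝ → ℝ} {a b c s τ₀ : ℝ}

theorem rpow_sub_one_eq_mul {τ : ℝ} (hτ : 0 < τ) (a b : ℝ) :
    τ ^ (b - 1) = τ ^ (a - 1) * τ ^ (b - a) := by
  rw [← Real.rpow_add hτ, add_comm, sub_add_sub_cancel]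

theorem max_div_sub_one_mul_rpow_eqOn (c s : ℝ) :
    EqOn (fun τ => max (c / τ - 1) 0 * τ ^ (s - 1))
      ((Ioc 0 c).indicator fun τ => c * τ ^ (s - 2) - τ ^ (s - 1)) (Ioi 0) := by
  intro τ (hτ : 0 < τ)
  dsimp only
  by_cases h : τ ≤ c
  · rw [indicator_of_mem (show τ ∈ Ioc 0 c from ⟨hτ, h⟩),
      max_eq_left (sub_nonneg.2 ((one_le_div hτ).2 h)), show s - 1 = s - 2 + 1 by ring,
      Real.rpow_add_one hτ.ne']
    field_simp
  · rw [indicator_of_notMem fun h' : τ ∈ Ioc 0 c => h h'.2, max_eq_right, zero_mul]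
    exact sub_nonpos.2 ((div_le_one hτ).2 (not_le.1 h).le)

theorem integrableOn_max_div_sub_one_mul_rpow (hc : 0 ≤ c) (hs : 1 < s) :
    IntegrableOn (fun τ => max (c / τ - 1) 0 * τ ^ (s - 1)) (Ioi 0) := by
  refine IntegrableOn.congr_fun (Integrable.integrableOn ((integrable_indicator_iff
    measurableSet_Ioc).2 ?_)) (max_div_sub_one_mul_rpow_eqOn c s).symm measurableSet_Ioi
  rw [← intervalIntegrable_iff_integrableOn_Ioc_of_le hc]
  exact ((intervalIntegral.intervalIntegrable_rpow' (by linarith)).const_mul c).sub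
    (intervalIntegral.intervalIntegrable_rpow' (by linarith))

theorem integral_max_div_sub_one_mul_rpow (hc : 0 ≤ c) (hs : 1 < s) :
    ∫ τ in Ioi 0, max (c / τ - 1) 0 * τ ^ (s - 1) = c ^ s / (s * (s - 1)) := by
  have hs₁ : s - 1 ≠ 0 := by linarith
  have hs₀ : s ≠ 0 := by linarith
  have hpow : c * c ^ (s - 1) = c ^ s := by
    rcases hc.eq_or_lt with rfl | hc
    · rw [zero_mul, Real.zero_rpow hs₀]
    · rw [Real.rpow_sub_one hc.ne', mul_div_cancel₀ _ hc.ne']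
  rw [setIntegral_congr_fun measurableSet_Ioi (max_div_sub_one_mul_rpow_eqOn c s),
    setIntegral_indicator measurableSet_Ioc, inter_eq_right.2 fun x hx => hx.1,
    ← intervalIntegral.integral_of_le hc,
    intervalIntegral.integral_sub
      ((intervalIntegral.intervalIntegrable_rpow' (by linarith)).const_mul c)
      (intervalIntegral.intervalIntegrable_rpow' (by linarith)),
    intervalIntegral.integral_const_mul, integral_rpow (.inl (by linarith)),
    integral_rpow (.inl (by linarith)), show s - 2 + 1 = s - 1 by ring, sub_add_cancel,
    Real.zero_rpow hs₁, Real.zero_rpow hs₀, sub_zero, sub_zero, ← mul_div_assoc, hpow]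
  field_simp
  ring

theorem integral_mul_rpow_le_of_crossing (hab : a ≤ b) (hτ₀ : 0 ≤ τ₀)
    (hfa : IntegrableOn (fun τ => f τ * τ ^ (a - 1)) (Ioi 0))
    (hga : IntegrableOn (fun τ => g τ * τ ^ (a - 1)) (Ioi 0))
    (hfb : IntegrableOn (fun τ => f τ * τ ^ (b - 1)) (Ioi 0))
    (hgb : IntegrableOn (fun τ => g τ * τ ^ (b - 1)) (Ioi 0))
    (hlt : ∀ τ, 0 < τ → τ < τ₀ → g τ ≤ f τ) (hgt : ∀ τ, τ₀ < τ → f τ ≤ g τ)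
    (h : ∫ τ in Ioi 0, f τ * τ ^ (a - 1) ≤ ∫ τ in Ioi 0, g τ * τ ^ (a - 1)) :
    ∫ τ in Ioi 0, f τ * τ ^ (b - 1) ≤ ∫ τ in Ioi 0, g τ * τ ^ (b - 1) := by
  have hcross {τ : ℝ} (hτ : 0 < τ) : (f τ - g τ) * τ ^ (b - a) ≤ (f τ - g τ) * τ₀ ^ (b - a) := by
    have hba := sub_nonneg.2 hab
    rcases lt_trichotomy τ τ₀ with h | rfl | h
    · exact mul_le_mul_of_nonneg_left (Real.rpow_le_rpow hτ.le h.le hba) (sub_nonneg.2 (hlt τ hτ h))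
    · rfl
    · exact mul_le_mul_of_nonpos_left (Real.rpow_le_rpow hτ₀ h.le hba) (sub_nonpos.2 (hgt τ h))
  rw [← sub_nonpos, ← integral_sub hfb hgb]
  calc ∫ τ in Ioi 0, (f τ * τ ^ (b - 1) - g τ * τ ^ (b - 1))
      ≤ ∫ τ in Ioi 0, (f τ * τ ^ (a - 1) - g τ * τ ^ (a - 1)) * τ₀ ^ (b - a) := by
        refine setIntegral_mono_on (hfb.sub hgb) ((hfa.sub hga).mul_const _) measurableSet_Ioi
          fun τ (hτ : 0 < τ) => ?_
        have := mul_le_mul_of_nonneg_right (hcross hτ) (Real.rpow_nonneg hτ.le (a - 1))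
        rw [rpow_sub_one_eq_mul hτ a b]
        linarith
    _ = ((∫ τ in Ioi 0, f τ * τ ^ (a - 1)) - ∫ τ in Ioi 0, g τ * τ ^ (a - 1)) * τ₀ ^ (b - a) := by
        rw [integral_mul_const, integral_sub hfa hga]
    _ ≤ 0 := mul_nonpos_of_nonpos_of_nonneg (sub_nonpos.2 h) (Real.rpow_nonneg hτ₀ _)

theorem le_one_add_of_pos (hA₀ : ∀ t, 0 ≤ A t)
    (hA : ∀ ⦃t t'⦄, 0 < t → t ≤ t' → 0 < A t' → t' * (1 + A t') ≤ t * (1 + A t))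
    {t : ℝ} (ht : 0 < A t) : t ≤ 1 + A 1 := by
  rcases le_total t 1 with h | h
  · linarith [hA₀ 1]
  · nlinarith [hA one_pos h ht]

theorem exists_crossing (hA₀ : ∀ t, 0 ≤ A t)
    (hA : ∀ ⦃t t'⦄, 0 < t → t ≤ t' → 0 < A t' → t' * (1 + A t') ≤ t * (1 + A t)) (c : ℝ) :
    ∃ τ₀, 0 ≤ τ₀ ∧ (∀ τ, 0 < τ → τ < τ₀ → max (c / τ - 1) 0 ≤ A τ) ∧
      ∀ τ, τ₀ < τ → A τ ≤ max (c / τ - 1) 0 := by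
  let S : Set ℝ := {τ | 0 < τ ∧ max (c / τ - 1) 0 < A τ}
  have hbdd : BddAbove S := ⟨1 + A 1, fun τ hτ =>
    le_one_add_of_pos hA₀ hA ((le_max_right _ _).trans_lt hτ.2)⟩
  have hS₀ : 0 ≤ sSup S := Real.sSup_nonneg fun τ hτ => hτ.1.le
  refine ⟨sSup S, hS₀, fun τ hτ hτS => ?_, fun τ hτ => le_of_not_gt fun h =>
    hτ.not_ge (le_csSup hbdd ⟨hS₀.trans_lt hτ, h⟩)⟩
  have hne : S.Nonempty := nonempty_iff_ne_empty.2 fun h => by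
    rw [h, Real.sSup_empty] at hτS
    exact hτS.not_gt hτ
  obtain ⟨σ, ⟨hσ, hσA⟩, hτσ⟩ := exists_lt_of_lt_csSup hne hτS
  have hmul := hA hτ hτσ.le ((le_max_right _ _).trans_lt hσA)
  have hcσ := (le_max_left _ _).trans_lt hσA
  rw [sub_lt_iff_lt_add', div_lt_iff₀ hσ] at hcσ
  refine max_le ?_ (hA₀ τ)
  rw [sub_le_iff_le_add', div_le_iff₀ hτ]
  linarith

theorem integrableOn_mul_rpow_of_mul_one_add_le (hA₀ : ∀ t, 0 ≤ A t) (hAm : Measurable A)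
    (hA : ∀ ⦃t t'⦄, 0 < t → t ≤ t' → 0 < A t' → t' * (1 + A t') ≤ t * (1 + A t)) (hab : a ≤ b)
    (hint : IntegrableOn (fun τ => A τ * τ ^ (a - 1)) (Ioi 0)) :
    IntegrableOn (fun τ => A τ * τ ^ (b - 1)) (Ioi 0) := by
  refine (hint.const_mul ((1 + A 1) ^ (b - a))).mono' (by fun_prop) ?_
  refine (ae_restrict_iff' measurableSet_Ioi).2 (.of_forall fun τ (hτ : 0 < τ) => ?_)
  have hpos : 0 ≤ A τ * τ ^ (a - 1) := mul_nonneg (hA₀ τ) (Real.rpow_nonneg hτ.le _)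
  rw [rpow_sub_one_eq_mul hτ a b, ← mul_assoc,
    Real.norm_of_nonneg (mul_nonneg hpos (Real.rpow_nonneg hτ.le _)), mul_comm]
  rcases (hA₀ τ).eq_or_lt with h | h
  · simp [← h]
  · exact mul_le_mul_of_nonneg_right (Real.rpow_le_rpow hτ.le (le_one_add_of_pos hA₀ hA h)
      (sub_nonneg.2 hab)) hpos

/-- The extremal case is `A τ = max (c / τ - 1) 0`, for which `τ (1 + A τ)` is constant on the
support of `A`. Any other `A` crosses the extremal function with the same `a`-th moment once, from
above to below, and so has a smaller `b`-th moment. -/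
theorem moment_le_of_mul_one_add_le (hA₀ : ∀ t, 0 ≤ A t)
    (hA : ∀ ⦃t t'⦄, 0 < t → t ≤ t' → 0 < A t' → t' * (1 + A t') ≤ t * (1 + A t))
    (ha : 1 < a) (hab : a ≤ b)
    (hinta : IntegrableOn (fun τ => A τ * τ ^ (a - 1)) (Ioi 0))
    (hintb : IntegrableOn (fun τ => A τ * τ ^ (b - 1)) (Ioi 0)) :
    (b * (b - 1) * ∫ τ in Ioi 0, A τ * τ ^ (b - 1)) ^ (1 / b) ≤
      (a * (a - 1) * ∫ τ in Ioi 0, A τ * τ ^ (a - 1)) ^ (1 / a) := by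
  have hb : 1 < b := ha.trans_le hab
  have ha₁ : 0 < a * (a - 1) := mul_pos (by linarith) (by linarith)
  have hb₁ : 0 < b * (b - 1) := mul_pos (by linarith) (by linarith)
  have hmoment (s : ℝ) : 0 ≤ ∫ τ in Ioi 0, A τ * τ ^ (s - 1) :=
    setIntegral_nonneg measurableSet_Ioi fun τ (hτ : 0 < τ) =>
      mul_nonneg (hA₀ τ) (Real.rpow_nonneg hτ.le _)
  set c := (a * (a - 1) * ∫ τ in Ioi 0, A τ * τ ^ (a - 1)) ^ (1 / a) with hc_def
  have hc : 0 ≤ c := Real.rpow_nonneg (mul_nonneg ha₁.le (hmoment a)) _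
  have hca : ∫ τ in Ioi 0, A τ * τ ^ (a - 1) = c ^ a / (a * (a - 1)) := by
    rw [hc_def, ← Real.rpow_mul (mul_nonneg ha₁.le (hmoment a)), one_div_mul_cancel (by linarith),
      Real.rpow_one, mul_div_cancel_left₀ _ ha₁.ne']
  obtain ⟨τ₀, hτ₀, hlt, hgt⟩ := exists_crossing hA₀ hA c
  have hle := integral_mul_rpow_le_of_crossing hab hτ₀ hinta
    (integrableOn_max_div_sub_one_mul_rpow hc ha) hintb
    (integrableOn_max_div_sub_one_mul_rpow hc hb) hlt hgt
    (hca.trans (integral_max_div_sub_one_mul_rpow hc ha).symm).le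
  rw [integral_max_div_sub_one_mul_rpow hc hb, le_div_iff₀' hb₁] at hle
  calc _ ≤ (c ^ b) ^ (1 / b) :=
        Real.rpow_le_rpow (mul_nonneg hb₁.le (hmoment b)) hle (by positivity)
    _ = c := by rw [← Real.rpow_mul hc, mul_one_div_cancel (by linarith), Real.rpow_one]

end Moments

section Distribution

variable {X : Type*} [MeasurableSpace X] {μ : Measure X} {v : X → ℝ} {a b s : ℝ}

theorem lintegral_rpow_eq_lintegral_measureReal_mul (hv : AEMeasurable v μ) (hv₀ : 0 ≤ᵐ[μ] v)
    (hfin : ∀ t, 0 < t → μ {x | t < v x} < ⊤) (hs : 0 < s) :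
    ∫⁻ x, ENNReal.ofReal (v x ^ s) ∂μ = ENNReal.ofReal s *
      ∫⁻ t in Ioi 0, ENNReal.ofReal (μ.real {x | t < v x} * t ^ (s - 1)) := by
  rw [lintegral_rpow_eq_lintegral_meas_lt_mul _ hv₀ hv hs]
  congr 1
  refine setLIntegral_congr_fun measurableSet_Ioi fun t ht => ?_
  rw [ENNReal.ofReal_mul measureReal_nonneg, ofReal_measureReal (hfin t ht).ne]

theorem measureReal_mul_rpow_nonneg (s : ℝ) :
    0 ≤ᵐ[volume.restrict (Ioi 0)] fun t => μ.real {x | t < v x} * t ^ (s - 1) :=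
  (ae_restrict_mem measurableSet_Ioi).mono fun _ (ht : 0 < _) =>
    mul_nonneg measureReal_nonneg (Real.rpow_nonneg ht.le _)

theorem measurable_measureReal_setOf_lt (μ : Measure X) (v : X → ℝ) :
    Measurable fun t => μ.real {x | t < v x} :=
  Measurable.ennreal_toReal (f := fun t => μ {x | t < v x}) <|
    Antitone.measurable fun _ _ hst => measure_mono fun _ hx => lt_of_le_of_lt hst hx

theorem ofReal_mul_lintegral_rpow_eq (hv : AEMeasurable v μ) (hv₀ : 0 ≤ᵐ[μ] v)
    (hfin : ∀ t, 0 < t → μ {x | t < v x} < ⊤) (hs : 1 < s)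
    (hint : IntegrableOn (fun t => μ.real {x | t < v x} * t ^ (s - 1)) (Ioi 0)) :
    (ENNReal.ofReal (s - 1) * ∫⁻ x, ENNReal.ofReal (v x ^ s) ∂μ) ^ (1 / s) = ENNReal.ofReal
      ((s * (s - 1) * ∫ t in Ioi 0, μ.real {x | t < v x} * t ^ (s - 1)) ^ (1 / s)) := by
  have hs₁ : 0 ≤ s - 1 := by linarith
  have hs₀ : 0 < s := by linarith
  have hnonneg := measureReal_mul_rpow_nonneg (μ := μ) (v := v) s
  have := integral_nonneg_of_ae hnonneg
  rw [lintegral_rpow_eq_lintegral_measureReal_mul hv hv₀ hfin hs₀,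
    ← ofReal_integral_eq_lintegral_ofReal hint hnonneg, ← ENNReal.ofReal_mul hs₀.le,
    ← ENNReal.ofReal_mul hs₁, ENNReal.ofReal_rpow_of_nonneg (by positivity) (by positivity)]
  congr 2
  ring

theorem lintegral_rpow_le_of_mul_one_add_le (hv : AEMeasurable v μ) (hv₀ : 0 ≤ᵐ[μ] v)
    (hfin : ∀ t, 0 < t → μ {x | t < v x} < ⊤)
    (hμ : ∀ ⦃t t'⦄, 0 < t → t ≤ t' → 0 < μ.real {x | t' < v x} →
      t' * (1 + μ.real {x | t' < v x}) ≤ t * (1 + μ.real {x | t < v x}))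
    (ha : 1 < a) (hab : a ≤ b) :
    (ENNReal.ofReal (b - 1) * ∫⁻ x, ENNReal.ofReal (v x ^ b) ∂μ) ^ (1 / b) ≤
      (ENNReal.ofReal (a - 1) * ∫⁻ x, ENNReal.ofReal (v x ^ a) ∂μ) ^ (1 / a) := by
  have ha₀ : 0 < a := by linarith
  have hA₀ (t : ℝ) : 0 ≤ μ.real {x | t < v x} := measureReal_nonneg
  have hAm := measurable_measureReal_setOf_lt μ v
  by_cases htop : ∫⁻ t in Ioi 0, ENNReal.ofReal (μ.real {x | t < v x} * t ^ (a - 1)) = ⊤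
  · rw [lintegral_rpow_eq_lintegral_measureReal_mul hv hv₀ hfin ha₀, htop,
      ENNReal.mul_top (by simpa using ha₀), ENNReal.mul_top (by simpa using ha),
      ENNReal.top_rpow_of_pos (by positivity)]
    exact le_top
  have hinta : IntegrableOn (fun t => μ.real {x | t < v x} * t ^ (a - 1)) (Ioi 0) :=
    (lintegral_ofReal_ne_top_iff_integrable (by fun_prop) (measureReal_mul_rpow_nonneg a)).1 htop
  have hintb := integrableOn_mul_rpow_of_mul_one_add_le hA₀ hAm hμ hab hinta
  rw [ofReal_mul_lintegral_rpow_eq hv hv₀ hfin (ha.trans_le hab) hintb,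
    ofReal_mul_lintegral_rpow_eq hv hv₀ hfin ha hinta]
  exact ENNReal.ofReal_le_ofReal (moment_le_of_mul_one_add_le hA₀ hμ ha hab hinta hintb)

end Distribution

section Embedding

variable {f : ℂ → ℂ} {ε α p q : ℝ}

theorem ae_mem_ball_hypMeasure : ∀ᵐ z ∂hypMeasure, z ∈ ball (0 : ℂ) 1 :=
  (withDensity_absolutelyContinuous _ _).ae_le (ae_restrict_mem measurableSet_ball)

theorem lintegral_bergmanMeasure {g : ℂ → ENNReal} (hg : Measurable g) (α : ℝ) :
    ∫⁻ z, g z ∂bergmanMeasure α =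
      ∫⁻ z in ball 0 1, ENNReal.ofReal ((α - 1) * (1 - ‖z‖ ^ 2) ^ (α - 2) / π) * g z := by
  rw [bergmanMeasure, lintegral_withDensity_eq_lintegral_mul _ (by fun_prop) hg]
  rfl

theorem lintegral_bergmanMeasure_eq_hypMeasure {g : ℂ → ℝ} (hg : Measurable g) (hα : 1 < α) :
    ∫⁻ z, ENNReal.ofReal (g z) ∂bergmanMeasure α =
      ENNReal.ofReal (α - 1) * ∫⁻ z, ENNReal.ofReal (g z * (1 - ‖z‖ ^ 2) ^ α) ∂hypMeasure := by
  rw [lintegral_bergmanMeasure (by fun_prop), hypMeasure,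
    lintegral_withDensity_eq_lintegral_mul _ (by fun_prop) (by fun_prop),
    ← lintegral_const_mul _ (by fun_prop)]
  refine setLIntegral_congr_fun measurableSet_ball fun z hz => ?_
  have hz := one_sub_norm_sq_pos hz
  have hα₁ := sub_pos.2 hα
  simp only [Pi.mul_apply]
  rw [← ENNReal.ofReal_mul (by positivity), ← ENNReal.ofReal_mul (by positivity),
    ← ENNReal.ofReal_mul hα₁.le, Real.rpow_sub hz, Real.rpow_two]
  congr 1
  field_simp

theorem lintegral_norm_sq_add_rpow_eq_regWeight (hf : Continuous f) (hε : 0 < ε) {c : ℝ}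
    (hα : 1 < α) :
    ∫⁻ z, ENNReal.ofReal ((‖f z‖ ^ 2 + ε) ^ (c * α)) ∂bergmanMeasure α =
      ENNReal.ofReal (α - 1) * ∫⁻ z, ENNReal.ofReal (regWeight f c ε z ^ α) ∂hypMeasure := by
  rw [lintegral_bergmanMeasure_eq_hypMeasure (continuous_norm_sq_add_rpow hf hε _).measurable hα]
  congr 1
  refine lintegral_congr_ae (ae_mem_ball_hypMeasure.mono fun z hz => ?_)
  have hP := (norm_sq_add_pos (f := f) hε z).le
  dsimp only
  rw [regWeight, Real.mul_rpow (Real.rpow_nonneg hP _) (one_sub_norm_sq_pos hz).le,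
    ← Real.rpow_mul hP]

/-- With `c = p / (2 α)` the weight `v = regWeight f c ε` satisfies
`v ^ (α s / p) = (|f|² + ε) ^ (s / 2) (1 - |z|²) ^ (α s / p)` for all `s`. -/
theorem lintegral_norm_sq_add_rpow_le_bergmanMeasure (hf : Differentiable ℂ f) (hε : 0 < ε)
    (hα : 1 < α) (hp : 0 < p) (hpq : p ≤ q) :
    (∫⁻ z, ENNReal.ofReal ((‖f z‖ ^ 2 + ε) ^ (q / 2)) ∂bergmanMeasure (α * q / p)) ^ (1 / q) ≤
      (∫⁻ z, ENNReal.ofReal ((‖f z‖ ^ 2 + ε) ^ (p / 2)) ∂bergmanMeasure α) ^ (1 / p) := by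
  have hq : 0 < q := by linarith
  have hle : α ≤ α * q / p := by rw [le_div_iff₀ hp]; gcongr
  have hv := isHyperbolicWeight_regWeight hf (c := p / (2 * α)) (by positivity) hε
  have h := lintegral_rpow_le_of_mul_one_add_le hv.continuous.measurable.aemeasurable
    (ae_mem_ball_hypMeasure.mono fun z hz => mul_nonneg
      (Real.rpow_nonneg (norm_sq_add_pos hε z).le _) (one_sub_norm_sq_pos hz).le)
    (fun _ => hv.hypMeasure_lt_top) (fun _ _ => hv.mul_one_add_hypMeasure_le) hα hle
  rw [← lintegral_norm_sq_add_rpow_eq_regWeight hf.continuous hε (hα.trans_le hle),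
    ← lintegral_norm_sq_add_rpow_eq_regWeight hf.continuous hε hα,
    show p / (2 * α) * (α * q / p) = q / 2 by field_simp,
    show p / (2 * α) * α = p / 2 by field_simp] at h
  have hpow := ENNReal.rpow_le_rpow h (show 0 ≤ α / p by positivity)
  rwa [← ENNReal.rpow_mul, ← ENNReal.rpow_mul,
    show 1 / (α * q / p) * (α / p) = 1 / q by field_simp,
    show 1 / α * (α / p) = 1 / p by field_simp] at hpow

end Embedding

/-- The integral of `w` over the circle of squared radius `s`; the squared radius is the parameter
in which circle integrals of `(|f|² + ε)^m` are convex. -/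
noncomputable def circleSqIntegral {E : Type*} [NormedAddCommGroup E] [NormedSpace ℝ E]
    (w : ℂ → E) (s : ℝ) : E :=
  ∫ θ in -π..π, w (circleMap 0 (√s) θ)

/-- `u` is twice continuously differentiable, with `∂u = a` and `∂̄∂u = g`, a quarter of the
Laplacian of `u`. -/
structure HasWirtingerLaplacian (u : ℂ → ℝ) (a : ℂ → ℂ) (g : ℂ → ℝ) : Prop where
  hasWirtinger : HasWirtinger (fun z => (u z : ℂ)) a fun z => conj (a z)
  exists_hasWirtinger : ∃ c, HasWirtinger a c fun z => (g z : ℂ)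

section CircleSqIntegral

theorem continuous_circleSqIntegral {E : Type*} [NormedAddCommGroup E] [NormedSpace ℝ E]
    {w : ℂ → E} (hw : Continuous w) : Continuous (circleSqIntegral w) := by
  refine intervalIntegral.continuous_parametric_intervalIntegral_of_continuous' ?_ _ _
  exact hw.comp ((continuous_circleMap_uncurry 0).comp
    ((Real.continuous_sqrt.comp continuous_fst).prodMk continuous_snd))

theorem circleSqIntegral_ofReal (u : ℂ → ℝ) (s : ℝ) :
    circleSqIntegral (fun z => (u z : ℂ)) s = (circleSqIntegral u s : ℝ) :=
  intervalIntegral.integral_ofReal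

theorem circleSqIntegral_nonneg {g : ℂ → ℝ} (hg : ∀ z, 0 ≤ g z) (s : ℝ) :
    0 ≤ circleSqIntegral g s :=
  intervalIntegral.integral_nonneg (by linarith [Real.pi_pos]) fun _ _ => hg _

namespace HasWirtinger

variable {w a b : ℂ → ℂ} {r s : ℝ}

theorem hasDerivAt_intervalIntegral_circleMap (hw : HasWirtinger w a b) (hr : r ≠ 0) :
    HasDerivAt (fun r => ∫ θ in -π..π, w (circleMap 0 r θ))
      (2 * ∫ θ in -π..π, a (circleMap 0 r θ) * circleMap 0 1 θ) r := by
  have ca := hw.continuous_left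
  have cb := hw.continuous_right
  set w' : ℝ → ℝ → ℂ := fun r θ => a (circleMap 0 r θ) * circleMap 0 1 θ
    + b (circleMap 0 r θ) * conj (circleMap 0 1 θ)
  have cw' : Continuous fun x : ℝ × ℝ => w' x.1 x.2 := by fun_prop
  obtain ⟨C, hC⟩ := ((isCompact_closedBall r 1).prod
    (isCompact_uIcc (a := -π) (b := π))).exists_bound_of_continuousOn cw'.continuousOn
  have hderiv := (intervalIntegral.hasDerivAt_integral_of_dominated_loc_of_deriv_le (𝕜 := ℝ)
    (μ := volume) (a := -π) (b := π) (F := fun r θ => w (circleMap 0 r θ)) (F' := w')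
    (x₀ := r) (bound := fun _ => C) (closedBall_mem_nhds r one_pos)
    (.of_forall fun r => (hw.continuous.comp (continuous_circleMap 0 r)).aestronglyMeasurable)
    ((hw.continuous.comp (continuous_circleMap 0 r)).intervalIntegrable _ _)
    (cw'.comp (Continuous.prodMk_right r)).aestronglyMeasurable
    (.of_forall fun θ hθ x hx => hC (x, θ) ⟨hx, uIoc_subset_uIcc hθ⟩)
    (by simp)
    (.of_forall fun θ _ x _ =>
      (hw.hasWirtingerAt _).hasDerivAt_comp (hasDerivAt_circleMap_radius 0 x θ))).2
  refine hderiv.congr_deriv ?_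
  have h₁ : Continuous fun θ : ℝ => a (circleMap 0 r θ) * circleMap 0 1 θ := by fun_prop
  have h₂ : Continuous fun θ : ℝ => b (circleMap 0 r θ) * conj (circleMap 0 1 θ) := by fun_prop
  rw [intervalIntegral.integral_add (h₁.intervalIntegrable _ _) (h₂.intervalIntegrable _ _),
    ← hw.intervalIntegral_circle_eq hr, two_mul]

theorem hasDerivAt_circleSqIntegral_sqrt (hw : HasWirtinger w a b) (hs : 0 < s) :
    HasDerivAt (circleSqIntegral w)
      ((∫ θ in -π..π, a (circleMap 0 (√s) θ) * circleMap 0 1 θ) / √s) s := by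
  have hr := Real.sqrt_pos.2 hs
  refine ((hw.hasDerivAt_intervalIntegral_circleMap hr.ne').scomp s
    (Real.hasDerivAt_sqrt hs.ne')).congr_deriv ?_
  have hrc : (√s : ℂ) ≠ 0 := Complex.ofReal_ne_zero.2 hr.ne'
  rw [Complex.real_smul]
  push_cast
  field_simp

theorem hasDerivAt_circleSqIntegral (hw : HasWirtinger w a b) (hs : 0 < s) :
    HasDerivAt (circleSqIntegral w) (circleSqIntegral (fun z => z * a z) s / s) s := by
  refine (hw.hasDerivAt_circleSqIntegral_sqrt hs).congr_deriv ?_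
  have hr : (√s : ℂ) ≠ 0 := Complex.ofReal_ne_zero.2 (Real.sqrt_pos.2 hs).ne'
  have hsq : (s : ℂ) = √s * √s := by rw [← Complex.ofReal_mul, Real.mul_self_sqrt hs.le]
  have hz : circleSqIntegral (fun z => z * a z) s =
      √s * ∫ θ in -π..π, a (circleMap 0 (√s) θ) * circleMap 0 1 θ := by
    rw [circleSqIntegral, ← intervalIntegral.integral_const_mul]
    congr 1 with θ
    rw [circleMap_zero_eq_mul (√s)]
    ring
  rw [hz, hsq, mul_div_mul_left _ _ hr]

theorem hasDerivAt_circleSqIntegral_id_mul (hw : HasWirtinger w a b) (hs : 0 < s) :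
    HasDerivAt (circleSqIntegral fun z => z * w z) (circleSqIntegral b s) s := by
  have hr : 0 < √s := Real.sqrt_pos.2 hs
  have hzw := HasWirtinger.id.mul hw
  refine (hzw.hasDerivAt_circleSqIntegral_sqrt hs).congr_deriv ?_
  rw [hzw.intervalIntegral_circle_eq hr.ne', div_eq_iff (Complex.ofReal_ne_zero.2 hr.ne'),
    circleSqIntegral, mul_comm, ← intervalIntegral.integral_const_mul]
  congr 1 with θ
  rw [circleMap_zero_eq_mul (√s)]
  linear_combination
    (√s : ℂ) * b (√s * circleMap 0 1 θ) * circleMap_mul_conj_self θ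

end HasWirtinger

namespace HasWirtingerLaplacian

variable {u g : ℂ → ℝ} {a : ℂ → ℂ} {s : ℝ}

theorem continuous (hu : HasWirtingerLaplacian u a g) : Continuous u :=
  Complex.continuous_re.comp hu.hasWirtinger.continuous

theorem hasDerivAt_circleSqIntegral (hu : HasWirtingerLaplacian u a g) (hs : 0 < s) :
    HasDerivAt (circleSqIntegral u) ((circleSqIntegral (fun z => z * a z) s).re / s) s := by
  have h := Complex.reCLM.hasFDerivAt.comp_hasDerivAt s
    (hu.hasWirtinger.hasDerivAt_circleSqIntegral hs)
  simpa [Function.comp_def, circleSqIntegral_ofReal] using h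

theorem hasDerivAt_re_circleSqIntegral (hu : HasWirtingerLaplacian u a g) (hs : 0 < s) :
    HasDerivAt (fun s => (circleSqIntegral (fun z => z * a z) s).re) (circleSqIntegral g s) s := by
  obtain ⟨c, hc⟩ := hu.exists_hasWirtinger
  have h := Complex.reCLM.hasFDerivAt.comp_hasDerivAt s (hc.hasDerivAt_circleSqIntegral_id_mul hs)
  simpa [Function.comp_def, circleSqIntegral_ofReal] using h

theorem continuous_re_circleSqIntegral (hu : HasWirtingerLaplacian u a g) :
    Continuous fun s => (circleSqIntegral (fun z => z * a z) s).re :=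
  Complex.continuous_re.comp
    (continuous_circleSqIntegral (continuous_id.mul hu.hasWirtinger.continuous_left))

theorem re_circleSqIntegral_zero : (circleSqIntegral (fun z => z * a z) 0).re = 0 := by
  simp [circleSqIntegral]

theorem re_circleSqIntegral_nonneg (hu : HasWirtingerLaplacian u a g) (hg : ∀ z, 0 ≤ g z)
    (hs : 0 ≤ s) : 0 ≤ (circleSqIntegral (fun z => z * a z) s).re := by
  have hmono : MonotoneOn (fun s => (circleSqIntegral (fun z => z * a z) s).re) (Ici 0) :=
    monotoneOn_of_hasDerivWithinAt_nonneg (convex_Ici 0)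
      hu.continuous_re_circleSqIntegral.continuousOn
      (fun s hs => (hu.hasDerivAt_re_circleSqIntegral
        (by simpa using hs)).hasDerivWithinAt)
      fun s _ => circleSqIntegral_nonneg hg s
  simpa only [re_circleSqIntegral_zero] using hmono self_mem_Ici hs hs

theorem monotoneOn_circleSqIntegral (hu : HasWirtingerLaplacian u a g) (hg : ∀ z, 0 ≤ g z) :
    MonotoneOn (circleSqIntegral u) (Ici 0) := by
  refine monotoneOn_of_hasDerivWithinAt_nonneg (convex_Ici 0)
    (continuous_circleSqIntegral hu.continuous).continuousOn
    (fun s hs => (hu.hasDerivAt_circleSqIntegral (by simpa using hs)).hasDerivWithinAt)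
    fun s hs => ?_
  have hs : 0 < s := by simpa using hs
  exact div_nonneg (hu.re_circleSqIntegral_nonneg hg hs.le) hs.le

theorem convexOn_re_circleSqIntegral (hu : HasWirtingerLaplacian u a g)
    (hg : MonotoneOn (circleSqIntegral g) (Ici 0)) :
    ConvexOn ℝ (Ici 0) fun s => (circleSqIntegral (fun z => z * a z) s).re := by
  refine MonotoneOn.convexOn_of_deriv (convex_Ici 0)
    hu.continuous_re_circleSqIntegral.continuousOn ?_ ?_ <;> rw [interior_Ici]
  · exact fun s hs =>
      (hu.hasDerivAt_re_circleSqIntegral hs).differentiableAt.differentiableWithinAt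
  · refine (hg.mono Ioi_subset_Ici_self).congr fun s hs => ?_
    exact (hu.hasDerivAt_re_circleSqIntegral hs).deriv.symm

theorem exists_circleSqIntegral_eq_add_integral (hu : HasWirtingerLaplacian u a g)
    (hg : ∀ z, 0 ≤ g z) (hgm : MonotoneOn (circleSqIntegral g) (Ici 0)) :
    ∃ ψ : ℝ → ℝ, (∀ s, 0 < s → 0 ≤ ψ s) ∧ MonotoneOn ψ (Ioi 0) ∧ ∀ s, 0 ≤ s →
      IntervalIntegrable ψ volume 0 s ∧
      circleSqIntegral u s = circleSqIntegral u 0 + ∫ t in 0..s, ψ t := by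
  set V : ℝ → ℝ := fun s => (circleSqIntegral (fun z => z * a z) s).re with hV
  have hψ : ∀ s, 0 < s → 0 ≤ V s / s := fun s hs =>
    div_nonneg (hu.re_circleSqIntegral_nonneg hg hs.le) hs.le
  refine ⟨fun s => V s / s, hψ, fun s hs t ht hst => ?_, fun s hs => ?_⟩
  · simpa [hV, re_circleSqIntegral_zero] using
      (hu.convexOn_re_circleSqIntegral hgm).secant_mono self_mem_Ici (Ioi_subset_Ici_self hs)
        (Ioi_subset_Ici_self ht) (ne_of_gt hs) (ne_of_gt ht) hst
  · have hcont := (continuous_circleSqIntegral hu.continuous).continuousOn (s := Icc 0 s)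
    have hd : ∀ x ∈ Ioo 0 s, HasDerivAt (circleSqIntegral u) (V x / x) x := fun x hx =>
      hu.hasDerivAt_circleSqIntegral hx.1
    have hi : IntervalIntegrable (fun s => V s / s) volume 0 s := by
      apply intervalIntegral.intervalIntegrable_deriv_of_nonneg (g := circleSqIntegral u) <;>
        simp only [uIcc_of_le hs, min_eq_left hs, max_eq_right hs]
      exacts [hcont, hd, fun x hx => hψ x hx.1]
    refine ⟨hi, ?_⟩
    rw [intervalIntegral.integral_eq_sub_of_hasDerivAt_of_le hs hcont hd hi, add_sub_cancel]

end HasWirtingerLaplacian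

end CircleSqIntegral

/-- `φ` is positive and twice continuously differentiable on `[0, ∞)`, with derivatives `φ₁` and
`φ₂`, and `log (φ (exp x))` is a convex function of `x`; `mul_sq_le` is the latter condition at
`t = exp x`. -/
structure IsLogLogConvex (φ φ₁ φ₂ : ℝ → ℝ) : Prop where
  hasDerivAt : ∀ t, 0 ≤ t → HasDerivAt φ (φ₁ t) t
  hasDerivAt_deriv : ∀ t, 0 ≤ t → HasDerivAt φ₁ (φ₂ t) t
  continuousOn : ContinuousOn φ₂ (Ici 0)
  pos : ∀ t, 0 ≤ t → 0 < φ t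
  mul_sq_le : ∀ t, 0 ≤ t → t * φ₁ t ^ 2 ≤ φ t * (φ₁ t + t * φ₂ t)

/-- The Laplacian `∂̄∂` of `‖h‖² φ(‖f‖²)` for entire `f` and `h`, where `φ₁` and `φ₂` are the
derivatives of `φ`. -/
noncomputable def normSqCompLaplacian (φ φ₁ φ₂ : ℝ → ℝ) (f h : ℂ → ℂ) (z : ℂ) : ℝ :=
  ‖deriv h z‖ ^ 2 * φ (‖f z‖ ^ 2)
    + 2 * (deriv h z * f z * conj (h z * deriv f z)).re * φ₁ (‖f z‖ ^ 2)
    + ‖h z * deriv f z‖ ^ 2 * (φ₁ (‖f z‖ ^ 2) + ‖f z‖ ^ 2 * φ₂ (‖f z‖ ^ 2))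

namespace IsLogLogConvex

variable {φ φ₁ φ₂ : ℝ → ℝ} {f h : ℂ → ℂ} {ε m : ℝ}

-- Multiplied by `φ`, the Laplacian is `‖φ h' + φ₁ h f' f̄‖²` plus `‖h f'‖²` times the gap in
-- `mul_sq_le`.
theorem normSqCompLaplacian_nonneg (hφ : IsLogLogConvex φ φ₁ φ₂) (f h : ℂ → ℂ) (z : ℂ) :
    0 ≤ normSqCompLaplacian φ φ₁ φ₂ f h z := by
  have hT : 0 ≤ ‖f z‖ ^ 2 := by positivity
  have hpos := hφ.pos _ hT
  refine nonneg_of_mul_nonneg_right ?_ hpos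
  have hsq : ‖φ (‖f z‖ ^ 2) * deriv h z + φ₁ (‖f z‖ ^ 2) * (h z * deriv f z * conj (f z))‖ ^ 2 =
      φ (‖f z‖ ^ 2) ^ 2 * ‖deriv h z‖ ^ 2
        + 2 * φ (‖f z‖ ^ 2) * φ₁ (‖f z‖ ^ 2) * (deriv h z * f z * conj (h z * deriv f z)).re
        + φ₁ (‖f z‖ ^ 2) ^ 2 * (‖h z * deriv f z‖ ^ 2 * ‖f z‖ ^ 2) := by
    rw [← Complex.normSq_eq_norm_sq (_ + _), Complex.normSq_add]
    simp only [map_mul, Complex.conj_ofReal, Complex.conj_conj,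
      Complex.normSq_eq_norm_sq, mul_pow, norm_mul, Complex.norm_real, Real.norm_eq_abs, sq_abs,
      Complex.norm_conj]
    rw [show φ (‖f z‖ ^ 2) * deriv h z * (φ₁ (‖f z‖ ^ 2) * (conj (h z) * conj (deriv f z) * f z)) =
        ((φ (‖f z‖ ^ 2) * φ₁ (‖f z‖ ^ 2) : ℝ) : ℂ)
          * (deriv h z * f z * (conj (h z) * conj (deriv f z))) by push_cast; ring,
      Complex.re_ofReal_mul]
    ring
  have hgap := mul_le_mul_of_nonneg_left (hφ.mul_sq_le _ hT) (sq_nonneg ‖h z * deriv f z‖)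
  rw [normSqCompLaplacian]
  linarith [hsq ▸ sq_nonneg
    ‖φ (‖f z‖ ^ 2) * deriv h z + φ₁ (‖f z‖ ^ 2) * (h z * deriv f z * conj (f z))‖]

theorem hasWirtingerLaplacian (hφ : IsLogLogConvex φ φ₁ φ₂) (hf : Differentiable ℂ f)
    (hh : Differentiable ℂ h) :
    HasWirtingerLaplacian (fun z => ‖h z‖ ^ 2 * φ (‖f z‖ ^ 2))
      (fun z => conj (h z) * (deriv h z * φ (‖f z‖ ^ 2)
        + h z * (φ₁ (‖f z‖ ^ 2) * (deriv f z * conj (f z)))))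
      (normSqCompLaplacian φ φ₁ φ₂ f h) := by
  have holo {k : ℂ → ℂ} (hk : Differentiable ℂ k) : HasWirtinger k (deriv k) fun _ => 0 :=
    .of_differentiable hk
  have hφf := hasWirtinger_comp_norm_sq hf hφ.hasDerivAt
    fun t ht => (hφ.hasDerivAt_deriv t ht).continuousAt.continuousWithinAt
  have hφ₁f := hasWirtinger_comp_norm_sq hf hφ.hasDerivAt_deriv hφ.continuousOn
  have hsq (w : ℂ) : (‖w‖ : ℂ) ^ 2 = w * conj w := by
    rw [Complex.mul_conj, Complex.normSq_eq_norm_sq, Complex.ofReal_pow]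
  constructor
  · have H := ((holo hh).mul (holo hh).conj_comp).mul hφf
    convert H.congr_deriv (fun z => ?_) fun z => ?_ using 2 with z
    · push_cast; rw [hsq]
    · simp only [map_zero]; ring
    · simp only [map_add, map_mul, Complex.conj_ofReal, Complex.conj_conj]; ring
  · have H := (holo hh).conj_comp.mul (((holo hh.deriv).mul hφf).add
      ((holo hh).mul (hφ₁f.mul ((holo hf.deriv).mul (holo hf).conj_comp))))
    refine ⟨_, H.congr_deriv (fun _ => rfl) fun z => ?_⟩
    have hre : ((2 * (deriv h z * f z * conj (h z * deriv f z)).re : ℝ) : ℂ) =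
        deriv h z * f z * conj (h z * deriv f z)
          + conj (deriv h z) * conj (f z) * (h z * deriv f z) := by
      rw [← Complex.add_conj]; simp
    rw [normSqCompLaplacian, Complex.ofReal_add, Complex.ofReal_add, Complex.ofReal_mul (2 * _),
      hre]
    push_cast
    simp only [hsq, map_mul]
    ring

theorem monotoneOn_circleSqIntegral (hφ : IsLogLogConvex φ φ₁ φ₂) (hf : Differentiable ℂ f)
    (hh : Differentiable ℂ h) :
    MonotoneOn (circleSqIntegral fun z => ‖h z‖ ^ 2 * φ (‖f z‖ ^ 2)) (Ici 0) :=
  (hφ.hasWirtingerLaplacian hf hh).monotoneOn_circleSqIntegral (hφ.normSqCompLaplacian_nonneg f h)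

theorem exists_circleSqIntegral_eq_add_integral {χ₁ χ₂ : ℝ → ℝ} (hφ : IsLogLogConvex φ φ₁ φ₂)
    (hχ : IsLogLogConvex (fun t => φ₁ t + t * φ₂ t) χ₁ χ₂) (hf : Differentiable ℂ f) :
    ∃ ψ : ℝ → ℝ, (∀ s, 0 < s → 0 ≤ ψ s) ∧ MonotoneOn ψ (Ioi 0) ∧ ∀ s, 0 ≤ s →
      IntervalIntegrable ψ volume 0 s ∧
      circleSqIntegral (fun z => φ (‖f z‖ ^ 2)) s =
        circleSqIntegral (fun z => φ (‖f z‖ ^ 2)) 0 + ∫ t in 0..s, ψ t := by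
  have hu := hφ.hasWirtingerLaplacian hf (differentiable_const 1)
  have hL : normSqCompLaplacian φ φ₁ φ₂ f (fun _ => 1) =
      fun z => ‖deriv f z‖ ^ 2 * (φ₁ (‖f z‖ ^ 2) + ‖f z‖ ^ 2 * φ₂ (‖f z‖ ^ 2)) := by
    ext z
    simp [normSqCompLaplacian]
  simpa using hu.exists_circleSqIntegral_eq_add_integral (hφ.normSqCompLaplacian_nonneg f _)
    (hL ▸ hχ.monotoneOn_circleSqIntegral hf hf.deriv)

theorem add_rpow (hε : 0 < ε) (hm : 0 < m) :
    IsLogLogConvex (fun t => (t + ε) ^ m) (fun t => m * (t + ε) ^ (m - 1))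
      fun t => m * ((m - 1) * (t + ε) ^ (m - 1 - 1)) where
  hasDerivAt t ht := hasDerivAt_add_rpow hε m ht
  hasDerivAt_deriv t ht := (hasDerivAt_add_rpow hε (m - 1) ht).const_mul m
  continuousOn t ht := (((hasDerivAt_add_rpow hε (m - 1 - 1) ht).const_mul _).const_mul
    m).continuousAt.continuousWithinAt
  pos t ht := by positivity
  mul_sq_le t ht := by
    have hP : 0 < t + ε := by positivity
    set R := (t + ε) ^ (m - 1 - 1) with hR
    have h₁ : (t + ε) ^ (m - 1) = R * (t + ε) := by
      rw [hR, ← Real.rpow_add_one hP.ne', sub_add_cancel]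
    have h₀ : (t + ε) ^ m = R * (t + ε) ^ 2 := by
      rw [pow_two, ← mul_assoc, ← h₁, ← Real.rpow_add_one hP.ne', sub_add_cancel]
    have hgap : 0 ≤ m * ε * R ^ 2 * (t + ε) ^ 2 := by positivity
    rw [h₀, h₁]
    linarith

theorem laplacian_add_rpow (hε : 0 < ε) (hm : 1 ≤ m) :
    IsLogLogConvex
      (fun t => m * (t + ε) ^ (m - 1) + t * (m * ((m - 1) * (t + ε) ^ (m - 1 - 1))))
      (fun t => m * (m - 1) * (2 * (t + ε) ^ (m - 2) + t * ((m - 2) * (t + ε) ^ (m - 3))))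
      (fun t => m * (m - 1) * (m - 2) * (3 * (t + ε) ^ (m - 3)
        + t * ((m - 3) * (t + ε) ^ (m - 4)))) where
  hasDerivAt t ht := by
    have h := ((hasDerivAt_add_rpow hε (m - 1) ht).const_mul m).add ((hasDerivAt_id t).mul
      (((hasDerivAt_add_rpow hε (m - 1 - 1) ht).const_mul (m - 1)).const_mul m))
    refine h.congr_deriv ?_
    rw [show m - 1 - 1 = m - 2 by ring, show m - 2 - 1 = m - 3 by ring, id]
    ring
  hasDerivAt_deriv t ht := by
    have h := (((hasDerivAt_add_rpow hε (m - 2) ht).const_mul 2).add ((hasDerivAt_id t).mul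
      ((hasDerivAt_add_rpow hε (m - 3) ht).const_mul (m - 2)))).const_mul (m * (m - 1))
    refine h.congr_deriv ?_
    rw [show m - 2 - 1 = m - 3 by ring, show m - 3 - 1 = m - 4 by ring, id]
    ring
  continuousOn := by
    have h (k : ℝ) : ContinuousOn (fun t => (t + ε) ^ k) (Ici 0) := fun t ht =>
      (hasDerivAt_add_rpow hε k ht).continuousAt.continuousWithinAt
    have h₄ := h (m - 4)
    fun_prop
  pos t ht := by
    have := sub_nonneg.2 hm
    positivity
  mul_sq_le t ht := by
    have hP : 0 < t + ε := by positivity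
    set R := (t + ε) ^ (m - 4) with hR
    have h₃ : (t + ε) ^ (m - 3) = R * (t + ε) := by
      rw [hR, ← Real.rpow_add_one hP.ne']; congr 1; ring
    have h₂ : (t + ε) ^ (m - 2) = R * (t + ε) ^ 2 := by
      rw [show m - 2 = m - 3 + 1 by ring, Real.rpow_add_one hP.ne', h₃]; ring
    have h₁ : (t + ε) ^ (m - 1) = R * (t + ε) ^ 3 := by
      rw [show m - 1 = m - 2 + 1 by ring, Real.rpow_add_one hP.ne', h₂]; ring
    have hgap : 0 ≤ m ^ 2 * (m - 1) * R ^ 2 * (t + ε) ^ 2 *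
        (m * (m - 1) * ε * t ^ 2 + 2 * m * ε ^ 2 * t + 2 * ε ^ 3) := by positivity
    rw [show m - 1 - 1 = m - 2 by ring, h₁, h₂, h₃]
    linarith

end IsLogLogConvex

theorem exists_circleSqIntegral_norm_sq_add_rpow_eq {f : ℂ → ℂ} {ε m : ℝ}
    (hf : Differentiable ℂ f) (hε : 0 < ε) (hm : 1 ≤ m) :
    ∃ ψ : ℝ → ℝ, (∀ s, 0 < s → 0 ≤ ψ s) ∧ MonotoneOn ψ (Ioi 0) ∧ ∀ s, 0 ≤ s →
      IntervalIntegrable ψ volume 0 s ∧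
      circleSqIntegral (fun z => (‖f z‖ ^ 2 + ε) ^ m) s =
        circleSqIntegral (fun z => (‖f z‖ ^ 2 + ε) ^ m) 0 + ∫ t in 0..s, ψ t :=
  (IsLogLogConvex.add_rpow hε (one_pos.trans_le hm)).exists_circleSqIntegral_eq_add_integral
    (.laplacian_add_rpow hε hm) hf

section RadialMeasure

/-- The distribution of `‖z‖²` under the Bergman measure of exponent `α`, a beta distribution. -/
noncomputable def radialMeasure (α : ℝ) : Measure ℝ :=
  (volume.restrict (Ioo 0 1)).withDensity fun s => ENNReal.ofReal ((α - 1) * (1 - s) ^ (α - 2))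

variable {α β γ ρ x : ℝ}

theorem lintegral_radialMeasure (α : ℝ) {h : ℝ → ENNReal} (hh : Measurable h) :
    ∫⁻ s, h s ∂radialMeasure α =
      ∫⁻ s in Ioo 0 1, ENNReal.ofReal ((α - 1) * (1 - s) ^ (α - 2)) * h s := by
  rw [radialMeasure, lintegral_withDensity_eq_lintegral_mul _ (by fun_prop) hh]
  rfl

theorem ae_mem_Ioo_radialMeasure (α : ℝ) : ∀ᵐ s ∂radialMeasure α, s ∈ Ioo (0 : ℝ) 1 :=
  (withDensity_absolutelyContinuous _ _).ae_le (ae_restrict_mem measurableSet_Ioo)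

theorem setLIntegral_Ioo_one_sub (h : ℝ → ENNReal) :
    ∫⁻ s in Ioo (0 : ℝ) 1, h (1 - s) = ∫⁻ s in Ioo (0 : ℝ) 1, h s := by
  have hpre : (fun s : ℝ => 1 - s) ⁻¹' Ioo 0 1 = Ioo 0 1 := by simp
  simpa [hpre] using
    (Measure.measurePreserving_sub_left volume (1 : ℝ)).setLIntegral_comp_preimage_emb
      (Homeomorph.subLeft (1 : ℝ)).measurableEmbedding h (Ioo 0 1)

theorem lintegral_radialMeasure_one_sub (α : ℝ) {h : ℝ → ENNReal} (hh : Measurable h) :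
    ∫⁻ s, h s ∂radialMeasure α =
      ∫⁻ τ in Ioo 0 1, ENNReal.ofReal ((α - 1) * τ ^ (α - 2)) * h (1 - τ) := by
  rw [lintegral_radialMeasure α hh, ← setLIntegral_Ioo_one_sub]
  simp only [sub_sub_cancel]

theorem radialMeasure_univ (hα : 1 < α) : radialMeasure α univ = 1 := by
  have hi : IntervalIntegrable (fun τ : ℝ => (α - 1) * τ ^ (α - 2)) volume 0 1 :=
    (intervalIntegral.intervalIntegrable_rpow' (by linarith)).const_mul _
  have hint : ∫ τ in (0 : ℝ)..1, (α - 1) * τ ^ (α - 2) = 1 := by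
    rw [intervalIntegral.integral_const_mul, integral_rpow (.inl (by linarith)), Real.one_rpow,
      Real.zero_rpow (by linarith), show α - 2 + 1 = α - 1 by ring, sub_zero,
      mul_one_div_cancel (by linarith)]
  rw [← lintegral_one, lintegral_radialMeasure_one_sub α (h := fun _ => 1) measurable_const]
  simp only [mul_one]
  rw [restrict_Ioo_eq_restrict_Ioc, ← ofReal_integral_eq_lintegral_ofReal
    ((intervalIntegrable_iff_integrableOn_Ioc_of_le zero_le_one).1 hi),
    ← intervalIntegral.integral_of_le zero_le_one, hint, ENNReal.ofReal_one]
  filter_upwards [ae_restrict_mem measurableSet_Ioc] with τ hτ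
  exact mul_nonneg (by linarith) (Real.rpow_nonneg hτ.1.le _)

theorem max_div_sub_one_mul_self {τ : ℝ} (hτ : 0 < τ) :
    max (max (1 - x) 0 / τ - 1) 0 * τ = max (1 - τ - x) 0 := by
  rw [max_mul_of_nonneg _ _ hτ.le, sub_mul, div_mul_cancel₀ _ hτ.ne', zero_mul, one_mul]
  rcases le_total (1 - x) 0 with h | h
  · rw [max_eq_right h, max_eq_right (by linarith), max_eq_right (by linarith)]
  · rw [max_eq_left h, sub_right_comm]

theorem indicator_ofReal_rpow_mul_ofReal_sub {τ : ℝ} (hβ : 1 < β) (hx : 0 ≤ x) (hτ : 0 < τ) :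
    (Ioo 0 1).indicator (fun τ =>
        ENNReal.ofReal ((β - 1) * τ ^ (β - 2)) * ENNReal.ofReal (1 - τ - x)) τ =
      ENNReal.ofReal ((β - 1) * (max (max (1 - x) 0 / τ - 1) 0 * τ ^ (β - 1))) := by
  have hprod : ENNReal.ofReal ((β - 1) * τ ^ (β - 2)) * ENNReal.ofReal (1 - τ - x) =
      ENNReal.ofReal ((β - 1) * (max (max (1 - x) 0 / τ - 1) 0 * τ ^ (β - 1))) := by
    have hmax : ENNReal.ofReal (1 - τ - x) = ENNReal.ofReal (max (1 - τ - x) 0) := by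
      rw [ENNReal.ofReal_max, ENNReal.ofReal_zero, max_eq_left zero_le]
    rw [hmax, ← max_div_sub_one_mul_self hτ, ← ENNReal.ofReal_mul (by positivity),
      show τ ^ (β - 1) = τ ^ (β - 2) * τ by rw [← Real.rpow_add_one hτ.ne']; ring_nf]
    congr 1
    ring
  rcases lt_or_ge τ 1 with h | h
  · rw [indicator_of_mem (mem_Ioo.2 ⟨hτ, h⟩), hprod]
  · rw [indicator_of_notMem fun h' => h'.2.not_ge h, ← hprod,
      ENNReal.ofReal_of_nonpos (p := 1 - τ - x) (by linarith), mul_zero]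

theorem lintegral_radialMeasure_ofReal_sub (hβ : 1 < β) (hx : 0 ≤ x) :
    ∫⁻ s, ENNReal.ofReal (s - x) ∂radialMeasure β = ENNReal.ofReal (max (1 - x) 0 ^ β / β) := by
  have hβ₁ := sub_pos.2 hβ
  have hc := le_max_right (1 - x) 0
  rw [lintegral_radialMeasure_one_sub β (by fun_prop), ← inter_eq_left.2 Ioo_subset_Ioi_self,
    ← setLIntegral_indicator measurableSet_Ioo,
    setLIntegral_congr_fun measurableSet_Ioi fun τ hτ =>
      indicator_ofReal_rpow_mul_ofReal_sub hβ hx hτ,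
    ← ofReal_integral_eq_lintegral_ofReal
      ((integrableOn_max_div_sub_one_mul_rpow hc hβ).const_mul _),
    integral_const_mul, integral_max_div_sub_one_mul_rpow hc hβ]
  · congr 1
    field_simp
  · filter_upwards [ae_restrict_mem measurableSet_Ioi] with τ (hτ : 0 < τ)
    exact mul_nonneg hβ₁.le (mul_nonneg (le_max_right _ _) (by positivity))

theorem one_sub_div_rpow_le_one_sub_rpow (hβ : 0 < β) (hγ : 0 < γ) (hρ₀ : 0 < ρ) (hρ₁ : ρ ≤ 1)
    (hρ : ρ ≤ β / γ) (hx : 0 ≤ x) (hxρ : x ≤ ρ) : (1 - x / ρ) ^ β ≤ (1 - x) ^ γ := by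
  have hx₁ : 0 ≤ 1 - x := by linarith
  have hle : 1 - x / ρ ≤ (1 - x) ^ (γ / β) := by
    rcases le_total β γ with h | h
    · have hbern := one_add_mul_self_le_rpow_one_add (s := -x) (by linarith) ((one_le_div hβ).2 h)
      have hdiv : γ / β * x ≤ x / ρ := by
        rw [div_mul_eq_mul_div, div_le_div_iff₀ hβ hρ₀, mul_right_comm, mul_comm x]
        gcongr
        rwa [mul_comm, ← le_div_iff₀ hγ]
      rw [← sub_eq_add_neg] at hbern
      linarith
    · calc 1 - x / ρ ≤ 1 - x := by linarith [le_div_self hx hρ₀ hρ₁]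
        _ ≤ (1 - x) ^ (γ / β) :=
          Real.self_le_rpow_of_le_one hx₁ (by linarith) (div_le_one_of_le₀ h hβ.le)
  calc (1 - x / ρ) ^ β ≤ ((1 - x) ^ (γ / β)) ^ β :=
        Real.rpow_le_rpow (sub_nonneg.2 ((div_le_one hρ₀).2 hxρ)) hle hβ.le
    _ = (1 - x) ^ γ := by rw [← Real.rpow_mul hx₁, div_mul_cancel₀ _ hβ.ne']

theorem lintegral_radialMeasure_ofReal_mul_sub_le (hβ : 1 < β) (hγ : 1 < γ) (hρ₀ : 0 ≤ ρ)
    (hρ₁ : ρ ≤ 1) (hρ : ρ ≤ β / γ) (hx : 0 ≤ x) :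
    ∫⁻ s, ENNReal.ofReal (ρ * s - x) ∂radialMeasure β ≤
      ∫⁻ s, ENNReal.ofReal (s - x) ∂radialMeasure γ := by
  have hβ₀ : 0 < β := by linarith
  have hγ₀ : 0 < γ := by linarith
  rcases hρ₀.eq_or_lt with rfl | hρ₀
  · simp [ENNReal.ofReal_of_nonpos (neg_nonpos.2 hx)]
  have hscale : ∀ s, ENNReal.ofReal (ρ * s - x) = ENNReal.ofReal ρ * ENNReal.ofReal (s - x / ρ) :=
    fun s => by rw [← ENNReal.ofReal_mul hρ₀.le, mul_sub, mul_div_cancel₀ _ hρ₀.ne']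
  simp only [hscale]
  rw [lintegral_const_mul _ (by fun_prop), lintegral_radialMeasure_ofReal_sub hβ (by positivity),
    lintegral_radialMeasure_ofReal_sub hγ hx, ← ENNReal.ofReal_mul hρ₀.le]
  refine ENNReal.ofReal_le_ofReal ?_
  rcases lt_or_ge ρ x with h | h
  · rw [max_eq_right (sub_nonpos.2 ((one_le_div hρ₀).2 h.le)), Real.zero_rpow hβ₀.ne']
    simp only [zero_div, mul_zero]
    positivity
  rw [max_eq_left (sub_nonneg.2 ((div_le_one hρ₀).2 h)), max_eq_left (by linarith)]
  calc ρ * ((1 - x / ρ) ^ β / β) ≤ β / γ * ((1 - x) ^ γ / β) := by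
        have hdiv := sub_nonneg.2 ((div_le_one hρ₀).2 h)
        gcongr
        exact one_sub_div_rpow_le_one_sub_rpow hβ₀ hγ₀ hρ₀ hρ₁ hρ hx h
    _ = (1 - x) ^ γ / γ := by field_simp

/-- Layer cake: since `ψ` is monotone, each superlevel set of `ψ` in `(0, 1)` is an interval with
left endpoint `a l`. -/
theorem exists_setLIntegral_Ioo_eq_lintegral_ofReal_sub {ψ : ℝ → ℝ} (hψ₀ : ∀ s, 0 < s → 0 ≤ ψ s)
    (hψ : MonotoneOn ψ (Ioi 0)) :
    ∃ a : ℝ → ℝ, Measurable a ∧ (∀ l, 0 ≤ a l) ∧ ∀ y ∈ Icc (0 : ℝ) 1,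
      ∫⁻ t in Ioo 0 y, ENNReal.ofReal (ψ t) = ∫⁻ l in Ioi 0, ENNReal.ofReal (y - a l) := by
  set S : ℝ → Set ℝ := fun l => insert 1 {t | t ∈ Ioo 0 1 ∧ l < ψ t}
  have hne : ∀ l, (S l).Nonempty := fun l => ⟨1, mem_insert _ _⟩
  have hnonneg : ∀ l, ∀ t ∈ S l, 0 ≤ t := by
    rintro l t (rfl | ht)
    exacts [zero_le_one, ht.1.1.le]
  have hbdd : ∀ l, BddBelow (S l) := fun l => ⟨0, hnonneg l⟩
  refine ⟨fun l => sInf (S l), Monotone.measurable fun l l' hl =>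
    csInf_le_csInf (hbdd l) (hne l') (insert_subset_insert fun t ht => ⟨ht.1, hl.trans_lt ht.2⟩),
    fun l => le_csInf (hne l) (hnonneg l), fun y hy => ?_⟩
  rw [lintegral_eq_lintegral_meas_lt _
    ((ae_restrict_mem measurableSet_Ioo).mono fun t ht => hψ₀ t ht.1)
    (aemeasurable_restrict_of_monotoneOn measurableSet_Ioo (hψ.mono Ioo_subset_Ioi_self))]
  refine lintegral_congr fun l => ?_
  rw [Measure.restrict_apply' measurableSet_Ioo]
  apply le_antisymm
  · rw [← Real.volume_Icc]
    exact measure_mono fun t ht =>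
      ⟨csInf_le (hbdd l) (.inr ⟨⟨ht.2.1, ht.2.2.trans_le hy.2⟩, ht.1⟩), ht.2.2.le⟩
  · rw [← Real.volume_Ioo]
    refine measure_mono fun t ht => ?_
    obtain ⟨t', ht', htt'⟩ := exists_lt_of_csInf_lt (hne l) ht.1
    rcases ht' with rfl | ht'
    · exact absurd (htt'.trans ht.2) hy.2.not_gt
    · have ht₀ : 0 < t := ht'.1.1.trans htt'
      exact ⟨ht'.2.trans_le (hψ ht'.1.1 ht₀ htt'.le), ht₀, ht.2⟩

theorem lintegral_radialMeasure_setLIntegral_le (hβ : 1 < β) (hγ : 1 < γ) (hρ₀ : 0 ≤ ρ)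
    (hρ₁ : ρ ≤ 1) (hρ : ρ ≤ β / γ) {ψ : ℝ → ℝ} (hψ₀ : ∀ s, 0 < s → 0 ≤ ψ s)
    (hψ : MonotoneOn ψ (Ioi 0)) :
    ∫⁻ s, (∫⁻ t in Ioo 0 (ρ * s), ENNReal.ofReal (ψ t)) ∂radialMeasure β ≤
      ∫⁻ s, (∫⁻ t in Ioo 0 s, ENNReal.ofReal (ψ t)) ∂radialMeasure γ := by
  obtain ⟨a, ha, ha₀, hlayer⟩ := exists_setLIntegral_Ioo_eq_lintegral_ofReal_sub hψ₀ hψ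
  have : SFinite (radialMeasure β) := by unfold radialMeasure; infer_instance
  have : SFinite (radialMeasure γ) := by unfold radialMeasure; infer_instance
  calc _ = ∫⁻ s, (∫⁻ l in Ioi 0, ENNReal.ofReal (ρ * s - a l)) ∂radialMeasure β :=
        lintegral_congr_ae ((ae_mem_Ioo_radialMeasure β).mono fun s hs =>
          hlayer _ ⟨mul_nonneg hρ₀ hs.1.le, mul_le_one₀ hρ₁ hs.1.le hs.2.le⟩)
    _ = ∫⁻ l in Ioi 0, ∫⁻ s, ENNReal.ofReal (ρ * s - a l) ∂radialMeasure β :=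
        lintegral_lintegral_swap (by fun_prop)
    _ ≤ ∫⁻ l in Ioi 0, ∫⁻ s, ENNReal.ofReal (s - a l) ∂radialMeasure γ :=
        lintegral_mono fun l =>
          lintegral_radialMeasure_ofReal_mul_sub_le hβ hγ hρ₀ hρ₁ hρ (ha₀ l)
    _ = ∫⁻ s, (∫⁻ l in Ioi 0, ENNReal.ofReal (s - a l)) ∂radialMeasure γ :=
        lintegral_lintegral_swap (by fun_prop)
    _ = _ := lintegral_congr_ae ((ae_mem_Ioo_radialMeasure γ).mono fun s hs =>
          (hlayer s ⟨hs.1.le, hs.2.le⟩).symm)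

end RadialMeasure

section Dilation

theorem lintegral_eq_lintegral_circleMap {g : ℂ → ENNReal} (hg : Measurable g) :
    ∫⁻ z, g z = ∫⁻ r in Ioi (0 : ℝ), ENNReal.ofReal r *
      ∫⁻ θ in Ioo (-π) π, g (circleMap 0 r θ) := by
  have hm : Measurable fun p : ℝ × ℝ => g (circleMap 0 p.1 p.2) :=
    hg.comp (continuous_circleMap_uncurry 0).measurable
  rw [← Complex.lintegral_comp_polarCoord_symm]
  simp only [polarCoord_symm_eq_circleMap, smul_eq_mul]
  rw [polarCoord_target, Measure.volume_eq_prod, ← Measure.prod_restrict,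
    lintegral_prod (fun p : ℝ × ℝ => ENNReal.ofReal p.1 * g (circleMap 0 p.1 p.2))
      (measurable_fst.ennreal_ofReal.mul hm).aemeasurable]
  refine lintegral_congr fun r => ?_
  have hr : Measurable fun θ => g (circleMap 0 r θ) := hm.comp measurable_prodMk_left
  dsimp only
  rw [lintegral_const_mul _ hr]

theorem measurable_lintegral_circleMap_sqrt {g : ℂ → ENNReal} (hg : Measurable g) :
    Measurable fun s => ∫⁻ θ in Ioo (-π) π, g (circleMap 0 (√s) θ) :=
  Measurable.lintegral_prod_right (f := fun s θ => g (circleMap 0 (√s) θ)) (hg.comp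
    ((continuous_circleMap_uncurry 0).comp
      ((Real.continuous_sqrt.comp continuous_fst).prodMk continuous_snd)).measurable)

theorem setLIntegral_Ioo_eq_sq (h : ℝ → ENNReal) :
    ∫⁻ s in Ioo 0 1, h s = ∫⁻ r in Ioo (0 : ℝ) 1, ENNReal.ofReal (2 * r) * h (r ^ 2) := by
  have himage : (fun r : ℝ => r ^ 2) '' Ioo 0 1 = Ioo 0 1 := by
    ext s
    refine ⟨?_, fun hs => ⟨√s, ⟨Real.sqrt_pos.2 hs.1, ?_⟩, Real.sq_sqrt hs.1.le⟩⟩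
    · rintro ⟨r, hr, rfl⟩
      exact ⟨pow_pos hr.1 2, pow_lt_one₀ hr.1.le hr.2 two_ne_zero⟩
    · rw [Real.sqrt_lt' one_pos, one_pow]
      exact hs.2
  have hinj : InjOn (fun r : ℝ => r ^ 2) (Ioo 0 1) := fun a ha b hb h =>
    (pow_left_inj₀ ha.1.le hb.1.le two_ne_zero).1 h
  conv_lhs => rw [← himage]
  rw [lintegral_image_eq_lintegral_abs_deriv_mul measurableSet_Ioo
    (fun r _ => (hasDerivAt_pow 2 r).hasDerivWithinAt) hinj]
  refine setLIntegral_congr_fun measurableSet_Ioo fun r hr => ?_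
  have hr₀ := hr.1
  simp [abs_of_pos hr₀]

theorem setLIntegral_ball_eq_lintegral_circleMap {g : ℂ → ENNReal} (hg : Measurable g) :
    ∫⁻ z in ball 0 1, g z = ∫⁻ r in Ioo (0 : ℝ) 1, ENNReal.ofReal r *
      ∫⁻ θ in Ioo (-π) π, g (circleMap 0 r θ) := by
  rw [← lintegral_indicator measurableSet_ball,
    lintegral_eq_lintegral_circleMap (hg.indicator measurableSet_ball),
    ← inter_eq_left.2 (Ioo_subset_Ioi_self : Ioo (0 : ℝ) 1 ⊆ Ioi 0),
    ← setLIntegral_indicator measurableSet_Ioo]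
  refine setLIntegral_congr_fun measurableSet_Ioi fun r (hr : 0 < r) => ?_
  have hball : ∀ θ, circleMap 0 r θ ∈ ball (0 : ℂ) 1 ↔ r < 1 := fun θ => by
    rw [mem_ball_zero_iff, norm_circleMap_zero, abs_of_pos hr]
  by_cases hr₁ : r < 1
  · simp [indicator_of_mem ((hball _).2 hr₁), indicator_of_mem (mem_Ioo.2 ⟨hr, hr₁⟩)]
  · simp [indicator_of_notMem (mt (hball _).1 hr₁), hr₁]

theorem lintegral_bergmanMeasure_eq_radialMeasure {g : ℂ → ENNReal} (hg : Measurable g) (α : ℝ) :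
    ∫⁻ z, g z ∂bergmanMeasure α = ENNReal.ofReal (1 / (2 * π)) *
      ∫⁻ s, (∫⁻ θ in Ioo (-π) π, g (circleMap 0 (√s) θ)) ∂radialMeasure α := by
  rw [lintegral_bergmanMeasure hg, setLIntegral_ball_eq_lintegral_circleMap (by fun_prop),
    lintegral_radialMeasure α (measurable_lintegral_circleMap_sqrt hg), setLIntegral_Ioo_eq_sq
      fun s => _ * ∫⁻ θ in Ioo (-π) π, g (circleMap 0 (√s) θ),
    ← lintegral_const_mul' _ _ ENNReal.ofReal_ne_top]
  refine setLIntegral_congr_fun measurableSet_Ioo fun r hr => ?_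
  have hr₀ := hr.1
  simp only [norm_circleMap_zero, sq_abs, Real.sqrt_sq hr₀.le]
  rw [lintegral_const_mul' _ _ ENNReal.ofReal_ne_top, ← mul_assoc, ← mul_assoc, ← mul_assoc,
    ← ENNReal.ofReal_mul hr₀.le, ← ENNReal.ofReal_mul (by positivity),
    ← ENNReal.ofReal_mul (by positivity)]
  congr 2
  field_simp

theorem bergmanMeasure_univ {α : ℝ} (hα : 1 < α) : bergmanMeasure α univ = 1 := by
  rw [← lintegral_one, lintegral_bergmanMeasure_eq_radialMeasure measurable_const]
  simp only [lintegral_const, Measure.restrict_apply_univ, Real.volume_Ioo, radialMeasure_univ hα,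
    one_mul, mul_one]
  rw [← ENNReal.ofReal_mul (by positivity), ← ENNReal.ofReal_one]
  congr 1
  field_simp
  ring

theorem lintegral_ofReal_circleMap_sqrt {u : ℂ → ℝ} (hu : Continuous u) (hu₀ : ∀ z, 0 ≤ u z)
    (s : ℝ) :
    ∫⁻ θ in Ioo (-π) π, ENNReal.ofReal (u (circleMap 0 (√s) θ)) =
      ENNReal.ofReal (circleSqIntegral u s) := by
  have hπ : -π ≤ π := by linarith [Real.pi_pos]
  rw [circleSqIntegral, intervalIntegral.integral_of_le hπ, restrict_Ioo_eq_restrict_Ioc,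
    ofReal_integral_eq_lintegral_ofReal ((intervalIntegrable_iff_integrableOn_Ioc_of_le hπ).1
      (Continuous.intervalIntegrable (by fun_prop) _ _)) (.of_forall fun θ => hu₀ _)]

theorem mul_circleMap_sqrt {r : ℝ} (hr : 0 ≤ r) (s θ : ℝ) :
    r * circleMap 0 (√s) θ = circleMap 0 (√(r ^ 2 * s)) θ := by
  rw [Real.sqrt_mul (sq_nonneg r), Real.sqrt_sq hr, circleMap_zero_eq_mul, circleMap_zero_eq_mul
    (r * √s)]
  push_cast
  ring

variable {f : ℂ → ℂ} {ε m α β γ p q r : ℝ}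

theorem exists_lintegral_norm_sq_add_rpow_circleMap_eq (hf : Differentiable ℂ f) (hε : 0 < ε)
    (hm : 1 ≤ m) :
    ∃ (C : ENNReal) (ψ : ℝ → ℝ), (∀ s, 0 < s → 0 ≤ ψ s) ∧ MonotoneOn ψ (Ioi 0) ∧ ∀ s, 0 ≤ s →
      ∫⁻ θ in Ioo (-π) π, ENNReal.ofReal ((‖f (circleMap 0 (√s) θ)‖ ^ 2 + ε) ^ m) =
        C + ∫⁻ t in Ioo 0 s, ENNReal.ofReal (ψ t) := by
  have hpos : ∀ z, 0 ≤ (‖f z‖ ^ 2 + ε) ^ m := fun z => by positivity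
  obtain ⟨ψ, hψ₀, hψ, heq⟩ := exists_circleSqIntegral_norm_sq_add_rpow_eq hf hε hm
  refine ⟨ENNReal.ofReal (circleSqIntegral (fun z => (‖f z‖ ^ 2 + ε) ^ m) 0), ψ, hψ₀, hψ,
    fun s hs => ?_⟩
  obtain ⟨hi, he⟩ := heq s hs
  have hae : 0 ≤ᵐ[volume.restrict (Ioc 0 s)] ψ :=
    (ae_restrict_mem measurableSet_Ioc).mono fun t ht => hψ₀ t ht.1
  rw [lintegral_ofReal_circleMap_sqrt (continuous_norm_sq_add_rpow hf.continuous hε m) hpos, he,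
    intervalIntegral.integral_of_le hs,
    ENNReal.ofReal_add (circleSqIntegral_nonneg hpos 0) (integral_nonneg_of_ae hae),
    ofReal_integral_eq_lintegral_ofReal
      ((intervalIntegrable_iff_integrableOn_Ioc_of_le hs).1 hi) hae,
    restrict_Ioo_eq_restrict_Ioc]

theorem lintegral_norm_sq_add_rpow_dilate_le (hf : Differentiable ℂ f) (hε : 0 < ε) (hm : 1 ≤ m)
    (hβ : 1 < β) (hγ : 1 < γ) (hr₀ : 0 ≤ r) (hr₁ : r ≤ 1) (hr : r ^ 2 ≤ β / γ) :
    ∫⁻ z, ENNReal.ofReal ((‖f (r * z)‖ ^ 2 + ε) ^ m) ∂bergmanMeasure β ≤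
      ∫⁻ z, ENNReal.ofReal ((‖f z‖ ^ 2 + ε) ^ m) ∂bergmanMeasure γ := by
  have hfm : Measurable f := hf.continuous.measurable
  obtain ⟨C, ψ, hψ₀, hψ, hcircle⟩ := exists_lintegral_norm_sq_add_rpow_circleMap_eq hf hε hm
  rw [lintegral_bergmanMeasure_eq_radialMeasure (by fun_prop),
    lintegral_bergmanMeasure_eq_radialMeasure (by fun_prop)]
  refine mul_le_mul_right ?_ _
  calc _ = ∫⁻ s, (C + ∫⁻ t in Ioo 0 (r ^ 2 * s), ENNReal.ofReal (ψ t)) ∂radialMeasure β := by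
        refine lintegral_congr_ae ((ae_mem_Ioo_radialMeasure β).mono fun s hs => ?_)
        simp only [mul_circleMap_sqrt hr₀]
        exact hcircle _ (mul_nonneg (sq_nonneg r) hs.1.le)
    _ ≤ ∫⁻ s, (C + ∫⁻ t in Ioo 0 s, ENNReal.ofReal (ψ t)) ∂radialMeasure γ := by
        rw [lintegral_add_left measurable_const, lintegral_add_left measurable_const,
          lintegral_const, lintegral_const, radialMeasure_univ hβ, radialMeasure_univ hγ]
        exact add_le_add_right (lintegral_radialMeasure_setLIntegral_le hβ hγ (sq_nonneg r)
          (pow_le_one₀ hr₀ hr₁) hr hψ₀ hψ) _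
    _ = _ := lintegral_congr_ae ((ae_mem_Ioo_radialMeasure γ).mono fun s hs =>
        (hcircle s hs.1.le).symm)

theorem hypercontractive_norm_sq_add_rpow (hf : Differentiable ℂ f) (hε : 0 < ε) (hα : 1 < α)
    (hβ : 1 < β) (hp : 0 < p) (hpq : p ≤ q) (hq : 2 ≤ q) (hr₀ : 0 ≤ r) (hr₁ : r ≤ 1)
    (hr : r ^ 2 ≤ β * p / (α * q)) :
    (∫⁻ z, ENNReal.ofReal ((‖f (r * z)‖ ^ 2 + ε) ^ (q / 2)) ∂bergmanMeasure β) ^ (1 / q) ≤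
      (∫⁻ z, ENNReal.ofReal ((‖f z‖ ^ 2 + ε) ^ (p / 2)) ∂bergmanMeasure α) ^ (1 / p) := by
  have hγ : 1 < α * q / p :=
    (one_lt_div hp).2 (hpq.trans_lt (lt_mul_of_one_lt_left (by linarith) hα))
  refine le_trans (ENNReal.rpow_le_rpow ?_ (by positivity))
    (lintegral_norm_sq_add_rpow_le_bergmanMeasure hf hε hα hp hpq)
  refine lintegral_norm_sq_add_rpow_dilate_le hf hε (by linarith) hβ hγ hr₀ hr₁ (hr.trans_eq ?_)
  field_simp

end Dilation

section Disk

theorem exists_entire_tendsto {f : ℂ → ℂ} (hf : DifferentiableOn ℂ f (ball 0 1)) :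
    ∃ g : ℕ → ℂ → ℂ, (∀ n, Differentiable ℂ (g n)) ∧
      (∀ z ∈ ball (0 : ℂ) 1, Tendsto (fun n => g n z) atTop (𝓝 (f z))) ∧
      ∀ R < 1, ∃ C, ∀ n z, ‖z‖ ≤ R → ‖g n z‖ ≤ C := by
  let a : ℕ → ℂ := fun n => (n.factorial : ℂ)⁻¹ * iteratedDeriv n f 0
  have hsum : ∀ z ∈ ball (0 : ℂ) 1, HasSum (fun n => a n * z ^ n) (f z) := fun z hz => by
    have := Complex.hasSum_taylorSeries_on_ball (r := 1) (c := 0) (by simpa using hf)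
      (by simpa using hz)
    simpa [a, mul_assoc, mul_comm, mul_left_comm] using this
  refine ⟨fun n z => ∑ k ∈ Finset.range n, a k * z ^ k, fun n => by fun_prop,
    fun z hz => (hsum z hz).tendsto_sum_nat, fun R hR => ?_⟩
  rcases lt_or_ge R 0 with hR₀ | hR₀
  · exact ⟨0, fun n z hz => absurd (hz.trans_lt hR₀) (not_lt.2 (norm_nonneg z))⟩
  have hsumR := (hsum R (by simpa [abs_of_nonneg hR₀] using hR)).summable.norm
  refine ⟨∑' k, ‖a k * (R : ℂ) ^ k‖, fun n z hz => ?_⟩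
  refine (norm_sum_le_of_le _ fun k _ => ?_).trans
    (hsumR.sum_le_tsum (Finset.range n) fun _ _ => norm_nonneg _)
  simp only [norm_mul, norm_pow, Complex.norm_real, Real.norm_of_nonneg hR₀]
  gcongr

theorem tendsto_lintegral_norm_sq_add_rpow {X : Type*} [MeasurableSpace X] {μ : Measure X}
    [IsFiniteMeasure μ] {g : ℕ → X → ℂ} {f : X → ℂ} {C p : ℝ} (hp : 0 < p)
    (hg : ∀ n, Measurable (g n)) (hC : ∀ᵐ x ∂μ, ∀ n, ‖g n x‖ ≤ C)
    (hlim : ∀ᵐ x ∂μ, Tendsto (fun n => g n x) atTop (𝓝 (f x))) :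
    Tendsto (fun n : ℕ => ∫⁻ x, ENNReal.ofReal ((‖g n x‖ ^ 2 + 1 / ((n : ℝ) + 1)) ^ (p / 2)) ∂μ)
      atTop (𝓝 (∫⁻ x, ENNReal.ofReal (‖f x‖ ^ p) ∂μ)) := by
  refine tendsto_lintegral_of_dominated_convergence
    (fun _ => ENNReal.ofReal ((C ^ 2 + 1) ^ (p / 2))) (fun n => ?_) (fun n => ?_) ?_ ?_
  · have := hg n
    fun_prop
  · filter_upwards [hC] with x hx
    have hn : 1 / ((n : ℝ) + 1) ≤ 1 := div_le_self zero_le_one (by simp)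
    have := hx n
    gcongr
  · rw [lintegral_const]
    exact ENNReal.mul_ne_top ENNReal.ofReal_ne_top (measure_ne_top _ _)
  · filter_upwards [hlim] with x hx
    have hsq : Tendsto (fun n : ℕ => ‖g n x‖ ^ 2 + 1 / ((n : ℝ) + 1)) atTop (𝓝 (‖f x‖ ^ 2)) := by
      simpa using (hx.norm.pow 2).add tendsto_one_div_add_atTop_nhds_zero_nat
    have hpow : (‖f x‖ ^ 2) ^ (p / 2) = ‖f x‖ ^ p := by
      rw [← Real.rpow_natCast, ← Real.rpow_mul (norm_nonneg _), Nat.cast_ofNat,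
        mul_div_cancel₀ _ two_ne_zero]
    rw [← hpow]
    exact ENNReal.tendsto_ofReal (hsq.rpow_const (Or.inr (by positivity)))

theorem exists_entire_tendsto_lintegral_comp {f : ℂ → ℂ} (hf : DifferentiableOn ℂ f (ball 0 1)) :
    ∃ g : ℕ → ℂ → ℂ, (∀ n, Differentiable ℂ (g n)) ∧
      ∀ {X : Type*} [MeasurableSpace X] (μ : Measure X) [IsFiniteMeasure μ] {u : X → ℂ} {R p : ℝ},
        Measurable u → R < 1 → (∀ᵐ x ∂μ, ‖u x‖ ≤ R) → 0 < p →
        Tendsto (fun n : ℕ =>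
            ∫⁻ x, ENNReal.ofReal ((‖g n (u x)‖ ^ 2 + 1 / ((n : ℝ) + 1)) ^ (p / 2)) ∂μ)
          atTop (𝓝 (∫⁻ x, ENNReal.ofReal (‖f (u x)‖ ^ p) ∂μ)) := by
  obtain ⟨g, hg, hlim, hbound⟩ := exists_entire_tendsto hf
  refine ⟨g, hg, fun μ _ u R p hu hR huR hp => ?_⟩
  obtain ⟨C, hC⟩ := hbound R hR
  exact tendsto_lintegral_norm_sq_add_rpow hp (fun n => (hg n).continuous.measurable.comp hu)
    (huR.mono fun x hx n => hC n _ hx)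
    (huR.mono fun x hx => hlim _ (mem_ball_zero_iff.2 (hx.trans_lt hR)))

theorem ae_mem_ball_bergmanMeasure (α : ℝ) : ∀ᵐ z ∂bergmanMeasure α, z ∈ ball (0 : ℂ) 1 :=
  (withDensity_absolutelyContinuous _ _).ae_le (ae_restrict_mem measurableSet_ball)

theorem isFiniteMeasure_bergmanMeasure {α : ℝ} (hα : 1 < α) : IsFiniteMeasure (bergmanMeasure α) :=
  ⟨by rw [bergmanMeasure_univ hα]; exact ENNReal.one_lt_top⟩

theorem norm_ofReal_mul_le {r : ℝ} (hr : 0 ≤ r) {z : ℂ} (hz : z ∈ ball (0 : ℂ) 1) :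
    ‖(r : ℂ) * z‖ ≤ r := by
  rw [norm_mul, Complex.norm_real, Real.norm_of_nonneg hr]
  exact mul_le_of_le_one_right hr (mem_ball_zero_iff.1 hz).le

theorem ofReal_mul_mem_ball {r : ℝ} (hr₀ : 0 ≤ r) (hr₁ : r ≤ 1) {z : ℂ}
    (hz : z ∈ ball (0 : ℂ) 1) : (r : ℂ) * z ∈ ball (0 : ℂ) 1 := by
  rw [mem_ball_zero_iff, norm_mul, Complex.norm_real, Real.norm_of_nonneg hr₀]
  exact (mul_le_of_le_one_left (norm_nonneg z) hr₁).trans_lt (mem_ball_zero_iff.1 hz)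

variable {f : ℂ → ℂ} {α β p q r R : ℝ}

theorem lintegral_norm_rpow_circleMap_sqrt_mono (hf : DifferentiableOn ℂ f (ball 0 1))
    (hp : 0 < p) {s t : ℝ} (hs : 0 ≤ s) (hst : s ≤ t) (ht : t < 1) :
    ∫⁻ θ in Ioo (-π) π, ENNReal.ofReal (‖f (circleMap 0 (√s) θ)‖ ^ p) ≤
      ∫⁻ θ in Ioo (-π) π, ENNReal.ofReal (‖f (circleMap 0 (√t) θ)‖ ^ p) := by
  obtain ⟨g, hg, hlim⟩ := exists_entire_tendsto_lintegral_comp hf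
  have hcircle : ∀ s < 1, Tendsto (fun n : ℕ => ∫⁻ θ in Ioo (-π) π,
        ENNReal.ofReal ((‖g n (circleMap 0 (√s) θ)‖ ^ 2 + 1 / ((n : ℝ) + 1)) ^ (p / 2))) atTop
      (𝓝 (∫⁻ θ in Ioo (-π) π, ENNReal.ofReal (‖f (circleMap 0 (√s) θ)‖ ^ p))) := fun s hs =>
    hlim _ (continuous_circleMap 0 _).measurable
      (show √s < 1 by rwa [Real.sqrt_lt' one_pos, one_pow])
      (.of_forall fun θ => by rw [norm_circleMap_zero, abs_of_nonneg (Real.sqrt_nonneg s)]) hp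
  refine le_of_tendsto_of_tendsto' (hcircle s (hst.trans_lt ht)) (hcircle t ht) fun n => ?_
  have hε : 0 < 1 / ((n : ℝ) + 1) := by positivity
  have hcont := continuous_norm_sq_add_rpow (hg n).continuous hε (p / 2)
  have hmono := (IsLogLogConvex.add_rpow hε (half_pos hp)).monotoneOn_circleSqIntegral (hg n)
    (differentiable_const 1)
  simp only [norm_one, one_pow, one_mul] at hmono
  rw [lintegral_ofReal_circleMap_sqrt hcont fun z => by positivity,
    lintegral_ofReal_circleMap_sqrt hcont fun z => by positivity]
  exact ENNReal.ofReal_le_ofReal (hmono hs (hs.trans hst) hst)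

theorem lintegral_norm_rpow_dilate_le (hfm : Measurable f) (hf : DifferentiableOn ℂ f (ball 0 1))
    (hp : 0 < p) (hR₀ : 0 ≤ R) (hR₁ : R ≤ 1) (α : ℝ) :
    ∫⁻ z, ENNReal.ofReal (‖f (R * z)‖ ^ p) ∂bergmanMeasure α ≤
      ∫⁻ z, ENNReal.ofReal (‖f z‖ ^ p) ∂bergmanMeasure α := by
  rw [lintegral_bergmanMeasure_eq_radialMeasure (by fun_prop),
    lintegral_bergmanMeasure_eq_radialMeasure (by fun_prop)]
  refine mul_le_mul_right (lintegral_mono_ae ?_) _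
  filter_upwards [ae_mem_Ioo_radialMeasure α] with s hs
  simp only [mul_circleMap_sqrt hR₀]
  exact lintegral_norm_rpow_circleMap_sqrt_mono hf hp (mul_nonneg (sq_nonneg R) hs.1.le)
    (mul_le_of_le_one_left hs.1.le (pow_le_one₀ hR₀ hR₁)) hs.2

theorem hypercontractive_dilate (hf : DifferentiableOn ℂ f (ball 0 1)) (hα : 1 < α) (hβ : 1 < β)
    (hp : 0 < p) (hpq : p ≤ q) (hq : 2 ≤ q) (hr₀ : 0 ≤ r) (hr₁ : r ≤ 1)
    (hr : r ^ 2 ≤ β * p / (α * q)) (hR₀ : 0 ≤ R) (hR₁ : R < 1) :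
    (∫⁻ z, ENNReal.ofReal (‖f (R * (r * z))‖ ^ q) ∂bergmanMeasure β) ^ (1 / q) ≤
      (∫⁻ z, ENNReal.ofReal (‖f (R * z)‖ ^ p) ∂bergmanMeasure α) ^ (1 / p) := by
  have := isFiniteMeasure_bergmanMeasure hα
  have := isFiniteMeasure_bergmanMeasure hβ
  obtain ⟨g, hg, hlim⟩ := exists_entire_tendsto_lintegral_comp hf
  have hβlim := hlim (bergmanMeasure β) (u := fun z => R * (r * z)) (by fun_prop) hR₁
    ((ae_mem_ball_bergmanMeasure β).mono fun z hz =>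
      norm_ofReal_mul_le hR₀ (ofReal_mul_mem_ball hr₀ hr₁ hz)) (hp.trans_le hpq)
  have hαlim := hlim (bergmanMeasure α) (u := fun z => R * z) (by fun_prop) hR₁
    ((ae_mem_ball_bergmanMeasure α).mono fun z hz => norm_ofReal_mul_le hR₀ hz) hp
  exact le_of_tendsto_of_tendsto' (hβlim.ennrpow_const (1 / q)) (hαlim.ennrpow_const (1 / p))
    fun n => hypercontractive_norm_sq_add_rpow (f := fun z => g n (R * z))
      ((hg n).comp (differentiable_id.const_mul _)) (by positivity) hα hβ hp hpq hq hr₀ hr₁ hr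

theorem hypercontractive_disk (hfm : Measurable f) (hf : DifferentiableOn ℂ f (ball 0 1))
    (hα : 1 < α) (hβ : 1 < β) (hp : 0 < p) (hpq : p ≤ q) (hq : 2 ≤ q) (hr₀ : 0 ≤ r)
    (hr₁ : r ≤ 1) (hr : r ^ 2 ≤ β * p / (α * q)) :
    (∫⁻ z, ENNReal.ofReal (‖f (r * z)‖ ^ q) ∂bergmanMeasure β) ^ (1 / q) ≤
      (∫⁻ z, ENNReal.ofReal (‖f z‖ ^ p) ∂bergmanMeasure α) ^ (1 / p) := by
  have hq₀ : 0 < q := by linarith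
  set B := (∫⁻ z, ENNReal.ofReal (‖f z‖ ^ p) ∂bergmanMeasure α) ^ (1 / p)
  obtain ⟨R, -, hR, hRlim⟩ := exists_seq_strictMono_tendsto' (zero_lt_one' ℝ)
  have hdilate : ∀ n, ∫⁻ z, ENNReal.ofReal (‖f (R n * (r * z))‖ ^ q) ∂bergmanMeasure β ≤ B ^ q :=
    fun n => by
      rw [← ENNReal.rpow_inv_le_iff hq₀, ← one_div]
      exact (hypercontractive_dilate hf hα hβ hp hpq hq hr₀ hr₁ hr (hR n).1.le (hR n).2).trans
        (ENNReal.rpow_le_rpow (lintegral_norm_rpow_dilate_le hfm hf hp (hR n).1.le (hR n).2.le α)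
          (by positivity))
  rw [one_div, ENNReal.rpow_inv_le_iff hq₀]
  calc _ = ∫⁻ z, liminf (fun n => ENNReal.ofReal (‖f (R n * (r * z))‖ ^ q)) atTop
        ∂bergmanMeasure β := by
        refine lintegral_congr_ae ?_
        filter_upwards [ae_mem_ball_bergmanMeasure β] with z hz
        have hmul : Tendsto (fun n => (R n : ℂ) * (r * z)) atTop (𝓝 (r * z)) := by
          simpa using ((Complex.continuous_ofReal.tendsto _).comp hRlim).mul_const ((r : ℂ) * z)
        have hlim := (hf.continuousOn.continuousAt
          (isOpen_ball.mem_nhds (ofReal_mul_mem_ball hr₀ hr₁ hz))).tendsto.comp hmul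
        exact (ENNReal.tendsto_ofReal (hlim.norm.rpow_const (Or.inr hq₀.le))).liminf_eq.symm
    _ ≤ liminf (fun n => ∫⁻ z, ENNReal.ofReal (‖f (R n * (r * z))‖ ^ q) ∂bergmanMeasure β)
        atTop := lintegral_liminf_le fun n => by fun_prop
    _ ≤ B ^ q := liminf_le_of_frequently_le' (.of_forall hdilate)

end Disk

section Minkowski

variable {X Y : Type*} [MeasurableSpace X] [MeasurableSpace Y] {μ : Measure X} {ν : Measure Y}
  [SFinite μ] {F : X → Y → ENNReal} {k : ℝ}

theorem lintegral_lintegral_mul_rpow_sub_one_le [SFinite ν] {G : Y → ENNReal}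
    (hF : Measurable (Function.uncurry F)) (hG : Measurable G) (hk : 1 < k) :
    ∫⁻ y, (∫⁻ x, F x y ∂μ) * G y ^ (k - 1) ∂ν ≤
      (∫⁻ x, (∫⁻ y, F x y ^ k ∂ν) ^ (1 / k) ∂μ) * (∫⁻ y, G y ^ k ∂ν) ^ (1 / k.conjExponent) := by
  have hkc := Real.HolderConjugate.conjExponent hk
  have hFx : ∀ x, Measurable (F x) := fun x => hF.comp measurable_prodMk_left
  have hFy : ∀ y, Measurable fun x => F x y := fun y => hF.comp measurable_prodMk_right
  have hFk : Measurable fun x => ∫⁻ y, F x y ^ k ∂ν := (hF.pow_const k).lintegral_prod_right'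
  calc _ = ∫⁻ y, ∫⁻ x, F x y * G y ^ (k - 1) ∂μ ∂ν :=
        lintegral_congr fun y => (lintegral_mul_const _ (hFy y)).symm
    _ = ∫⁻ x, ∫⁻ y, F x y * G y ^ (k - 1) ∂ν ∂μ :=
        (lintegral_lintegral_swap
          (hF.mul ((hG.pow_const _).comp measurable_snd)).aemeasurable).symm
    _ ≤ ∫⁻ x, (∫⁻ y, F x y ^ k ∂ν) ^ (1 / k) * (∫⁻ y, G y ^ k ∂ν) ^ (1 / k.conjExponent) ∂μ := by
        refine lintegral_mono fun x => (ENNReal.lintegral_mul_le_Lp_mul_Lq ν hkc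
          (hFx x).aemeasurable (hG.pow_const (k - 1)).aemeasurable).trans_eq ?_
        simp only [← ENNReal.rpow_mul, hkc.sub_one_mul_conj]
    _ = _ := lintegral_mul_const _ (hFk.pow_const _)

theorem rpow_lintegral_rpow_le_of_le_lintegral [SFinite ν] {G : Y → ENNReal}
    (hF : Measurable (Function.uncurry F)) (hG : Measurable G) (hGF : ∀ y, G y ≤ ∫⁻ x, F x y ∂μ)
    (hG_top : ∫⁻ y, G y ^ k ∂ν ≠ ⊤) (hk : 1 < k) :
    (∫⁻ y, G y ^ k ∂ν) ^ (1 / k) ≤ ∫⁻ x, (∫⁻ y, F x y ^ k ∂ν) ^ (1 / k) ∂μ := by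
  have hkc := Real.HolderConjugate.conjExponent hk
  have hsplit : ∀ y, G y ^ k = G y * G y ^ (k - 1) := fun y => by
    nth_rewrite 2 [← ENNReal.rpow_one (G y)]
    rw [← ENNReal.rpow_add_of_nonneg _ _ zero_le_one (by linarith), add_sub_cancel]
  have hle := (lintegral_mono fun y => (hsplit y).trans_le (mul_le_mul_left (hGF y) _)).trans
    (lintegral_lintegral_mul_rpow_sub_one_le (ν := ν) hF hG hk)
  set A := ∫⁻ y, G y ^ k ∂ν
  rcases eq_or_ne A 0 with hA | hA
  · rw [hA, ENNReal.zero_rpow_of_pos (by positivity)]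
    exact zero_le
  refine (ENNReal.mul_le_mul_iff_left (ENNReal.rpow_pos (pos_iff_ne_zero.2 hA) hG_top).ne'
    (ENNReal.rpow_ne_top_of_nonneg (one_div_nonneg.2 hkc.symm.nonneg) hG_top)).1
    (le_of_eq_of_le ?_ hle)
  rw [← ENNReal.rpow_add _ _ hA hG_top, one_div, one_div, hkc.inv_add_inv_eq_one,
    ENNReal.rpow_one]

theorem lintegral_lintegral_rpow_le [SigmaFinite ν] (hF : Measurable (Function.uncurry F))
    (hk : 1 ≤ k) :
    (∫⁻ y, (∫⁻ x, F x y ∂μ) ^ k ∂ν) ^ (1 / k) ≤ ∫⁻ x, (∫⁻ y, F x y ^ k ∂ν) ^ (1 / k) ∂μ := by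
  rcases hk.eq_or_lt with rfl | hk
  · simp only [ENNReal.rpow_one, one_div, inv_one]
    exact (lintegral_lintegral_swap hF.aemeasurable).ge
  have hk₀ : 0 < k := by linarith
  have hH : Measurable fun y => ∫⁻ x, F x y ∂μ := hF.lintegral_prod_left'
  let G : ℕ → Y → ENNReal := fun N =>
    (spanningSets ν N).indicator fun y => min (∫⁻ x, F x y ∂μ) N
  have hG : ∀ N, Measurable (G N) := fun N =>
    (hH.min measurable_const).indicator (measurableSet_spanningSets ν N)
  have hG_top : ∀ N, ∫⁻ y, G N y ^ k ∂ν ≠ ⊤ := fun N => by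
    refine ((lintegral_mono (g := (spanningSets ν N).indicator fun _ => (N : ENNReal) ^ k)
      fun y => ?_).trans_lt ?_).ne
    · by_cases hy : y ∈ spanningSets ν N
      · simpa [G, hy] using ENNReal.rpow_le_rpow (min_le_right _ _) hk₀.le
      · simp [G, hy, hk₀]
    · rw [lintegral_indicator_const (measurableSet_spanningSets ν N)]
      exact ENNReal.mul_lt_top (ENNReal.rpow_lt_top_of_nonneg hk₀.le (ENNReal.natCast_ne_top N))
        (measure_spanningSets_lt_top ν N)
  refine le_of_tendsto' ((lintegral_tendsto_of_tendsto_of_monotone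
    (fun N => ((hG N).pow_const k).aemeasurable) (.of_forall fun y N N' hN => ?_)
    (.of_forall fun y => Tendsto.ennrpow_const k ?_)).ennrpow_const (1 / k)) fun N =>
    rpow_lintegral_rpow_le_of_le_lintegral hF (hG N)
      (fun y => indicator_le_self' (fun _ _ => zero_le) y |>.trans (min_le_left _ _)) (hG_top N) hk
  · refine ENNReal.rpow_le_rpow ((indicator_le_indicator_of_subset (monotone_spanningSets ν hN)
      (fun _ => zero_le) y).trans (indicator_le_indicator ?_)) hk₀.le
    exact min_le_min_left _ (by exact_mod_cast hN)
  · have hmin : Tendsto (fun N : ℕ => min (∫⁻ x, F x y ∂μ) N) atTop (𝓝 (∫⁻ x, F x y ∂μ)) := by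
      simpa using (tendsto_const_nhds (x := ∫⁻ x, F x y ∂μ)).min ENNReal.tendsto_nat_nhds_top
    exact hmin.congr' ((eventually_mem_spanningSets ν y).mono fun N hN =>
      (indicator_of_mem hN fun y => min (∫⁻ x, F x y ∂μ) N).symm)

theorem rpow_lintegral_le_of_slices_le [SigmaFinite ν] (hF : Measurable (Function.uncurry F))
    {A : Y → ENNReal} {B : X → ENNReal} {p q : ℝ} (hp : 0 < p) (hpq : p ≤ q)
    (hA : ∀ᵐ y ∂ν, A y ^ (1 / q) ≤ (∫⁻ x, F x y ^ p ∂μ) ^ (1 / p))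
    (hB : ∀ᵐ x ∂μ, (∫⁻ y, F x y ^ q ∂ν) ^ (1 / q) ≤ B x ^ (1 / p)) :
    (∫⁻ y, A y ∂ν) ^ (1 / q) ≤ (∫⁻ x, B x ∂μ) ^ (1 / p) := by
  have hq : 0 < q := hp.trans_le hpq
  calc _ ≤ (∫⁻ y, (∫⁻ x, F x y ^ p ∂μ) ^ (q / p) ∂ν) ^ (1 / q) := by
        refine ENNReal.rpow_le_rpow (lintegral_mono_ae (hA.mono fun y hy => ?_)) (by positivity)
        rwa [one_div, ENNReal.rpow_inv_le_iff hq, ← ENNReal.rpow_mul, one_div_mul_eq_div] at hy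
    _ = ((∫⁻ y, (∫⁻ x, F x y ^ p ∂μ) ^ (q / p) ∂ν) ^ (1 / (q / p))) ^ (1 / p) := by
        rw [← ENNReal.rpow_mul]
        congr 1
        field_simp
    _ ≤ (∫⁻ x, (∫⁻ y, (F x y ^ p) ^ (q / p) ∂ν) ^ (1 / (q / p)) ∂μ) ^ (1 / p) :=
        ENNReal.rpow_le_rpow (lintegral_lintegral_rpow_le (F := fun x y => F x y ^ p)
          (hF.pow_const p) ((one_le_div hp).2 hpq)) (by positivity)
    _ ≤ _ := by
        refine ENNReal.rpow_le_rpow (lintegral_mono_ae (hB.mono fun x hx => ?_)) (by positivity)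
        rw [one_div p, ENNReal.le_rpow_inv_iff hp, ← ENNReal.rpow_mul, one_div_mul_eq_div] at hx
        simpa only [← ENNReal.rpow_mul, mul_div_cancel₀ _ hp.ne', one_div_div] using hx

end Minkowski

section FinCons

universe u

variable {n : ℕ} {X : Fin (n + 1) → Type u} [∀ i, MeasurableSpace (X i)]

theorem measurable_finCons :
    Measurable fun x : X 0 × (∀ i : Fin n, X i.succ) => (Fin.cons x.1 x.2 : ∀ i, X i) :=
  measurable_pi_iff.2 <| Fin.cases measurable_fst fun i =>
    (measurable_pi_apply i).comp measurable_snd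

theorem lintegral_pi_eq_lintegral_finCons (μ : ∀ i, Measure (X i)) [∀ i, SigmaFinite (μ i)]
    {g : (∀ i, X i) → ENNReal} (hg : Measurable g) :
    ∫⁻ z, g z ∂Measure.pi μ =
      ∫⁻ x, ∫⁻ y, g (Fin.cons x y) ∂(Measure.pi fun i : Fin n => μ i.succ) ∂μ 0 := by
  rw [← (measurePreserving_piFinSuccAbove μ 0).symm.lintegral_comp hg]
  refine (lintegral_prod _ (hg.comp (MeasurableEquiv.measurable _)).aemeasurable).trans ?_
  simp only [Function.comp_apply, MeasurableEquiv.piFinSuccAbove_symm_apply,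
    Fin.insertNthEquiv_zero]
  rfl

end FinCons

section Polydisc

/-- The unit polydisc `𝔻ⁿ`. -/
def unitPolydisc (n : ℕ) : Set (Fin n → ℂ) :=
  {z | ∀ i, z i ∈ ball 0 1}

variable {n : ℕ} {α β p q : ℝ}

theorem measurableSet_unitPolydisc : MeasurableSet (unitPolydisc n) := by
  rw [unitPolydisc, ofPred_forall]
  exact .iInter fun i => measurable_pi_apply i measurableSet_ball

theorem finCons_mem_unitPolydisc {x : ℂ} {y : Fin n → ℂ} (hx : x ∈ ball 0 1)
    (hy : y ∈ unitPolydisc n) : (Fin.cons x y : Fin (n + 1) → ℂ) ∈ unitPolydisc (n + 1) :=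
  Fin.cases hx hy

theorem differentiableOn_comp_finCons_left {f : (Fin (n + 1) → ℂ) → ℂ}
    (hf : DifferentiableOn ℂ f (unitPolydisc (n + 1))) {y : Fin n → ℂ} (hy : y ∈ unitPolydisc n) :
    DifferentiableOn ℂ (fun x => f (Fin.cons x y)) (ball 0 1) :=
  hf.comp (DifferentiableOn.finCons (F' := fun _ => ℂ) differentiableOn_id
    (differentiableOn_const y)) fun _ hx => finCons_mem_unitPolydisc hx hy

theorem differentiableOn_comp_finCons_right {f : (Fin (n + 1) → ℂ) → ℂ}
    (hf : DifferentiableOn ℂ f (unitPolydisc (n + 1))) {x : ℂ} (hx : x ∈ ball 0 1) :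
    DifferentiableOn ℂ (fun y => f (Fin.cons x y)) (unitPolydisc n) :=
  hf.comp (DifferentiableOn.finCons (F' := fun _ => ℂ) (differentiableOn_const x)
    differentiableOn_id) fun _ hy => finCons_mem_unitPolydisc hx hy

theorem ofReal_mul_mem_unitPolydisc {r : Fin n → ℝ} (hr₀ : ∀ i, 0 ≤ r i) (hr₁ : ∀ i, r i ≤ 1)
    {z : Fin n → ℂ} (hz : z ∈ unitPolydisc n) : (fun i => r i * z i) ∈ unitPolydisc n :=
  fun i => ofReal_mul_mem_ball (hr₀ i) (hr₁ i) (hz i)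

theorem ae_mem_unitPolydisc_bergmanMeasurePi (n : ℕ) (hα : 1 < α) :
    ∀ᵐ z ∂bergmanMeasurePi n α, z ∈ unitPolydisc n :=
  have := isFiniteMeasure_bergmanMeasure hα
  ae_all_iff.2 fun _ => Measure.tendsto_eval_ae_ae.eventually (ae_mem_ball_bergmanMeasure α)

theorem isFiniteMeasure_bergmanMeasurePi (n : ℕ) (hα : 1 < α) :
    IsFiniteMeasure (bergmanMeasurePi n α) :=
  have := isFiniteMeasure_bergmanMeasure hα
  inferInstanceAs (IsFiniteMeasure (Measure.pi fun _ => bergmanMeasure α))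

theorem bergmanMeasurePi_zero (α : ℝ) : bergmanMeasurePi 0 α = Measure.dirac 0 :=
  Measure.pi_of_empty _ 0

theorem lintegral_bergmanMeasurePi_succ (hα : 1 < α) {g : (Fin (n + 1) → ℂ) → ENNReal}
    (hg : Measurable g) :
    ∫⁻ z, g z ∂bergmanMeasurePi (n + 1) α =
      ∫⁻ x, ∫⁻ y, g (Fin.cons x y) ∂bergmanMeasurePi n α ∂bergmanMeasure α :=
  have := isFiniteMeasure_bergmanMeasure hα
  lintegral_pi_eq_lintegral_finCons _ hg

theorem rpow_lintegral_dirac_rpow {X : Type*} [MeasurableSpace X] [MeasurableSingletonClass X]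
    {f : X → ℂ} (x : X) (hp : 0 < p) :
    (∫⁻ z, ENNReal.ofReal (‖f z‖ ^ p) ∂Measure.dirac x) ^ (1 / p) = ENNReal.ofReal ‖f x‖ := by
  rw [lintegral_dirac, ENNReal.ofReal_rpow_of_nonneg (by positivity) (by positivity),
    one_div, Real.rpow_rpow_inv (norm_nonneg _) hp.ne']

theorem hypercontractive_polydisc (hα : 1 < α) (hβ : 1 < β) (hp : 0 < p) (hpq : p ≤ q)
    (hq : 2 ≤ q) {r : Fin n → ℝ} (hr₀ : ∀ i, 0 ≤ r i) (hr₁ : ∀ i, r i ≤ 1)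
    (hr : ∀ i, r i ^ 2 ≤ β * p / (α * q)) {f : (Fin n → ℂ) → ℂ} (hfm : Measurable f)
    (hf : DifferentiableOn ℂ f (unitPolydisc n)) :
    (∫⁻ z, ENNReal.ofReal (‖f fun i => r i * z i‖ ^ q) ∂bergmanMeasurePi n β) ^ (1 / q) ≤
      (∫⁻ z, ENNReal.ofReal (‖f z‖ ^ p) ∂bergmanMeasurePi n α) ^ (1 / p) := by
  have hq₀ : 0 < q := hp.trans_le hpq
  have := isFiniteMeasure_bergmanMeasure hα
  have := isFiniteMeasure_bergmanMeasure hβ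
  induction n with
  | zero =>
    rw [bergmanMeasurePi_zero, bergmanMeasurePi_zero, rpow_lintegral_dirac_rpow 0 hp,
      rpow_lintegral_dirac_rpow (f := fun z : Fin 0 → ℂ => f fun i => r i * z i) 0 hq₀]
    exact (congrArg (fun z => ENNReal.ofReal ‖f z‖) (Subsingleton.elim _ _)).le
  | succ n ih =>
    have hcons : ∀ (x : ℂ) (y : Fin n → ℂ),
        (fun i => (r i : ℂ) * (Fin.cons x y : Fin (n + 1) → ℂ) i) =
          Fin.cons (r 0 * x) fun i => (r i.succ : ℂ) * y i :=
      fun x y => funext (Fin.cases rfl fun _ => rfl)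
    have hfc : Measurable fun x : ℂ × (Fin n → ℂ) => f (Fin.cons x.1 x.2) :=
      hfm.comp measurable_finCons
    have := isFiniteMeasure_bergmanMeasurePi n hα
    rw [lintegral_bergmanMeasurePi_succ hα (by fun_prop), lintegral_lintegral_swap (by fun_prop),
      lintegral_bergmanMeasurePi_succ hβ (by fun_prop)]
    simp only [hcons]
    refine rpow_lintegral_le_of_slices_le
      (F := fun y x => ENNReal.ofReal ‖f (Fin.cons (r 0 * x) y)‖) ?_ hp hpq ?_ ?_
    · exact (hfc.comp ((measurable_snd.const_mul _).prodMk measurable_fst)).norm.ennreal_ofReal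
    · filter_upwards [ae_mem_ball_bergmanMeasure β] with x hx
      have := ih (fun i => hr₀ i.succ) (fun i => hr₁ i.succ) (fun i => hr i.succ)
        (f := fun y => f (Fin.cons (r 0 * x) y)) (hfc.comp measurable_prodMk_left)
        (differentiableOn_comp_finCons_right hf (ofReal_mul_mem_ball (hr₀ 0) (hr₁ 0) hx))
      simpa only [ENNReal.ofReal_rpow_of_nonneg (norm_nonneg _) hp.le] using this
    · filter_upwards [ae_mem_unitPolydisc_bergmanMeasurePi n hα] with y hy
      have := hypercontractive_disk (f := fun x => f (Fin.cons x y))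
        (hfc.comp measurable_prodMk_right) (differentiableOn_comp_finCons_left hf hy)
        hα hβ hp hpq hq (hr₀ 0) (hr₁ 0) (hr 0)
      simpa only [ENNReal.ofReal_rpow_of_nonneg (norm_nonneg _) hq₀.le] using this

theorem polydisc_hypercontractive_sufficiency_general (hα : 1 < α) (hβ : 1 < β) (hp : 0 < p)
    (hpq : p ≤ q) (hq : 2 ≤ q) {r : Fin n → ℝ} (hr₀ : ∀ i, 0 ≤ r i) (hr₁ : ∀ i, r i ≤ 1)
    (hr : ∀ i, r i ^ 2 ≤ β * p / (α * q)) {f : (Fin n → ℂ) → ℂ}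
    (hf : AnalyticOnNhd ℂ f (unitPolydisc n)) :
    (∫⁻ z, ENNReal.ofReal (‖f fun i => r i * z i‖ ^ q) ∂bergmanMeasurePi n β) ^ (1 / q) ≤
      (∫⁻ z, ENNReal.ofReal (‖f z‖ ^ p) ∂bergmanMeasurePi n α) ^ (1 / p) := by
  classical
  have hfm : Measurable ((unitPolydisc n).indicator f) := by
    rw [← piecewise_eq_indicator]
    exact hf.continuousOn.measurable_piecewise continuousOn_const measurableSet_unitPolydisc
  have hfd : DifferentiableOn ℂ ((unitPolydisc n).indicator f) (unitPolydisc n) :=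
    hf.differentiableOn.congr fun z hz => indicator_of_mem hz f
  convert hypercontractive_polydisc hα hβ hp hpq hq hr₀ hr₁ hr hfm hfd using 2
  · refine lintegral_congr_ae ((ae_mem_unitPolydisc_bergmanMeasurePi n hβ).mono fun z hz => ?_)
    simp only [indicator_of_mem (ofReal_mul_mem_unitPolydisc hr₀ hr₁ hz)]
  · refine lintegral_congr_ae ((ae_mem_unitPolydisc_bergmanMeasurePi n hα).mono fun z hz => ?_)
    simp only [indicator_of_mem hz]

end Polydisc

/-- Sufficiency in Lemma 3.1: hypercontractivity on the polydisc. If `1 < α, β < ∞`,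
`0 < p ≤ q < ∞`, `q ≥ 2`, `βp ≤ αq` and `0 ≤ rᵢ < 1` with `rᵢ² ≤ βp/(αq)` for all `i`,
then `‖T_𝐫 f‖_{A_β^q(𝔻ⁿ)} ≤ ‖f‖_{A_α^p(𝔻ⁿ)}` for every analytic `f` on the polydisc. -/
theorem polydisc_hypercontractive_sufficiency
    (n : ℕ) (hn : 0 < n)
    (α β p q : ℝ) (hα : 1 < α) (hβ : 1 < β) (hp : 0 < p) (hpq : p ≤ q)
    (hq2 : 2 ≤ q) (hβpαq : β * p ≤ α * q)
    (r : Fin n → ℝ) (hr0 : ∀ i, 0 ≤ r i) (hr1 : ∀ i, r i < 1)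
    (hr : ∀ i, (r i) ^ 2 ≤ β * p / (α * q))
    (f : (Fin n → ℂ) → ℂ)
    (hf : AnalyticOnNhd ℂ f {z : Fin n → ℂ | ∀ i, z i ∈ ball (0 : ℂ) 1}) :
    (∫⁻ z, ENNReal.ofReal (‖f (fun i => (r i : ℂ) * z i)‖ ^ q)
        ∂(bergmanMeasurePi n β)) ^ (1 / q) ≤
      (∫⁻ z, ENNReal.ofReal (‖f z‖ ^ p) ∂(bergmanMeasurePi n α)) ^ (1 / p) :=
  polydisc_hypercontractive_sufficiency_general hα hβ hp hpq hq2 hr0 (fun i => (hr1 i).le) hr hf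
end

section
/- Let $n$ be a positive integer, $1<\alpha,\beta<\infty$ and $0<p\leqslant q<\infty$, and let $\mathbf{r}=(r_1,\dots,r_n)$ with $0\leqslant r_i<1$. If for every function $f$ analytic on the polydisc $\mathbb{D}^n$ one has $\|\mathbf{T}_{\mathbf{r}}f\|_{A_\beta^q(\mathbb{D}^n)}\leqslant\|f\|_{A_\alpha^p(\mathbb{D}^n)}$, then $r_i^2\leqslant\beta p/(\alpha q)$ for every $i=1,\dots,n$. -/
open MeasureTheory Metric

/-!
Test the inequality on the exponentials `f(z) = exp (t * z i)`. The norm `‖f‖ ^ p` is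
`exp (p * t * Re (z i))`, so taking logarithms turns the inequality into a comparison, for every
real `t`, of the cumulant generating functions of `Re (r i * z i)` and `Re (z i)`. Both random
variables are centred, so both functions vanish at `0` together with their first derivatives, and
comparing their second-order terms compares variances:
`q * Var_β(Re (r i * z)) ≤ p * Var_α(Re z)`. By rotation invariance the variance of `Re (w * z)`
under `dA_α` is `‖w‖ ^ 2 / 2` times `∫ ‖z‖ ^ 2 dA_α = 1 / α`.
-/

open Set Filter Topology ProbabilityTheory

section SecondOrderComparison

theorem tendsto_div_sq_of_hasDerivAt_deriv {f : ℝ → ℝ} {c : ℝ}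
    (hf : ∀ᶠ x in 𝓝 0, DifferentiableAt ℝ f x) (hf0 : f 0 = 0) (hf'0 : deriv f 0 = 0)
    (hf' : HasDerivAt (deriv f) c 0) :
    Tendsto (fun x => f x / x ^ 2) (𝓝[≠] 0) (𝓝 (c / 2)) := by
  have hlim : Tendsto (fun x => deriv f x / (2 * x)) (𝓝[≠] 0) (𝓝 (c / 2)) := by
    refine (hf'.tendsto_slope.div_const 2).congr fun x => ?_
    rw [slope_def_field, hf'0, sub_zero, sub_zero, div_div, mul_comm]
  refine HasDerivAt.lhopital_zero_nhdsNE (f' := deriv f) (g' := fun x => 2 * x)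
    (hf.filter_mono nhdsWithin_le_nhds |>.mono fun _ => DifferentiableAt.hasDerivAt)
    (Eventually.of_forall fun x => by simpa using hasDerivAt_pow 2 x) ?_ ?_ ?_ hlim
  · filter_upwards [self_mem_nhdsWithin] with x hx using mul_ne_zero two_ne_zero hx
  · simpa only [hf0] using hf.self_of_nhds.continuousAt.tendsto.mono_left nhdsWithin_le_nhds
  · exact ((continuous_pow 2).tendsto' 0 0 (by simp)).mono_left nhdsWithin_le_nhds

variable {Ω Ω' : Type*} {mΩ : MeasurableSpace Ω} {mΩ' : MeasurableSpace Ω'}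
  {μ : Measure Ω} {ν : Measure Ω'} [IsProbabilityMeasure μ] [IsProbabilityMeasure ν]
  {X : Ω → ℝ} {Y : Ω' → ℝ} {p q : ℝ}

theorem tendsto_cgf_div_sq (hX : 0 ∈ interior (integrableExpSet X μ)) (hX0 : μ[X] = 0) :
    Tendsto (fun t => cgf X μ t / t ^ 2) (𝓝[≠] 0) (𝓝 (Var[X; μ] / 2)) := by
  have hcgf : AnalyticAt ℝ (cgf X μ) 0 := analyticAt_cgf hX
  have hd0 : deriv (cgf X μ) 0 = 0 := by simp [deriv_cgf_zero hX, hX0]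
  have hd2 : deriv (deriv (cgf X μ)) 0 = Var[X; μ] := by
    rw [← iteratedDeriv_one (f := cgf X μ), ← iteratedDeriv_succ,
      iteratedDeriv_two_cgf_eq_integral hX, hd0,
      variance_of_integral_eq_zero (aemeasurable_of_mem_interior_integrableExpSet hX) hX0]
    simp
  exact tendsto_div_sq_of_hasDerivAt_deriv
    (hcgf.eventually_analyticAt.mono fun _ => AnalyticAt.differentiableAt) cgf_zero hd0
    (hd2 ▸ hcgf.deriv.differentiableAt.hasDerivAt)

theorem tendsto_cgf_mul_div_div_sq (hX : 0 ∈ interior (integrableExpSet X μ)) (hX0 : μ[X] = 0)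
    (hp : p ≠ 0) :
    Tendsto (fun t => cgf X μ (p * t) / p / t ^ 2) (𝓝[≠] 0) (𝓝 (p * (Var[X; μ] / 2))) := by
  have hscale : Tendsto (fun t => p * t) (𝓝[≠] 0) (𝓝[≠] 0) :=
    tendsto_nhdsWithin_iff.2 ⟨((continuous_const_mul p).tendsto' 0 0 (by simp)).mono_left
      nhdsWithin_le_nhds, eventually_mem_nhdsWithin.mono fun _ => mul_ne_zero hp⟩
  refine (((tendsto_cgf_div_sq hX hX0).comp hscale).const_mul p).congr fun t => ?_
  simp only [Function.comp_apply]
  field_simp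

theorem mul_variance_le_of_cgf_div_le (hX : 0 ∈ interior (integrableExpSet X μ))
    (hX0 : μ[X] = 0) (hY : 0 ∈ interior (integrableExpSet Y ν)) (hY0 : ν[Y] = 0)
    (hp : p ≠ 0) (hq : q ≠ 0)
    (h : ∀ᶠ t in 𝓝[≠] 0, cgf Y ν (q * t) / q ≤ cgf X μ (p * t) / p) :
    q * Var[Y; ν] ≤ p * Var[X; μ] := by
  have hlim := le_of_tendsto_of_tendsto (tendsto_cgf_mul_div_div_sq hY hY0 hq)
    (tendsto_cgf_mul_div_div_sq hX hX0 hp)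
    (h.mono fun t ht => div_le_div_of_nonneg_right ht (sq_nonneg t))
  linarith

end SecondOrderComparison

theorem lintegral_norm_exp_rpow_rpow_one_div {Ω : Type*} {mΩ : MeasurableSpace Ω} {μ : Measure Ω}
    [NeZero μ] {f : Ω → ℂ} {p t : ℝ}
    (hf : Integrable (fun x => Real.exp (p * t * (f x).re)) μ) :
    (∫⁻ x, ENNReal.ofReal (‖Complex.exp (t * f x)‖ ^ p) ∂μ) ^ (1 / p) =
      ENNReal.ofReal (Real.exp (cgf (fun x => (f x).re) μ (p * t) / p)) := by
  have hnorm (x : Ω) : ‖Complex.exp (t * f x)‖ ^ p = Real.exp (p * t * (f x).re) := by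
    rw [Complex.norm_exp, ← Real.exp_mul, Complex.re_ofReal_mul]
    ring_nf
  simp_rw [hnorm]
  rw [← ofReal_integral_eq_lintegral_ofReal hf (ae_of_all _ fun _ => (Real.exp_pos _).le)]
  change ENNReal.ofReal (mgf _ μ (p * t)) ^ (1 / p) = _
  rw [← exp_cgf hf, ENNReal.ofReal_rpow_of_pos (Real.exp_pos _), ← Real.exp_mul, mul_one_div]

theorem integral_comp_norm_sq {E : Type*} [NormedAddCommGroup E] [NormedSpace ℝ E] (g : ℝ → E) :
    ∫ z : ℂ, g (‖z‖ ^ 2) = Real.pi • ∫ s in Ioi 0, g s := by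
  have hball : (volume : Measure ℂ).real (ball 0 1) = Real.pi := by
    simp [Measure.real, Complex.volume_ball]
  have hsubst : ∫ s in Ioi 0, g s = (2 : ℝ) • ∫ y in Ioi 0, y • g (y ^ 2) := by
    rw [← integral_comp_rpow_Ioi_of_pos two_pos, ← integral_smul]
    norm_num [mul_smul]
  rw [integral_fun_norm_addHaar volume fun y => g (y ^ 2), hball, hsubst,
    Complex.finrank_real_complex, smul_comm, ← Nat.cast_smul_eq_nsmul ℝ]
  simp only [Nat.add_one_sub_one, pow_one, Nat.cast_ofNat]

theorem setIntegral_ball_one_sub_norm_sq_rpow {s : ℝ} (hs : -1 < s) :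
    ∫ z in ball (0 : ℂ) 1, (1 - ‖z‖ ^ 2) ^ s = Real.pi / (s + 1) := by
  have hind : (ball (0 : ℂ) 1).indicator (fun z => (1 - ‖z‖ ^ 2) ^ s) =
      fun z => (Iio 1).indicator (fun u : ℝ => (1 - u) ^ s) (‖z‖ ^ 2) := by
    ext z
    simp [indicator]
  rw [← integral_indicator measurableSet_ball, hind,
    integral_comp_norm_sq ((Iio 1).indicator fun u : ℝ => (1 - u) ^ s),
    setIntegral_indicator measurableSet_Iio, Ioi_inter_Iio, ← integral_Ioc_eq_integral_Ioo,
    ← intervalIntegral.integral_of_le zero_le_one,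
    intervalIntegral.integral_comp_sub_left (fun u => u ^ s), integral_rpow (.inl hs)]
  simp [Real.zero_rpow (by linarith : s + 1 ≠ 0), div_eq_mul_inv]

theorem measurePreserving_withDensity_comp {X Y : Type*} [MeasurableSpace X] [MeasurableSpace Y]
    {μ : Measure X} {ν : Measure Y} {f : X → Y} (hf : MeasurePreserving f μ ν)
    {ρ : Y → ENNReal} (hρ : Measurable ρ) :
    MeasurePreserving f (μ.withDensity (ρ ∘ f)) (ν.withDensity ρ) := by
  refine ⟨hf.measurable, Measure.ext fun s hs => ?_⟩
  rw [Measure.map_apply hf.measurable hs, withDensity_apply _ (hf.measurable hs),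
    withDensity_apply _ hs]
  exact hf.setLIntegral_comp_preimage hs hρ

section BergmanMeasure

variable {α : ℝ}

theorem ae_norm_lt_one_bergmanMeasure (α : ℝ) : ∀ᵐ z ∂bergmanMeasure α, ‖z‖ < 1 :=
  (withDensity_absolutelyContinuous _ _).ae_le <|
    (ae_restrict_mem measurableSet_ball).mono fun _ => mem_ball_zero_iff.1

theorem measurePreserving_bergmanMeasure (α : ℝ) (L : ℂ ≃ₗᵢ[ℝ] ℂ) :
    MeasurePreserving L (bergmanMeasure α) (bergmanMeasure α) := by
  have h := L.measurePreserving.restrict_preimage (measurableSet_ball (x := (0 : ℂ)) (ε := 1))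
  rw [L.preimage_ball, map_zero] at h
  have h := measurePreserving_withDensity_comp h
    (ρ := fun z => ENNReal.ofReal ((α - 1) * (1 - ‖z‖ ^ 2) ^ (α - 2) / Real.pi)) (by fun_prop)
  simpa only [bergmanMeasure, Function.comp_def, L.norm_map] using h

theorem integral_comp_bergmanMeasure {E : Type*} [NormedAddCommGroup E] [NormedSpace ℝ E]
    (α : ℝ) (L : ℂ ≃ₗᵢ[ℝ] ℂ) (g : ℂ → E) :
    ∫ z, g (L z) ∂bergmanMeasure α = ∫ z, g z ∂bergmanMeasure α :=
  (measurePreserving_bergmanMeasure α L).integral_comp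
    L.toHomeomorph.measurableEmbedding g

theorem integral_one_sub_norm_sq_rpow_bergmanMeasure (hα : 1 ≤ α) {s : ℝ} (hs : 1 < α + s) :
    ∫ z, (1 - ‖z‖ ^ 2) ^ s ∂bergmanMeasure α = (α - 1) / (α - 1 + s) := by
  have hweight : EqOn (fun z : ℂ =>
        (ENNReal.ofReal ((α - 1) * (1 - ‖z‖ ^ 2) ^ (α - 2) / Real.pi)).toReal •
          (1 - ‖z‖ ^ 2) ^ s)
      (fun z => (α - 1) / Real.pi * (1 - ‖z‖ ^ 2) ^ (α - 2 + s)) (ball 0 1) := by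
    intro z hz
    have hz1 : ‖z‖ < 1 := mem_ball_zero_iff.1 hz
    have hpos : 0 < 1 - ‖z‖ ^ 2 := by nlinarith [norm_nonneg z]
    have : 0 ≤ α - 1 := sub_nonneg.2 hα
    simp only [smul_eq_mul]
    rw [ENNReal.toReal_ofReal (by positivity), Real.rpow_add hpos]
    ring
  rw [bergmanMeasure, integral_withDensity_eq_integral_toReal_smul (by fun_prop) (by simp),
    setIntegral_congr_fun measurableSet_ball hweight, integral_const_mul,
    setIntegral_ball_one_sub_norm_sq_rpow (by linarith)]
  field_simp
  ring

theorem isProbabilityMeasure_bergmanMeasure (hα : 1 < α) :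
    IsProbabilityMeasure (bergmanMeasure α) := by
  have h := integral_one_sub_norm_sq_rpow_bergmanMeasure hα.le (s := 0) (by simpa)
  simp only [Real.rpow_zero, add_zero, div_self (sub_pos.2 hα).ne', integral_const,
    smul_eq_mul, mul_one] at h
  exact ⟨(ENNReal.toReal_eq_one_iff _).1 h⟩

theorem integrable_bergmanMeasure_of_continuous {E : Type*} [NormedAddCommGroup E]
    (hα : 1 < α) {g : ℂ → E} (hg : Continuous g) :
    Integrable g (bergmanMeasure α) := by
  have := isProbabilityMeasure_bergmanMeasure hα
  obtain ⟨C, hC⟩ := (isCompact_closedBall (0 : ℂ) 1).exists_bound_of_continuousOn hg.continuousOn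
  exact Integrable.of_bound hg.aestronglyMeasurable C <|
    (ae_norm_lt_one_bergmanMeasure α).mono fun z hz => hC z (mem_closedBall_zero_iff.2 hz.le)

theorem integral_norm_sq_bergmanMeasure (hα : 1 < α) :
    ∫ z, ‖z‖ ^ 2 ∂bergmanMeasure α = 1 / α := by
  have := isProbabilityMeasure_bergmanMeasure hα
  have h := integral_one_sub_norm_sq_rpow_bergmanMeasure hα.le (s := 1) (by linarith)
  simp only [Real.rpow_one, sub_add_cancel] at h
  rw [integral_sub (integrable_const 1)
    (integrable_bergmanMeasure_of_continuous hα (by fun_prop)), integral_const, probReal_univ,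
    one_smul] at h
  have hα0 : α ≠ 0 := by linarith
  rw [sub_div, div_self hα0] at h
  linarith

theorem integral_re_mul_bergmanMeasure (α : ℝ) (w : ℂ) :
    ∫ z, (w * z).re ∂bergmanMeasure α = 0 := by
  have h := integral_comp_bergmanMeasure α (.neg ℝ) fun z => (w * z).re
  simp only [LinearIsometryEquiv.coe_neg, mul_neg, Complex.neg_re, integral_neg] at h
  linarith

theorem variance_re_mul_bergmanMeasure (hα : 1 < α) (w : ℂ) :
    Var[fun z => (w * z).re; bergmanMeasure α] = ‖w‖ ^ 2 / (2 * α) := by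
  have hrot : ∫ z, (w * z).im ^ 2 ∂bergmanMeasure α = ∫ z, (w * z).re ^ 2 ∂bergmanMeasure α := by
    let i : Circle := ⟨Complex.I, by simp [Submonoid.unitSphere]⟩
    have hi : (i : ℂ) = Complex.I := rfl
    have h := integral_comp_bergmanMeasure α (rotation i) fun z => (w * z).re ^ 2
    simpa only [rotation_apply, hi, mul_left_comm w Complex.I, Complex.I_mul_re, neg_sq] using h
  have hsum : ∫ z, (w * z).re ^ 2 ∂bergmanMeasure α + ∫ z, (w * z).im ^ 2 ∂bergmanMeasure α =
      ‖w‖ ^ 2 / α := by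
    rw [← integral_add (integrable_bergmanMeasure_of_continuous hα (by fun_prop))
        (integrable_bergmanMeasure_of_continuous hα (by fun_prop)),
      div_eq_mul_one_div, ← integral_norm_sq_bergmanMeasure hα, ← integral_const_mul]
    congr with z
    rw [← mul_pow, ← norm_mul, Complex.sq_norm, Complex.normSq_apply, sq, sq]
  rw [variance_of_integral_eq_zero (by fun_prop) (integral_re_mul_bergmanMeasure α w)]
  rw [hrot] at hsum
  rw [mul_comm, ← div_div]
  linarith

theorem integrable_exp_mul_re_bergmanMeasure (hα : 1 < α) (w : ℂ) (t : ℝ) :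
    Integrable (fun z => Real.exp (t * (w * z).re)) (bergmanMeasure α) :=
  integrable_bergmanMeasure_of_continuous hα (by fun_prop)

theorem zero_mem_interior_integrableExpSet_bergmanMeasure (hα : 1 < α) (w : ℂ) :
    0 ∈ interior (integrableExpSet (fun z => (w * z).re) (bergmanMeasure α)) := by
  simp only [integrableExpSet, integrable_exp_mul_re_bergmanMeasure hα w, ofPred_true,
    interior_univ, mem_univ]

theorem lintegral_norm_exp_rpow_rpow_one_div_bergmanMeasurePi (hα : 1 < α) {n : ℕ} (i : Fin n)
    (w : ℂ) (p t : ℝ) :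
    (∫⁻ z, ENNReal.ofReal (‖Complex.exp (t * (w * z i))‖ ^ p) ∂bergmanMeasurePi n α) ^ (1 / p) =
      ENNReal.ofReal (Real.exp (cgf (fun z => (w * z).re) (bergmanMeasure α) (p * t) / p)) := by
  have := isProbabilityMeasure_bergmanMeasure hα
  rw [← lintegral_norm_exp_rpow_rpow_one_div (integrable_exp_mul_re_bergmanMeasure hα w (p * t)),
    bergmanMeasurePi, (measurePreserving_eval (fun _ => bergmanMeasure α) i).lintegral_comp
      (f := fun z => ENNReal.ofReal (‖Complex.exp (t * (w * z))‖ ^ p)) (by fun_prop)]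

end BergmanMeasure

theorem polydisc_hypercontractive_necessity_general {n : ℕ} {α β p q : ℝ} (hα : 1 < α)
    (hβ : 1 < β) (hp : 0 < p) (hq : 0 < q) (r : Fin n → ℂ)
    (H : ∀ f : (Fin n → ℂ) → ℂ, AnalyticOnNhd ℂ f univ →
      (∫⁻ z, ENNReal.ofReal (‖f (fun i => r i * z i)‖ ^ q) ∂bergmanMeasurePi n β) ^ (1 / q) ≤
        (∫⁻ z, ENNReal.ofReal (‖f z‖ ^ p) ∂bergmanMeasurePi n α) ^ (1 / p))
    (i : Fin n) : ‖r i‖ ^ 2 ≤ β * p / (α * q) := by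
  have := isProbabilityMeasure_bergmanMeasure hα
  have := isProbabilityMeasure_bergmanMeasure hβ
  have hcgf (t : ℝ) : cgf (fun z => (r i * z).re) (bergmanMeasure β) (q * t) / q ≤
      cgf (fun z => (1 * z).re) (bergmanMeasure α) (p * t) / p := by
    -- The factor `1` makes both sides instances of the formula for `exp (t * (w * z i))`.
    have hf : AnalyticOnNhd ℂ (fun z : Fin n → ℂ => Complex.exp (t * (1 * z i))) univ :=
      fun z _ => (analyticAt_const.mul (analyticAt_const.mul
        ((ContinuousLinearMap.proj (R := ℂ) (φ := fun _ => ℂ) i).analyticAt z))).cexp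
    have h := H _ hf
    simp only [one_mul (r i * _)] at h
    rwa [lintegral_norm_exp_rpow_rpow_one_div_bergmanMeasurePi hβ,
      lintegral_norm_exp_rpow_rpow_one_div_bergmanMeasurePi hα,
      ENNReal.ofReal_le_ofReal_iff (Real.exp_pos _).le, Real.exp_le_exp] at h
  have hvar := mul_variance_le_of_cgf_div_le
    (zero_mem_interior_integrableExpSet_bergmanMeasure hα 1) (integral_re_mul_bergmanMeasure α 1)
    (zero_mem_interior_integrableExpSet_bergmanMeasure hβ (r i))
    (integral_re_mul_bergmanMeasure β (r i)) hp.ne' hq.ne' (Eventually.of_forall hcgf)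
  rw [variance_re_mul_bergmanMeasure hα, variance_re_mul_bergmanMeasure hβ, norm_one, one_pow,
    mul_div_assoc', mul_div_assoc', div_le_div_iff₀ (by linarith) (by linarith)] at hvar
  rw [le_div_iff₀ (mul_pos (by linarith) hq)]
  linarith

/-- Necessity in Lemma 3.1: if `‖T_𝐫 f‖_{A_β^q(𝔻ⁿ)} ≤ ‖f‖_{A_α^p(𝔻ⁿ)}` holds for
every analytic `f` on the polydisc, then `rᵢ² ≤ βp/(αq)` for every `i`. -/
theorem polydisc_hypercontractive_necessity
    (n : ℕ) (hn : 0 < n)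
    (α β p q : ℝ) (hα : 1 < α) (hβ : 1 < β) (hp : 0 < p) (hpq : p ≤ q)
    (r : Fin n → ℝ) (hr0 : ∀ i, 0 ≤ r i) (hr1 : ∀ i, r i < 1)
    (H : ∀ f : (Fin n → ℂ) → ℂ,
      AnalyticOnNhd ℂ f {z : Fin n → ℂ | ∀ i, z i ∈ ball (0 : ℂ) 1} →
      (∫⁻ z, ENNReal.ofReal (‖f (fun i => (r i : ℂ) * z i)‖ ^ q)
          ∂(bergmanMeasurePi n β)) ^ (1 / q) ≤
        (∫⁻ z, ENNReal.ofReal (‖f z‖ ^ p) ∂(bergmanMeasurePi n α)) ^ (1 / p)) :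
    ∀ i, (r i) ^ 2 ≤ β * p / (α * q) := by
  have hq : 0 < q := hp.trans_le hpq
  simpa using polydisc_hypercontractive_necessity_general hα hβ hp hq (fun i => (r i : ℂ))
    fun f hf => H f (hf.mono (subset_univ _))
end
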